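/- Let Ω be a bounded open convex set in ℝ² containing the origin in its interior, and suppose r₁ < 1 < r₂ where r₁, r₂ are the radii of inscribed and circumscribed circles centered at the origin. Fix an integer N ≥ 2 and set ω_R(ξ) = (1+|ξ|/R)^{−N}. For integers n ≥ 0 define Γ_n^±(R,h) = R · Σ_{k∈ℤ², |k| > 2ⁿ/R} ω_R(k) |k|^{−1} μ(k/|k|, 2ⁿ/(|k|R)); 𝔅_n^±(R,h) = 2^{−n} R · ( Σ Σ_{k,ℓ∈ℤ², 2ⁿ/R < |k| ≤ R², 2ⁿ/R < |ℓ| ≤ R²} (ω_R(k)ω_R(ℓ)/(|k||ℓ|)) · μ(k/|k|, 2ⁿ/(|k|R)) μ(ℓ/|ℓ|, 2ⁿ/(|ℓ|R)) · (1 + h|ρ*(±k) − ρ*(±ℓ)|)^{−N} )^{1/2}; and 𝔅̃_n^±(R,h) defined in the same way except with the factor (1 + R2^{−n}|ρ*(±k) − ρ*(±ℓ)|)^{−N} in place of (1 + h|ρ*(±k) − ρ*(±ℓ)|)^{−N}. Then there exists a constant C depending only on r₁, r₂ and N such that for all R ≥ 2 and 1 ≤ h ≤ R: 𝒢_Ω(R,h)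 ≤ C Σ_± [ Σ_{n≥0: 2ⁿ ≤ R/h} 𝔅_n^±(R,h) + Σ_{n: R/h < 2ⁿ ≤ R} 𝔅̃_n^±(R,h) + Σ_{n: 2ⁿ > R} Γ_n^±(R,h) ] + C[log R + (R/h)^{1/2}]. -/

import Mathlib

/-!
Since `Ω` contains the disc of radius `r₁`, convexity gives `sΩ + B(0, r₁δ) ⊆ (s + δ)Ω`. Hence the
number of lattice points in `tΩ` lies between the counts of `(t ± 1/(4R))Ω` smoothed by a mollifier
at scale `r₁/(4R)` (`moll_two`, `count_sandwich`). Replacing the area of `(t ± 1/(4R))Ω` by that of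
`tΩ` costs `O(1)`, so it suffices to bound the smoothed rest, which has the absolutely convergent
Fourier series `s² ∑ c(m) χ̂(sm)` over `m ≠ 0`, with `χ` the indicator function of `Ω` and
`|c(m)| ≤ C (1 + |m|/R)^(-N-8)` (`smooth_count_hasSum`). The frequencies `|m| > R²` contribute
`O(1)` (`tail_bound`).

In the direction of `m`, the transform of `χ` is a one-dimensional oscillatory integral of the
lengths `A` of the slices of `Ω` orthogonal to `m` (`Xf_eq`). Instead of differentiating, one takes
the second difference of `A` with a step `r₁/(8|m|R)`: it multiplies the integral by `2 cos x - 2`,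
where `x = π r₁ s/(4R)` does not depend on `m` and lies in `(0, π]`, and dividing by this multiplier
absorbs the factor `s²` at the cost of `R²` (`osc_d2`, `main_part`). The function `A` is concave
(one-dimensional Brunn–Minkowski) and at depth `u` below the support line it is at most the cap
diameter `μ(m/|m|, u)` (`sliceLen_concave`, `sliceLen_le_capDiam`). By concavity the second
difference has one sign in the interior, so its `L¹` norm on an interval telescopes; on the zone of
depth about `2ⁿ/(|m|R)` it is at most a constant times `2⁻ⁿ (|m|R)⁻¹ μ(m/|m|, 2ⁿ/(|m|R))`
(`Profile.zone_bound`, `gz_bound`), and away from both support lines it is `O((|m|R)⁻²)`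
(`gmid_bound`). The latter part contributes `O(log R)` after summation over `m` (`log_sum`).

There remain the zones near the two support lines. Those at the lower support line of `m` are the
complex conjugates of those at the upper one of `-m` (`osc_split`), so the sign `+` alone suffices.
On the `n`-th zone the phases stay within `O(2ⁿ/R)` of `ρ*(m)`. For `2ⁿ ≤ R` a smooth cutoff in
time of length `h` and the expansion of the square bound the quadratic mean by a double sum with
decay in `B |ρ*(k) - ρ*(l)|`, for any `B ≤ h` with `2ⁿB ≤ R` (`l2_bound`, `zone_mean`). The choice
`B = h` gives `𝔅_n` and `B = R 2⁻ⁿ` gives `𝔅̃_n`. For `2ⁿ > R` the triangle inequality gives `Γ_n`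
(`zone_pointwise`). Minkowski's inequality collects the zones (`mean_le`, `main_bound`).
-/

open MeasureTheory Set
open scoped Pointwise RealInnerProductSpace NNReal ENNReal

noncomputable section

abbrev E2 := EuclideanSpace ℝ (Fin 2)

/-- The embedding of an integer vector into the Euclidean plane. -/
def ek (k : Fin 2 → ℤ) : E2 := (WithLp.equiv 2 (Fin 2 → ℝ)).symm fun i => (k i : ℝ)

/-- Number of lattice points in a set. -/
def latticeCount (S : Set E2) : ℕ := Nat.card {k : Fin 2 → ℤ | ek k ∈ S}

/-- The lattice rest `E_Ω(t) = card(tΩ ∩ ℤ²) − t²·area(Ω)`. -/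
def latticeRest (Ω : Set E2) (t : ℝ) : ℝ :=
  (latticeCount (t • Ω) : ℝ) - t ^ 2 * (volume Ω).toReal

/-- The mean square discrepancy `𝒢_Ω(R,h) = ((1/h)∫_R^{R+h} |E_Ω(t)|² dt)^{1/2}`. -/
def meanSquare (Ω : Set E2) (R h : ℝ) : ℝ :=
  Real.sqrt ((1 / h) * ∫ t in R..(R + h), (latticeRest Ω t) ^ 2)

/-- The support function `ρ*(ξ) = sup {⟨x,ξ⟩ : x ∈ Ω}`. -/
def suppFn (Ω : Set E2) (ξ : E2) : ℝ := sSup ((fun x => ⟪x, ξ⟫) '' Ω)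

/-- `μ(θ,δ)`, the diameter of the cap `𝒞(θ,δ) = {x ∈ ∂Ω : ⟨x,θ⟩ ≥ ρ*(θ) − δ}`. -/
def capDiam (Ω : Set E2) (θ : E2) (δ : ℝ) : ℝ :=
  Metric.diam {x ∈ frontier Ω | suppFn Ω θ - δ ≤ ⟪x, θ⟫}

/-- Curvature bounded below in the generalized sense:
`sup_{θ∈S¹} sup_{δ>0} δ^{-1/2} μ(θ,δ) < ∞`. -/
def CurvBddBelow (Ω : Set E2) : Prop :=
  ∃ K : ℝ, ∀ θ : E2, ‖θ‖ = 1 → ∀ δ : ℝ, 0 < δ → capDiam Ω θ δ ≤ K * Real.sqrt δ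

/-- The weight `ω_R(ξ) = (1 + |ξ|/R)^{−N}`. -/
def omegaR (N : ℕ) (R : ℝ) (ξ : E2) : ℝ := (1 + ‖ξ‖ / R) ^ (-(N : ℝ))

/-- The quantity `𝔅_n^±(R,h)` of Proposition 2.4 (the sign `±` is encoded by `s = ±1`). -/
def Bn (Ω : Set E2) (N : ℕ) (s R h : ℝ) (n : ℕ) : ℝ :=
  2 ^ (-(n : ℝ)) * R * Real.sqrt (∑' p : (Fin 2 → ℤ) × (Fin 2 → ℤ),
    if (2 : ℝ) ^ n / R < ‖ek p.1‖ ∧ ‖ek p.1‖ ≤ R ^ 2 ∧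
        (2 : ℝ) ^ n / R < ‖ek p.2‖ ∧ ‖ek p.2‖ ≤ R ^ 2 then
      omegaR N R (ek p.1) * omegaR N R (ek p.2) / (‖ek p.1‖ * ‖ek p.2‖) *
        capDiam Ω ((‖ek p.1‖)⁻¹ • ek p.1) ((2 : ℝ) ^ n / (‖ek p.1‖ * R)) *
        capDiam Ω ((‖ek p.2‖)⁻¹ • ek p.2) ((2 : ℝ) ^ n / (‖ek p.2‖ * R)) *
        (1 + h * |suppFn Ω (s • ek p.1) - suppFn Ω (s • ek p.2)|) ^ (-(N : ℝ))
    else 0)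

/-- The quantity `𝔅̃_n^±(R,h)` of Proposition 2.4, with the factor
`(1 + R 2^{−n}|ρ*(±k) − ρ*(±ℓ)|)^{−N}` instead. -/
def Bnt (Ω : Set E2) (N : ℕ) (s R h : ℝ) (n : ℕ) : ℝ :=
  2 ^ (-(n : ℝ)) * R * Real.sqrt (∑' p : (Fin 2 → ℤ) × (Fin 2 → ℤ),
    if (2 : ℝ) ^ n / R < ‖ek p.1‖ ∧ ‖ek p.1‖ ≤ R ^ 2 ∧
        (2 : ℝ) ^ n / R < ‖ek p.2‖ ∧ ‖ek p.2‖ ≤ R ^ 2 then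
      omegaR N R (ek p.1) * omegaR N R (ek p.2) / (‖ek p.1‖ * ‖ek p.2‖) *
        capDiam Ω ((‖ek p.1‖)⁻¹ • ek p.1) ((2 : ℝ) ^ n / (‖ek p.1‖ * R)) *
        capDiam Ω ((‖ek p.2‖)⁻¹ • ek p.2) ((2 : ℝ) ^ n / (‖ek p.2‖ * R)) *
        (1 + R * 2 ^ (-(n : ℝ)) * |suppFn Ω (s • ek p.1) - suppFn Ω (s • ek p.2)|) ^ (-(N : ℝ))
    else 0)

/-- The quantity `Γ_n^±(R,h)` of Proposition 2.4. -/
def Gam (Ω : Set E2) (N : ℕ) (R : ℝ) (n : ℕ) : ℝ :=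
  R * ∑' k : Fin 2 → ℤ, if (2 : ℝ) ^ n / R < ‖ek k‖ then
    omegaR N R (ek k) * ‖ek k‖⁻¹ *
      capDiam Ω ((‖ek k‖)⁻¹ • ek k) ((2 : ℝ) ^ n / (‖ek k‖ * R))
    else 0


/-! ### Slices, support function and caps -/

section

/-- The rotation of the plane by a right angle. -/
def Jv (θ : E2) : E2 := !₂[-θ 1, θ 0]

/-- The slice of `Ω` by the line `⟨x, θ⟩ = s`, parametrized by the coordinate along `Jv θ`. -/
def slice (Ω : Set E2) (θ : E2) (s : ℝ) : Set ℝ := {r | s • θ + r • Jv θ ∈ Ω}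

/-- The length `A_θ(s)` of the slice of `Ω` by the line `⟨x, θ⟩ = s`. -/
def sliceLen (Ω : Set E2) (θ : E2) (s : ℝ) : ℝ := (volume (slice Ω θ s)).toReal

/-- The standing hypotheses on the domain. -/
structure Dom (r₁ r₂ : ℝ) (Ω : Set E2) : Prop where
  pos : 0 < r₁
  lt : r₁ < 1
  one_lt : 1 < r₂
  conv : Convex ℝ Ω
  opn : IsOpen Ω
  inner : Metric.ball 0 r₁ ⊆ Ω
  outer : Ω ⊆ Metric.closedBall 0 r₂

lemma inner_E2 (x y : E2) : ⟪x, y⟫ = x 0 * y 0 + x 1 * y 1 := by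
  simp [PiLp.inner_apply, Fin.sum_univ_two]; ring

lemma norm_sq_E2 (x : E2) : ‖x‖ ^ 2 = x 0 ^ 2 + x 1 ^ 2 := by
  rw [← real_inner_self_eq_norm_sq, inner_E2]; ring

lemma unit_sq {θ : E2} (hθ : ‖θ‖ = 1) : θ 0 ^ 2 + θ 1 ^ 2 = 1 := by
  rw [← norm_sq_E2, hθ]; norm_num

lemma coord_inner {θ : E2} (hθ : ‖θ‖ = 1) (s r : ℝ) : ⟪s • θ + r • Jv θ, θ⟫ = s := by
  have := unit_sq hθ
  simp [inner_E2, Jv]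
  linear_combination s * this

lemma coord_norm {θ : E2} (hθ : ‖θ‖ = 1) (s r : ℝ) : ‖s • θ + r • Jv θ‖ ^ 2 = s ^ 2 + r ^ 2 := by
  have := unit_sq hθ
  simp [norm_sq_E2, Jv]
  linear_combination (s ^ 2 + r ^ 2) * this

lemma coord_eq {θ : E2} (hθ : ‖θ‖ = 1) (x : E2) : ⟪x, θ⟫ • θ + ⟪x, Jv θ⟫ • Jv θ = x := by
  have := unit_sq hθ
  ext i
  fin_cases i
  · simp [inner_E2, Jv]; linear_combination x 0 * this
  · simp [inner_E2, Jv]; linear_combination x 1 * this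

lemma Jv_neg (θ : E2) : Jv (-θ) = -Jv θ := by
  ext i; fin_cases i <;> simp [Jv]

/-- Orthonormal coordinates adapted to the direction `θ`. -/
lemma measurePreserving_coord {θ : E2} (hθ : ‖θ‖ = 1) :
    MeasurePreserving (fun p : ℝ × ℝ => p.1 • θ + p.2 • Jv θ) volume volume := by
  have h0 := unit_sq hθ
  have hon : Orthonormal ℝ ![θ, Jv θ] := by
    rw [orthonormal_iff_ite]
    intro i j
    fin_cases i <;> fin_cases j <;>
      simp only [inner_E2, Jv, Fin.zero_eta, Fin.mk_one, Matrix.cons_val_zero, Matrix.cons_val_one] <;> simp <;> nlinarith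
  have hcard : Fintype.card (Fin 2) = Module.finrank ℝ E2 := by simp
  let b₀ := basisOfOrthonormalOfCardEqFinrank hon hcard
  have hb₀ : (b₀ : Fin 2 → E2) = ![θ, Jv θ] := coe_basisOfOrthonormalOfCardEqFinrank hon hcard
  let b := b₀.toOrthonormalBasis (by rw [hb₀]; exact hon)
  have hb : (b : Fin 2 → E2) = ![θ, Jv θ] := by simp [b, hb₀]
  have h := (b.measurePreserving_repr_symm.comp (PiLp.volume_preserving_toLp (Fin 2))).comp
    ((volume_preserving_finTwoArrow ℝ).symm)
  convert h using 1
  ext1 p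
  simp only [Function.comp]
  rw [← OrthonormalBasis.sum_repr_symm]
  simp [hb, Fin.sum_univ_two, MeasurableEquiv.finTwoArrow]

lemma measurable_coord (θ : E2) :
    Continuous (fun p : ℝ × ℝ => p.1 • θ + p.2 • Jv θ) := by fun_prop


variable {r₁ r₂ : ℝ} {Ω : Set E2} {θ : E2}

lemma slice_sub (hD : Dom r₁ r₂ Ω) (hθ : ‖θ‖ = 1) (s : ℝ) : slice Ω θ s ⊆ Icc (-r₂) r₂ := by
  intro r hr
  have h := hD.outer hr
  rw [mem_closedBall_zero_iff] at h
  have h2 := coord_norm hθ s r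
  have := hD.one_lt
  exact abs_le.1 (abs_le_of_sq_le_sq
    (by nlinarith [norm_nonneg (s • θ + r • Jv θ), sq_nonneg s]) (by linarith))

lemma slice_nonempty_abs (hD : Dom r₁ r₂ Ω) (hθ : ‖θ‖ = 1) {s : ℝ}
    (h : (slice Ω θ s).Nonempty) : |s| ≤ r₂ := by
  obtain ⟨r, hr⟩ := h
  have h := hD.outer hr
  rw [mem_closedBall_zero_iff] at h
  have h2 := coord_norm hθ s r
  have := hD.one_lt
  exact (abs_le_of_sq_le_sq
    (by nlinarith [norm_nonneg (s • θ + r • Jv θ), sq_nonneg r]) (by linarith))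

/-- Slices combine convexly. -/
lemma slice_comb (hD : Dom r₁ r₂ Ω) {s s' x y a b : ℝ} (hx : x ∈ slice Ω θ s)
    (hy : y ∈ slice Ω θ s') (ha : 0 ≤ a) (hb : 0 ≤ b) (hab : a + b = 1) :
    a * x + b * y ∈ slice Ω θ (a * s + b * s') := by
  have := hD.conv hx hy ha hb hab
  change _ ∈ Ω
  convert this using 1
  module

lemma slice_open (hD : Dom r₁ r₂ Ω) (s : ℝ) : IsOpen (slice Ω θ s) :=
  hD.opn.preimage (f := fun r : ℝ => s • θ + r • Jv θ) (by fun_prop)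

/-- A nonempty slice is a nondegenerate open interval whose end points lie on the boundary. -/
lemma slice_eq (hD : Dom r₁ r₂ Ω) (hθ : ‖θ‖ = 1) {s : ℝ} (h : (slice Ω θ s).Nonempty) :
    ∃ p q : ℝ, p < q ∧ slice Ω θ s = Ioo p q ∧
      s • θ + p • Jv θ ∈ frontier Ω ∧ s • θ + q • Jv θ ∈ frontier Ω := by
  have hb := slice_sub hD hθ s
  have hA : BddAbove (slice Ω θ s) := bddAbove_Icc.mono hb
  have hB : BddBelow (slice Ω θ s) := bddBelow_Icc.mono hb
  have hc : Convex ℝ (slice Ω θ s) := by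
    intro x hx y hy a b ha hb hab
    have := slice_comb hD hx hy ha hb hab
    rwa [← add_mul, hab, one_mul] at this
  have ho := slice_open hD (θ := θ) s
  have hpre : IsPreconnected (slice Ω θ s) := hc.isPreconnected
  set S := slice Ω θ s with hS
  have h1 : S ⊆ Ioo (sInf S) (sSup S) := by
    intro r hr
    obtain ⟨ε, hε, hball⟩ := Metric.isOpen_iff.1 ho r hr
    have e1 : r - ε / 2 ∈ S := hball (by rw [Metric.mem_ball, Real.dist_eq, abs_lt]; constructor <;> linarith)
    have e2 : r + ε / 2 ∈ S := hball (by rw [Metric.mem_ball, Real.dist_eq, abs_lt]; constructor <;> linarith)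
    exact ⟨by linarith [csInf_le hB e1], by linarith [le_csSup hA e2]⟩
  have h2 : Ioo (sInf S) (sSup S) ⊆ S := (show IsConnected S from ⟨h, hpre⟩).Ioo_csInf_csSup_subset hB hA
  have h3 : S = Ioo (sInf S) (sSup S) := subset_antisymm h1 h2
  have hcont : Continuous (fun r : ℝ => s • θ + r • Jv θ) := by fun_prop
  have hcl : ∀ z ∈ closure S, z ∉ S → s • θ + z • Jv θ ∈ frontier Ω := by
    intro z hz hzn
    rw [hD.opn.frontier_eq]
    exact ⟨map_mem_closure (f := fun r : ℝ => s • θ + r • Jv θ) hcont hz (fun r hr => hr), hzn⟩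
  obtain ⟨r, hr⟩ := h
  have hlt : sInf S < sSup S := (h1 hr).1.trans (h1 hr).2
  refine ⟨sInf S, sSup S, hlt, h3, hcl _ (csInf_mem_closure ⟨r, hr⟩ hB) (fun hh => ?_),
    hcl _ (csSup_mem_closure ⟨r, hr⟩ hA) (fun hh => ?_)⟩
  · exact lt_irrefl _ (h1 hh).1
  · exact lt_irrefl _ (h1 hh).2

lemma sliceLen_nonneg (s : ℝ) : 0 ≤ sliceLen Ω θ s := ENNReal.toReal_nonneg

lemma slice_vol_lt (hD : Dom r₁ r₂ Ω) (hθ : ‖θ‖ = 1) (s : ℝ) : volume (slice Ω θ s) < ⊤ :=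
  (measure_mono (slice_sub hD hθ s)).trans_lt (by simp)

lemma sliceLen_le (hD : Dom r₁ r₂ Ω) (hθ : ‖θ‖ = 1) (s : ℝ) : sliceLen Ω θ s ≤ 2 * r₂ := by
  have h := ENNReal.toReal_mono (by simp) (measure_mono (μ := volume) (slice_sub hD hθ s))
  rw [Real.volume_Icc, ENNReal.toReal_ofReal (by linarith [hD.one_lt])] at h
  unfold sliceLen; linarith

lemma sliceLen_measurable (hD : Dom r₁ r₂ Ω) : Measurable (sliceLen Ω θ) := by
  have : MeasurableSet {p : ℝ × ℝ | p.1 • θ + p.2 • Jv θ ∈ Ω} :=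
    (hD.opn.preimage (measurable_coord θ)).measurableSet
  exact (measurable_measure_prodMk_left this).ennreal_toReal

lemma sliceLen_eq_zero {s : ℝ} (h : ¬ (slice Ω θ s).Nonempty) : sliceLen Ω θ s = 0 := by
  rw [Set.not_nonempty_iff_eq_empty] at h
  simp [sliceLen, h]

lemma sliceLen_integrable (hD : Dom r₁ r₂ Ω) (hθ : ‖θ‖ = 1) : Integrable (sliceLen Ω θ) := by
  have h : IntegrableOn (sliceLen Ω θ) (Icc (-r₂) r₂) :=
    Measure.integrableOn_of_bounded (M := 2 * r₂) (by simp)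
      (sliceLen_measurable hD).aestronglyMeasurable
      (Filter.Eventually.of_forall fun s => by
        rw [Real.norm_of_nonneg (sliceLen_nonneg s)]; exact sliceLen_le hD hθ s)
  refine (integrableOn_iff_integrable_of_support_subset fun s hs => ?_).1 h
  by_contra hn
  refine hs (sliceLen_eq_zero fun hne => hn ?_)
  exact abs_le.1 (slice_nonempty_abs hD hθ hne)

/-- Concavity of the slice length (Brunn-Minkowski on a line). -/
lemma sliceLen_concave (hD : Dom r₁ r₂ Ω) (hθ : ‖θ‖ = 1) :
    ConcaveOn ℝ {s | (slice Ω θ s).Nonempty} (sliceLen Ω θ) := by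
  refine ⟨?_, ?_⟩
  · rintro s ⟨x, hx⟩ s' ⟨y, hy⟩ a b ha hb hab
    exact ⟨_, slice_comb hD hx hy ha hb hab⟩
  · rintro s hs s' hs' a b ha hb hab
    obtain ⟨p, q, hpq, e, -⟩ := slice_eq hD hθ hs
    obtain ⟨p', q', hpq', e', -⟩ := slice_eq hD hθ hs'
    simp only [smul_eq_mul]
    have hsub : Ioo (a * p + b * p') (a * q + b * q') ⊆ slice Ω θ (a * s + b * s') := by
      intro r hr
      have hd : 0 < a * q + b * q' - (a * p + b * p') := by linarith [hr.1, hr.2]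
      set l := (r - (a * p + b * p')) / (a * q + b * q' - (a * p + b * p')) with hl
      have hl0 : 0 < l := div_pos (by linarith [hr.1]) hd
      have hl1 : l < 1 := by rw [hl, div_lt_one hd]; linarith [hr.2]
      have hr' : r = a * (p + l * (q - p)) + b * (p' + l * (q' - p')) := by
        have : l * (a * q + b * q' - (a * p + b * p')) = r - (a * p + b * p') := by
          rw [hl]; field_simp
        linear_combination -this
      rw [hr']
      refine slice_comb hD ?_ ?_ ha hb hab
      · rw [e]; constructor <;> nlinarith
      · rw [e']; constructor <;> nlinarith
    have h1 := ENNReal.toReal_mono (slice_vol_lt hD hθ _).ne (measure_mono (μ := volume) hsub)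
    rw [Real.volume_Ioo, ENNReal.toReal_ofReal (by nlinarith)] at h1
    have h2 : sliceLen Ω θ s = q - p := by
      rw [sliceLen, e, Real.volume_Ioo, ENNReal.toReal_ofReal (by linarith)]
    have h3 : sliceLen Ω θ s' = q' - p' := by
      rw [sliceLen, e', Real.volume_Ioo, ENNReal.toReal_ofReal (by linarith)]
    rw [h2, h3]
    unfold sliceLen
    linarith

lemma inner_bddAbove (hD : Dom r₁ r₂ Ω) (ξ : E2) : BddAbove ((fun x => ⟪x, ξ⟫) '' Ω) := by
  refine ⟨r₂ * ‖ξ‖, ?_⟩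
  rintro _ ⟨x, hx, rfl⟩
  have := hD.outer hx
  rw [mem_closedBall_zero_iff] at this
  exact (real_inner_le_norm x ξ).trans (by gcongr)

lemma zero_mem (hD : Dom r₁ r₂ Ω) : (0 : E2) ∈ Ω := hD.inner (by simpa using hD.pos)

lemma le_suppFn (hD : Dom r₁ r₂ Ω) {x : E2} (hx : x ∈ Ω) (ξ : E2) : ⟪x, ξ⟫ ≤ suppFn Ω ξ :=
  le_csSup (inner_bddAbove hD ξ) ⟨x, hx, rfl⟩

lemma suppFn_le (hD : Dom r₁ r₂ Ω) (hθ : ‖θ‖ = 1) : suppFn Ω θ ≤ r₂ := by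
  refine csSup_le ⟨_, 0, zero_mem hD, rfl⟩ ?_
  rintro _ ⟨x, hx, rfl⟩
  have := hD.outer hx
  rw [mem_closedBall_zero_iff] at this
  exact (real_inner_le_norm x θ).trans (by rw [hθ]; linarith)

lemma slice_mem_lt (hD : Dom r₁ r₂ Ω) (hθ : ‖θ‖ = 1) {s : ℝ} (h : (slice Ω θ s).Nonempty) :
    s < suppFn Ω θ := by
  obtain ⟨r, hr⟩ := h
  obtain ⟨ε, hε, hb⟩ := Metric.isOpen_iff.1 hD.opn _ hr
  have h1 : (s + ε / 2) • θ + r • Jv θ ∈ Ω := by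
    apply hb
    rw [Metric.mem_ball, dist_eq_norm]
    have : (s + ε / 2) • θ + r • Jv θ - (s • θ + r • Jv θ) = (ε / 2) • θ := by module
    rw [this, norm_smul, hθ, Real.norm_of_nonneg (by linarith)]; linarith
  have := le_suppFn hD h1 θ
  rw [coord_inner hθ] at this
  linarith

lemma slice_nonempty_of_ball (hD : Dom r₁ r₂ Ω) (hθ : ‖θ‖ = 1) {s : ℝ} (h : |s| < r₁) :
    (slice Ω θ s).Nonempty := by
  refine ⟨0, hD.inner ?_⟩
  simp [norm_smul, hθ, h]

lemma r₁_le_suppFn (hD : Dom r₁ r₂ Ω) (hθ : ‖θ‖ = 1) : r₁ ≤ suppFn Ω θ := by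
  refine le_of_forall_lt fun s hs => ?_
  rcases le_or_gt s 0 with h0 | h0
  · refine h0.trans_lt ?_
    exact slice_mem_lt hD hθ (slice_nonempty_of_ball hD hθ (by simpa using hD.pos))
  · exact slice_mem_lt hD hθ (slice_nonempty_of_ball hD hθ (by rwa [abs_of_pos h0]))

lemma slice_neg (s : ℝ) : slice Ω (-θ) s = -slice Ω θ (-s) := by
  ext r
  simp only [slice, Set.mem_neg]
  change _ ∈ Ω ↔ _ ∈ Ω
  rw [Jv_neg]
  have : s • -θ + r • -Jv θ = -s • θ + -r • Jv θ := by module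
  rw [this]

lemma sliceLen_neg (s : ℝ) : sliceLen Ω (-θ) s = sliceLen Ω θ (-s) := by
  rw [sliceLen, slice_neg, Measure.measure_neg]; rfl

/-- The lines meeting `Ω` are those strictly between the two support lines. -/
lemma slice_nonempty_iff (hD : Dom r₁ r₂ Ω) (hθ : ‖θ‖ = 1) {s : ℝ} :
    (slice Ω θ s).Nonempty ↔ s ∈ Ioo (-suppFn Ω (-θ)) (suppFn Ω θ) := by
  have hθ' : ‖-θ‖ = 1 := by rwa [norm_neg]
  constructor
  · intro h
    refine ⟨?_, slice_mem_lt hD hθ h⟩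
    have : (slice Ω (-θ) (-s)).Nonempty := by
      rw [slice_neg, neg_neg]; exact h.neg
    linarith [slice_mem_lt hD hθ' this]
  · -- it suffices to find a point of `Ω` on the far side of the line; the segment to `0` crosses it
    have key : ∀ φ : E2, ‖φ‖ = 1 → ∀ s : ℝ, 0 ≤ s → s < suppFn Ω φ → (slice Ω φ s).Nonempty := by
      intro φ hφ s hs hlt
      obtain ⟨_, ⟨x, hx, rfl⟩, hsx⟩ := exists_lt_of_lt_csSup (Set.Nonempty.image _ ⟨0, zero_mem hD⟩) hlt
      simp only at hsx
      have hx' : ⟪x, Jv φ⟫ ∈ slice Ω φ ⟪x, φ⟫ := by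
        change _ ∈ Ω
        rwa [coord_eq hφ]
      have h0 : (0 : ℝ) ∈ slice Ω φ 0 := by
        change _ ∈ Ω
        simpa using zero_mem hD
      have hpos : 0 < ⟪x, φ⟫ := by linarith
      have := slice_comb hD hx' h0 (a := s / ⟪x, φ⟫) (b := 1 - s / ⟪x, φ⟫) (by positivity)
        (by rw [sub_nonneg, div_le_one hpos]; exact hsx.le) (by ring)
      rw [mul_zero, add_zero, add_zero, div_mul_cancel₀ _ hpos.ne'] at this
      · exact ⟨_, this⟩
    rintro ⟨ha, hb⟩
    rcases le_or_gt 0 s with h0 | h0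
    · exact key θ hθ s h0 hb
    · have := key (-θ) hθ' (-s) (by linarith) (by linarith)
      rw [slice_neg, neg_neg] at this
      simpa using this

lemma cap_bounded (hD : Dom r₁ r₂ Ω) (δ : ℝ) :
    {x ∈ frontier Ω | suppFn Ω θ - δ ≤ ⟪x, θ⟫} ⊆ Metric.closedBall 0 r₂ := fun _ hx =>
  closure_minimal hD.outer Metric.isClosed_closedBall (frontier_subset_closure hx.1)

lemma capDiam_nonneg (δ : ℝ) : 0 ≤ capDiam Ω θ δ := Metric.diam_nonneg

lemma capDiam_le (hD : Dom r₁ r₂ Ω) (δ : ℝ) : capDiam Ω θ δ ≤ 2 * r₂ :=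
  (Metric.diam_mono (cap_bounded hD δ) Metric.isBounded_closedBall).trans
    (Metric.diam_closedBall (by linarith [hD.one_lt]))

lemma capDiam_mono (hD : Dom r₁ r₂ Ω) : Monotone (capDiam Ω θ) := by
  intro δ δ' h
  refine Metric.diam_mono (fun x hx => ⟨hx.1, ?_⟩)
    (Metric.isBounded_closedBall.subset (cap_bounded hD δ'))
  have := hx.2
  linarith

/-- The slice at depth `u` below the support line is a chord of the cap of height `u`. -/
lemma sliceLen_le_capDiam (hD : Dom r₁ r₂ Ω) (hθ : ‖θ‖ = 1) (u : ℝ) :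
    sliceLen Ω θ (suppFn Ω θ - u) ≤ capDiam Ω θ u := by
  by_cases h : (slice Ω θ (suppFn Ω θ - u)).Nonempty
  · obtain ⟨p, q, hpq, e, hp, hq⟩ := slice_eq hD hθ h
    rw [sliceLen, e, Real.volume_Ioo, ENNReal.toReal_ofReal (by linarith)]
    have h1 := Metric.dist_le_diam_of_mem
      (Metric.isBounded_closedBall.subset (cap_bounded (θ := θ) hD u))
      ⟨hq, (coord_inner hθ _ _).ge⟩ ⟨hp, (coord_inner hθ _ _).ge⟩
    refine le_trans (le_of_eq ?_) h1
    rw [dist_eq_norm, show ∀ s : ℝ, s • θ + q • Jv θ - (s • θ + p • Jv θ)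
      = (0 : ℝ) • θ + (q - p) • Jv θ by intro s; module]
    have := coord_norm hθ 0 (q - p)
    exact (pow_left_inj₀ (sub_pos.2 hpq).le (norm_nonneg _) two_ne_zero).1 (by rw [this]; ring)
  · rw [sliceLen_eq_zero h]; exact capDiam_nonneg u

lemma suppFn_smul {c : ℝ} (hc : 0 ≤ c) (ξ : E2) : suppFn Ω (c • ξ) = c * suppFn Ω ξ := by
  rw [suppFn, suppFn, ← smul_eq_mul, ← Real.sSup_smul_of_nonneg hc]
  congr 1
  ext z
  simp [Set.mem_smul_set, real_inner_smul_right]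

/-- Fubini along the lines orthogonal to `θ`. -/
lemma integral_slice (hD : Dom r₁ r₂ Ω) (hθ : ‖θ‖ = 1) (F : ℝ → ℂ) (hF : Continuous F)
    (hFb : ∀ s, ‖F s‖ ≤ 1) :
    ∫ y in Ω, F ⟪y, θ⟫ = ∫ s, (sliceLen Ω θ s : ℂ) * F s := by
  have hmp := measurePreserving_coord hθ
  have hΩm := hD.opn.measurableSet
  have hvol : volume Ω ≠ ⊤ := ((Metric.isBounded_closedBall.subset hD.outer).measure_lt_top).ne
  have hFc : Continuous fun y : E2 => F ⟪y, θ⟫ := by fun_prop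
  have hInt : Integrable (Ω.indicator fun y : E2 => F ⟪y, θ⟫) := by
    rw [integrable_indicator_iff hΩm]
    exact Measure.integrableOn_of_bounded (M := 1) hvol hFc.aestronglyMeasurable
      (Filter.Eventually.of_forall fun y => hFb _)
  rw [← integral_indicator hΩm]
  have hcomp := (hmp.integrable_comp hInt.aestronglyMeasurable).2 hInt
  rw [← hmp.map_eq, integral_map hmp.measurable.aemeasurable
    (by rw [hmp.map_eq]; exact hInt.aestronglyMeasurable)]
  have e : (volume : Measure (ℝ × ℝ)) = (volume : Measure ℝ).prod volume := rfl
  rw [e] at hcomp ⊢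
  change Integrable (fun p : ℝ × ℝ => Ω.indicator (fun y : E2 => F ⟪y, θ⟫) (p.1 • θ + p.2 • Jv θ)) _
    at hcomp
  rw [integral_prod _ hcomp]
  congr 1
  ext1 s
  have : (fun r : ℝ => Ω.indicator (fun y : E2 => F ⟪y, θ⟫) (s • θ + r • Jv θ))
      = (slice Ω θ s).indicator (fun _ => F s) := by
    ext1 r
    by_cases hr : r ∈ slice Ω θ s
    · rw [indicator_of_mem hr, indicator_of_mem (show s • θ + r • Jv θ ∈ Ω from hr), coord_inner hθ]
    · rw [indicator_of_notMem hr, indicator_of_notMem (show s • θ + r • Jv θ ∉ Ω from hr)]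
  simp only [this]
  rw [integral_indicator (slice_open hD s).measurableSet]
  simp [sliceLen, Measure.real]

end

/-! ### Second differences of concave profiles -/

section

/-- The symmetric second difference of `A` with step `τ`. -/
def d2 (A : ℝ → ℝ) (τ s : ℝ) : ℝ := A (s + τ) - 2 * A s + A (s - τ)

/-- The `n`-th dyadic zone of depths `u` below a support line, cut off at depth `q`. The zone
`n = 0` contains all `u < 2δ`, including negative ones. -/
def zone (q δ : ℝ) (n : ℕ) : Set ℝ :=
  {u | u < q ∧ u < 2 ^ (n + 1) * δ ∧ (n = 0 ∨ 2 ^ n * δ ≤ u)}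

/-- A profile of slice lengths as a function of the depth `u`: concave on `(0, H)` and zero
outside, dominated by a monotone function `M` of the depth. -/
structure Profile (a M : ℝ → ℝ) (H : ℝ) : Prop where
  nonneg : ∀ u, 0 ≤ a u
  conc : ConcaveOn ℝ (Ioo 0 H) a
  zero : ∀ u, u ∉ Ioo 0 H → a u = 0
  integrable : Integrable a
  mono : Monotone M
  le : ∀ u, a u ≤ M u

variable {a M : ℝ → ℝ} {H : ℝ}

lemma Profile.M_nonneg (h : Profile a M H) (u : ℝ) : 0 ≤ M u := (h.nonneg u).trans (h.le u)

/-- `a(u)/u` decreases: this uses concavity and `a ≥ 0` near the end point. -/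
lemma Profile.star (h : Profile a M H) {y z : ℝ} (hy : 0 < y) (hyz : y ≤ z) :
    y * a z ≤ z * a y := by
  have hay := h.nonneg y
  have haz := h.nonneg z
  by_cases hz : z < H
  swap
  · rw [h.zero z (fun hh => hz hh.2), mul_zero]; exact mul_nonneg (by linarith) hay
  rcases hyz.eq_or_lt with rfl | hlt
  · exact le_rfl
  have key : ∀ x, 0 < x → x < y → (y - x) * a z ≤ (z - x) * a y := by
    intro x hx hxy
    have hzx : 0 < z - x := by linarith
    have := h.conc.2 (show x ∈ Ioo 0 H from ⟨hx, by linarith⟩)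
      (show z ∈ Ioo 0 H from ⟨by linarith, hz⟩)
      (show 0 ≤ (z - y) / (z - x) from div_nonneg (by linarith) hzx.le)
      (show 0 ≤ (y - x) / (z - x) from div_nonneg (by linarith) hzx.le) (by field_simp; ring)
    simp only [smul_eq_mul] at this
    rw [show (z - y) / (z - x) * x + (y - x) / (z - x) * z = y by field_simp; ring] at this
    have h1 : 0 ≤ (z - y) / (z - x) * a x :=
      mul_nonneg (div_nonneg (by linarith) hzx.le) (h.nonneg x)
    have h2 : (y - x) / (z - x) * a z ≤ a y := by linarith
    rw [div_mul_eq_mul_div, div_le_iff₀ hzx] at h2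
    linarith
  by_contra hcon
  push Not at hcon
  set D := y * a z - z * a y with hDdef
  have hD : 0 < D := by linarith
  have hx : 0 < min (y / 2) (D / (2 * (a z + 1))) := lt_min (by linarith) (by positivity)
  set x := min (y / 2) (D / (2 * (a z + 1))) with hxd
  have hx1 : x ≤ y / 2 := min_le_left _ _
  have hx2 : x ≤ D / (2 * (a z + 1)) := min_le_right _ _
  rw [le_div_iff₀ (by positivity)] at hx2
  have := key x hx (by linarith)
  nlinarith

/-- The mirror image of `Profile.star` at the other end point. -/
lemma Profile.star' (h : Profile a M H) {y z : ℝ} (hz : z < H) (hyz : y ≤ z) :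
    (H - z) * a y ≤ (H - y) * a z := by
  have hr : Profile (fun u => a (H - u)) (fun u => M (H + max u 0) + M (H + max u 0)) H := by
    refine ⟨fun u => h.nonneg _, ⟨convex_Ioo 0 H, ?_⟩, fun u hu => h.zero _ ?_,
      h.integrable.comp_sub_left H, ?_, fun u => ?_⟩
    · intro x hx y hy p q hp hq hpq
      have := h.conc.2 (x := H - x) (y := H - y) ⟨by linarith [hx.2], by linarith [hx.1]⟩
        ⟨by linarith [hy.2], by linarith [hy.1]⟩ hp hq hpq
      simp only [smul_eq_mul] at this ⊢
      rwa [show H - (p * x + q * y) = p * (H - x) + q * (H - y) by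
        linear_combination -H * hpq]
    · contrapose! hu
      exact ⟨by linarith [hu.2], by linarith [hu.1]⟩
    · have : Monotone fun u : ℝ => M (H + max u 0) := fun x y hxy =>
        h.mono (by gcongr)
      exact this.add this
    · have h1 := h.M_nonneg (H + max u 0)
      by_cases hu : 0 ≤ u
      · have := h.mono (show H - u ≤ H + max u 0 by linarith [le_max_left u 0])
        linarith [h.le (H - u)]
      · change a (H - u) ≤ _
        rw [h.zero (H - u) (fun hh => by linarith [hh.2])]; linarith
  have := hr.star (y := H - z) (z := H - y) (by linarith) (by linarith)
  simpa using this

/-- At comparable depths the profile is controlled by the majorant. -/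
lemma Profile.le_three (h : Profile a M H) {u v : ℝ} (hv : 0 < v) (hu : u ≤ 3 * v) :
    a u ≤ 3 * M v := by
  have hM := h.M_nonneg v
  rcases le_or_gt u v with huv | huv
  · linarith [h.le u, h.mono huv]
  · have h1 := h.star hv huv.le
    have h2 := h.le v
    have h3 := h.nonneg v
    have : v * a u ≤ v * (3 * M v) := by nlinarith
    exact le_of_mul_le_mul_left this hv

lemma d2_integrable {A : ℝ → ℝ} (hA : Integrable A) (τ : ℝ) : Integrable (d2 A τ) :=
  ((hA.comp_add_right τ).sub (hA.const_mul 2)).add (hA.comp_sub_right τ)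

/-- Second differences of a concave function have a sign, so that their integral telescopes to
first differences near the two end points. -/
lemma Profile.telescope (h : Profile a M H) {v z τ D : ℝ} (hτ : 0 < τ) (hvz : v ≤ z)
    (hv : 0 < v - τ) (hz : z + τ < H)
    (hD : ∀ y, v - τ ≤ y → y ≤ z → |a (y + τ) - a y| ≤ D) :
    ∫ u in Ioc v z, |d2 a τ u| ≤ 2 * τ * D := by
  have hii : ∀ x y, IntervalIntegrable a volume x y := fun x y => h.integrable.intervalIntegrable
  have hii1 : ∀ x y, IntervalIntegrable (fun u => a (u + τ)) volume x y := fun x y =>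
    (h.integrable.comp_add_right τ).intervalIntegrable
  have hii2 : ∀ x y, IntervalIntegrable (fun u => a (u - τ)) volume x y := fun x y =>
    (h.integrable.comp_sub_right τ).intervalIntegrable
  have hsign : ∀ u ∈ Ioc v z, |d2 a τ u| = -d2 a τ u := by
    intro u hu
    refine abs_of_nonpos ?_
    have := h.conc.2 (show u + τ ∈ Ioo 0 H from ⟨by linarith [hu.1], by linarith [hu.2]⟩)
      (show u - τ ∈ Ioo 0 H from ⟨by linarith [hu.1], by linarith [hu.2]⟩)
      (show (0:ℝ) ≤ 1 / 2 by norm_num) (show (0:ℝ) ≤ 1 / 2 by norm_num) (by norm_num)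
    simp only [smul_eq_mul] at this
    rw [show 1 / 2 * (u + τ) + 1 / 2 * (u - τ) = u by ring] at this
    unfold d2; linarith
  rw [setIntegral_congr_fun measurableSet_Ioc hsign, ← intervalIntegral.integral_of_le hvz]
  have e1 : ∫ u in v..z, -d2 a τ u = -((∫ u in v..z, a (u + τ)) - 2 * (∫ u in v..z, a u)
      + ∫ u in v..z, a (u - τ)) := by
    rw [intervalIntegral.integral_neg, ← intervalIntegral.integral_const_mul,
      ← intervalIntegral.integral_sub (hii1 _ _) ((hii _ _).const_mul 2),
      ← intervalIntegral.integral_add ((hii1 _ _).sub ((hii _ _).const_mul 2)) (hii2 _ _)]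
    rfl
  have diff : ∀ x, v ≤ x → x ≤ z →
      |(∫ u in x..(x + τ), a u) - ∫ u in (x - τ)..x, a u| ≤ D * τ := by
    intro x hx hxz
    have : (∫ u in x..(x + τ), a u) = ∫ u in (x - τ)..x, a (u + τ) := by
      rw [intervalIntegral.integral_comp_add_right (f := a)]; congr 1; ring
    rw [this, ← intervalIntegral.integral_sub (hii1 _ _) (hii _ _)]
    have := intervalIntegral.norm_integral_le_of_norm_le_const (a := x - τ) (b := x)
      (f := fun u => a (u + τ) - a u) (C := D) (fun y hy => by
        rw [uIoc_of_le (by linarith)] at hy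
        exact hD y (by linarith [hy.1]) (by linarith [hy.2]))
    rwa [show x - (x - τ) = τ by ring, abs_of_pos hτ] at this
  rw [e1, intervalIntegral.integral_comp_add_right (f := a),
    intervalIntegral.integral_comp_sub_right (f := a)]
  have s1 := intervalIntegral.integral_add_adjacent_intervals (hii v (v + τ)) (hii (v + τ) (z + τ))
  have s2 := intervalIntegral.integral_add_adjacent_intervals (hii v z) (hii z (z + τ))
  have s3 := intervalIntegral.integral_add_adjacent_intervals (hii (v - τ) v) (hii v z)
  have s4 := intervalIntegral.integral_add_adjacent_intervals (hii (v - τ) (z - τ)) (hii (z - τ) z)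
  have d1 := abs_le.1 (diff v le_rfl hvz)
  have d2 := abs_le.1 (diff z hvz le_rfl)
  linarith [d1.1, d1.2, d2.1, d2.2]

/-- First differences of a concave profile, from the two one-sided slope bounds. -/
lemma Profile.diff_le (h : Profile a M H) {y τ V w : ℝ} (hτ : 0 < τ) (hw : 0 < w) (hwy : w ≤ y)
    (hH : w ≤ H - (y + τ)) (h1 : a y ≤ V) (h2 : a (y + τ) ≤ V) :
    |a (y + τ) - a y| ≤ τ * V / w := by
  have hV : 0 ≤ V := (h.nonneg y).trans h1
  have s1 := h.star (y := y) (z := y + τ) (by linarith) (by linarith)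
  have s2 := h.star' (y := y) (z := y + τ) (by linarith) (by linarith)
  rw [abs_le, ← neg_div, div_le_iff₀ hw, le_div_iff₀ hw]
  have n1 := h.nonneg y
  have n2 := h.nonneg (y + τ)
  constructor
  · by_cases hc : a y ≤ a (y + τ)
    · nlinarith
    · have : (H - (y + τ)) * (a y - a (y + τ)) ≤ τ * a (y + τ) := by linarith
      nlinarith
  · by_cases hc : a (y + τ) ≤ a y
    · nlinarith
    · have : y * (a (y + τ) - a y) ≤ τ * a y := by linarith
      nlinarith

lemma Profile.d2_zero (h : Profile a M H) {τ u : ℝ} (hτ : 0 < τ) (hu : u ≤ -τ) : d2 a τ u = 0 := by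
  simp only [d2]
  rw [h.zero (u + τ) (fun hh => by linarith [hh.1]), h.zero u (fun hh => by linarith [hh.1]),
    h.zero (u - τ) (fun hh => by linarith [hh.1])]
  norm_num

lemma zone_measurable (q δ : ℝ) (n : ℕ) : MeasurableSet (zone q δ n) := by
  unfold zone
  by_cases hn : n = 0
  · simp only [hn, true_or, and_true]
    exact (measurableSet_lt measurable_id measurable_const).inter
      (measurableSet_lt measurable_id measurable_const)
  · simp only [hn, false_or]
    exact (measurableSet_lt measurable_id measurable_const).inter
      ((measurableSet_lt measurable_id measurable_const).inter
        (measurableSet_le measurable_const measurable_id))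

/-- The `L¹` norm of the second difference in the `n`-th zone gains `2^{-n}`. -/
lemma Profile.zone_bound (h : Profile a M H) {q δ τ : ℝ} (hδ : 0 < δ) (hτ : 0 < τ)
    (hτδ : τ ≤ δ / 4) (hτq : τ ≤ q / 2) (hH : 4 * q ≤ H) (n : ℕ) :
    ∫ u in zone q δ n, |d2 a τ u| ≤ 36 * (δ / 2 ^ n) * M (2 ^ n * δ) := by
  have hq : 0 < q := by linarith
  rcases Nat.eq_zero_or_pos n with rfl | hn
  · simp only [pow_zero, one_mul, div_one]
    have hM := h.M_nonneg δ
    rw [← integral_indicator (zone_measurable q δ 0)]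
    have hle : ∀ u, (zone q δ 0).indicator (fun u => |d2 a τ u|) u ≤
        (Ioc (-δ) (2 * δ)).indicator (fun _ => 12 * M δ) u := by
      intro u
      by_cases hu : u ∈ zone q δ 0
      · rw [indicator_of_mem hu]
        have hu2 : u < 2 * δ := by simpa using hu.2.1
        by_cases hl : -δ < u
        · rw [indicator_of_mem (show u ∈ Ioc (-δ) (2 * δ) from ⟨hl, hu2.le⟩)]
          have b1 := h.le_three hδ (u := u + τ) (by linarith)
          have b2 := h.le_three hδ (u := u) (by linarith)
          have b3 := h.le_three hδ (u := u - τ) (by linarith)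
          have n1 := h.nonneg (u + τ)
          have n2 := h.nonneg u
          have n3 := h.nonneg (u - τ)
          rw [abs_le]; unfold d2; constructor <;> linarith
        · rw [h.d2_zero hτ (by linarith), abs_zero]
          exact indicator_nonneg (fun _ _ => by positivity) _
      · rw [indicator_of_notMem hu]
        exact indicator_nonneg (fun _ _ => by positivity) _
    calc _ ≤ ∫ u, (Ioc (-δ) (2 * δ)).indicator (fun _ => 12 * M δ) u := by
          refine integral_mono_of_nonneg (Filter.Eventually.of_forall fun u => ?_) ?_
            (Filter.Eventually.of_forall hle)
          · exact indicator_nonneg (fun _ _ => abs_nonneg _) _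
          · rw [integrable_indicator_iff measurableSet_Ioc]
            exact integrableOn_const (by simp)
      _ = 36 * δ * M δ := by
          rw [integral_indicator measurableSet_Ioc, setIntegral_const, measureReal_def,
            Real.volume_Ioc, ENNReal.toReal_ofReal (by linarith), smul_eq_mul]
          ring
  · have hn0 : n ≠ 0 := by omega
    set v := 2 ^ n * δ with hv
    have h2n : (2:ℝ) ≤ 2 ^ n := by
      calc (2:ℝ) = 2 ^ 1 := by norm_num
        _ ≤ 2 ^ n := pow_le_pow_right₀ (by norm_num) hn
    have hv2 : 2 * δ ≤ v := by rw [hv]; gcongr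
    have hM := h.M_nonneg v
    rcases le_or_gt q v with hqv | hqv
    · have : zone q δ n = ∅ := by
        ext u
        simp only [zone, hn0, false_or, mem_ofPred_eq, mem_empty_iff_false, iff_false]
        rintro ⟨h1, -, h3⟩
        linarith
      rw [this]; simp; positivity
    · have hz : zone q δ n = Ico v (min (2 * v) q) := by
        ext u
        simp only [zone, hn0, false_or, mem_ofPred_eq, mem_Ico, lt_min_iff]
        rw [show (2:ℝ) ^ (n + 1) * δ = 2 * v by rw [hv]; ring]
        tauto
      rw [hz, integral_Ico_eq_integral_Ioc]
      have hzq : min (2 * v) q ≤ q := min_le_right _ _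
      have hz2 : min (2 * v) q ≤ 2 * v := min_le_left _ _
      have := h.telescope (v := v) (z := min (2 * v) q) (τ := τ) (D := τ * (3 * M v) / (v / 2)) hτ
        (le_min (by linarith) hqv.le) (by linarith) (by linarith) (fun y hy1 hy2 =>
          h.diff_le hτ (by linarith) (by linarith) (by linarith)
            (h.le_three (by linarith) (by linarith)) (h.le_three (by linarith) (by linarith)))
      refine this.trans ?_
      have e : 2 * τ * (τ * (3 * M v) / (v / 2)) = 12 * τ ^ 2 * M v / v := by
        field_simp; ring
      rw [e, div_le_iff₀ (by linarith)]
      have e2 : 36 * (δ / 2 ^ n) * M v * v = 36 * δ ^ 2 * M v := by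
        rw [hv]; field_simp
      rw [e2]
      have : τ ^ 2 ≤ δ ^ 2 := by gcongr; linarith
      nlinarith

/-- Away from both support lines the second difference is quadratically small. -/
lemma Profile.mid_bound (h : Profile a M H) {q τ V : ℝ} (hτ : 0 < τ) (hτq : τ ≤ q / 2)
    (hH : 4 * q ≤ H) (hV : ∀ u, a u ≤ V) :
    ∫ u in Icc q (H - q), |d2 a τ u| ≤ 4 * τ ^ 2 * V / q := by
  have hq : 0 < q := by linarith
  rw [integral_Icc_eq_integral_Ioc]
  have := h.telescope (v := q) (z := H - q) (τ := τ) (D := τ * V / (q / 2)) hτ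
        (by linarith) (by linarith) (by linarith) (fun y hy1 hy2 =>
          h.diff_le hτ (by linarith) (by linarith) (by linarith) (hV _) (hV _))
  refine this.trans (le_of_eq ?_)
  field_simp; ring

/-- The zones `0, …, K` partition the part of `u < q` with `u < 2^(K+1) δ`. -/
lemma zone_sum (q δ : ℝ) (hδ : 0 < δ) (u : ℝ) (K : ℕ) :
    ∑ n ∈ Finset.range (K + 1), (zone q δ n).indicator (fun _ => (1:ℝ)) u
      = {u | u < q ∧ u < 2 ^ (K + 1) * δ}.indicator (fun _ => (1:ℝ)) u := by
  classical
  induction K with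
  | zero => simp [zone]
  | succ K ih =>
    rw [Finset.sum_range_succ, ih]
    have : (2:ℝ) ^ (K + 1) * δ ≤ 2 ^ (K + 1 + 1) * δ := by gcongr <;> norm_num
    simp only [indicator_apply, zone, mem_ofPred_eq]
    split_ifs <;> first | rfl | (exfalso; grind) | norm_num

end

/-! ### Oscillatory integrals and the mean square of an exponential sum -/

section

/-- The character `e(x) = exp(2πix)`. -/
def ee (x : ℝ) : ℂ := Complex.exp ((2 * Real.pi * x : ℝ) * Complex.I)

lemma ee_norm (x : ℝ) : ‖ee x‖ = 1 := Complex.norm_exp_ofReal_mul_I _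

lemma ee_continuous : Continuous ee := by unfold ee; fun_prop

lemma ee_add (x y : ℝ) : ee (x + y) = ee x * ee y := by
  unfold ee; rw [← Complex.exp_add]; congr 1; push_cast; ring

lemma ee_conj (x : ℝ) : (starRingEnd ℂ) (ee x) = ee (-x) := by
  unfold ee; rw [← Complex.exp_conj]; congr 1
  simp only [map_mul, Complex.conj_I, Complex.conj_ofReal]; push_cast; ring

lemma ee_zero : ee 0 = 1 := by simp [ee]

/-- Rapid decay of the Fourier transform of a bump function, as a Schwartz function. -/
lemma bump_decay {c₀ : ℝ} (b : ContDiffBump c₀) (N : ℕ) :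
    ∃ C : ℝ, 0 < C ∧ ∀ ξ : ℝ, ‖∫ x, (b x : ℂ) * ee (x * ξ)‖ ≤ C * ((1 + |ξ|) ^ N)⁻¹ := by
  have h1 : HasCompactSupport (fun x : ℝ => (b x : ℂ)) :=
    b.hasCompactSupport.comp_left (g := fun y : ℝ => (y : ℂ)) (by simp)
  have h2 : ContDiff ℝ (⊤ : ℕ∞) (fun x : ℝ => (b x : ℂ)) :=
    Complex.ofRealCLM.contDiff.comp b.contDiff
  let f : SchwartzMap ℝ ℂ := h1.toSchwartzMap h2
  let C := 2 ^ N * (Finset.Iic ((N, 0) : ℕ × ℕ)).sup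
    (fun m => SchwartzMap.seminorm ℝ m.1 m.2) (FourierTransform.fourier f)
  have hC : ∀ ξ : ℝ, (1 + ‖ξ‖) ^ N * ‖FourierTransform.fourier f ξ‖ ≤ C := by
    intro ξ
    have := SchwartzMap.one_add_le_sup_seminorm_apply (𝕜 := ℝ) (m := (N, 0)) le_rfl le_rfl
      (FourierTransform.fourier f) ξ
    simpa using this
  have hC0 : 0 ≤ C := le_trans (by positivity) (hC 0)
  refine ⟨C + 1, by linarith, fun ξ => ?_⟩
  have e : ∫ x, (b x : ℂ) * ee (x * ξ) = FourierTransform.fourier f (-ξ) := by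
    rw [SchwartzMap.fourier_coe, Real.fourier_real_eq_integral_exp_smul]
    congr 1; ext x
    rw [smul_eq_mul, mul_comm]
    congr 1
    unfold ee; congr 2; push_cast; ring
  rw [e, ← div_eq_mul_inv, le_div_iff₀ (by positivity), mul_comm]
  have := hC (-ξ)
  rw [norm_neg, Real.norm_eq_abs] at this
  linarith

/-- The oscillatory integral with amplitude `G` and frequency `κ s`. -/
def osc (G : ℝ → ℝ) (κ t : ℝ) : ℂ := ∫ s, (G s : ℂ) * ee (t * (κ * s))

lemma osc_integrable {G : ℝ → ℝ} (hG : Integrable G) (κ t : ℝ) :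
    Integrable (fun s => (G s : ℂ) * ee (t * (κ * s))) := by
  refine hG.ofReal.mul_bdd (c := 1) ?_ (Filter.Eventually.of_forall fun s => (ee_norm _).le)
  exact (ee_continuous.comp (by fun_prop)).aestronglyMeasurable

lemma osc_norm_le {G : ℝ → ℝ} (κ t : ℝ) : ‖osc G κ t‖ ≤ ∫ s, |G s| := by
  refine (norm_integral_le_integral_norm _).trans (le_of_eq ?_)
  congr 1; ext s; simp [ee_norm]

lemma osc_continuous {G : ℝ → ℝ} (hG : Integrable G) (κ : ℝ) : Continuous (osc G κ) := by
  refine continuous_of_dominated (bound := fun s => |G s|)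
    (fun t => (osc_integrable hG κ t).aestronglyMeasurable)
    (fun t => Filter.Eventually.of_forall fun s => by simp [ee_norm]) hG.abs
    (Filter.Eventually.of_forall fun s => ?_)
  exact continuous_const.mul (ee_continuous.comp (by fun_prop))

/-- Decay in `x` at scale `1/h` is decay in `ρ` at the coarser scale `1/B`, as long as `x` and `ρ`
differ by `O(1/B)`. -/
lemma peetre {N : ℕ} {h B A x ρ : ℝ} (hB : 0 ≤ B) (hBh : B ≤ h) (hAB : A * B ≤ 2)
    (hx : |x - ρ| ≤ 2 * A) :
    ((1 + |h * x|) ^ N)⁻¹ ≤ 5 ^ N * (1 + B * |ρ|) ^ (-(N : ℝ)) := by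
  have h0 : 0 ≤ h := hB.trans hBh
  rw [Real.rpow_neg (by positivity), Real.rpow_natCast, ← div_eq_mul_inv,
    inv_le_comm₀ (by positivity) (by positivity), inv_div, ← div_pow]
  refine pow_le_pow_left₀ (by positivity) ?_ N
  rw [div_le_iff₀ (by norm_num), abs_mul, abs_of_nonneg h0]
  have h1 : |ρ| ≤ |x| + 2 * A := by
    have := abs_sub_abs_le_abs_sub ρ x
    rw [abs_sub_comm] at this; linarith
  have h2 : B * |ρ| ≤ B * |x| + 2 * (A * B) := by nlinarith
  have h3 : B * |x| ≤ h * |x| := by gcongr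
  have h4 : 0 ≤ h * |x| := by positivity
  linarith

/-- The smoothed inner product of two oscillatory integrals is governed by the Fourier transform of
the time cutoff at the difference of the frequencies. -/
lemma osc_pair {b : ContDiffBump (1 / 2 : ℝ)} {N : ℕ} {C : ℝ} (hC : 0 < C)
    (hb : ∀ ξ : ℝ, ‖∫ x, (b x : ℂ) * ee (x * ξ)‖ ≤ C * ((1 + |ξ|) ^ N)⁻¹)
    {G G' : ℝ → ℝ} (hG : Integrable G) (hG' : Integrable G') {κ κ' ρ ρ' R h A B : ℝ} (hh : 0 < h)
    (hB : 0 ≤ B) (hBh : B ≤ h) (hAB : A * B ≤ 2)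
    (hs : ∀ s, G s ≠ 0 → |κ * s - ρ| ≤ A) (hs' : ∀ s, G' s ≠ 0 → |κ' * s - ρ'| ≤ A) :
    ‖∫ t, (b ((t - R) / h) : ℂ) * (osc G κ t * (starRingEnd ℂ) (osc G' κ' t))‖ ≤
      h * (C * 5 ^ N) * ((∫ s, |G s|) * (∫ s, |G' s|) * (1 + B * |ρ - ρ'|) ^ (-(N : ℝ))) := by
  -- the time integral for fixed frequency
  have hW : ∀ x : ℝ, ‖∫ t, (b ((t - R) / h) : ℂ) * ee (t * x)‖ ≤ h * (C * ((1 + |h * x|) ^ N)⁻¹) := by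
    intro x
    have e1 : ∫ t, (b ((t - R) / h) : ℂ) * ee (t * x)
        = ∫ t, (fun y : ℝ => (b y : ℂ) * ee ((h * y + R) * x)) (t / h - R / h) := by
      congr 1; ext t
      simp only
      rw [show t / h - R / h = (t - R) / h by ring, show h * ((t - R) / h) + R = t by
        field_simp; ring]
    rw [e1]
    have e2 := Measure.integral_comp_div
      (fun z : ℝ => (fun y : ℝ => (b y : ℂ) * ee ((h * y + R) * x)) (z - R / h)) h
    rw [e2, integral_sub_right_eq_self (fun y : ℝ => (b y : ℂ) * ee ((h * y + R) * x)), norm_smul,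
      Real.norm_eq_abs, abs_abs, abs_of_pos hh]
    gcongr
    have e3 : ∫ y, (b y : ℂ) * ee ((h * y + R) * x) = (∫ y, (b y : ℂ) * ee (y * (h * x))) * ee (R * x) := by
      rw [← integral_mul_const]
      congr 1; ext y
      rw [show (h * y + R) * x = y * (h * x) + R * x by ring, ee_add]; ring
    rw [e3, norm_mul, ee_norm, mul_one]
    exact hb _
  let Φ : ℝ → ℝ × ℝ → ℂ := fun t p =>
    (b ((t - R) / h) : ℂ) * (((G p.1 : ℂ) * (G' p.2 : ℂ)) * ee (t * (κ * p.1 - κ' * p.2)))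
  have hbint : Integrable (fun t : ℝ => (b ((t - R) / h) : ℂ)) := by
    have : Integrable (fun t : ℝ => b t) := b.continuous.integrable_of_hasCompactSupport b.hasCompactSupport
    exact ((this.comp_div hh.ne').comp_sub_right R).ofReal
  have hGG : Integrable (fun p : ℝ × ℝ => (G p.1 : ℂ) * (G' p.2 : ℂ)) (volume.prod volume) :=
    hG.ofReal.mul_prod hG'.ofReal
  have hΦ : Integrable (Function.uncurry Φ) (volume.prod (volume.prod volume)) := by
    have h1 := hbint.mul_prod hGG
    have h2 := h1.mul_bdd (g := fun z : ℝ × ℝ × ℝ => ee (z.1 * (κ * z.2.1 - κ' * z.2.2))) (c := 1)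
      (ee_continuous.comp (by fun_prop)).aestronglyMeasurable
      (Filter.Eventually.of_forall fun s => (ee_norm _).le)
    refine h2.congr (Filter.Eventually.of_forall fun z => ?_)
    simp only [Φ, Function.uncurry]; ring
  have e1 : ∀ t, (b ((t - R) / h) : ℂ) * (osc G κ t * (starRingEnd ℂ) (osc G' κ' t))
      = ∫ p, Φ t p ∂(volume.prod volume) := by
    intro t
    simp only [Φ]
    rw [integral_const_mul]
    congr 1
    have : (starRingEnd ℂ) (osc G' κ' t) = ∫ s, (G' s : ℂ) * ee (-(t * (κ' * s))) := by
      rw [osc, ← integral_conj]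
      congr 1; ext s
      rw [map_mul, Complex.conj_ofReal, ee_conj]
    rw [this, osc, ← integral_prod_mul]
    congr 1; ext p
    rw [show t * (κ * p.1 - κ' * p.2) = t * (κ * p.1) + -(t * (κ' * p.2)) by ring, ee_add]
    ring
  simp_rw [e1]
  rw [integral_integral_swap hΦ]
  have e2 : ∀ p : ℝ × ℝ, ‖∫ t, Φ t p‖ ≤
      |G p.1| * |G' p.2| * (h * (C * (5 ^ N * (1 + B * |ρ - ρ'|) ^ (-(N : ℝ))))) := by
    intro p
    have : ∫ t, Φ t p = ((G p.1 : ℂ) * (G' p.2 : ℂ)) *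
        ∫ t, (b ((t - R) / h) : ℂ) * ee (t * (κ * p.1 - κ' * p.2)) := by
      rw [← integral_const_mul]
      congr 1; ext t; simp only [Φ]; ring
    rw [this, norm_mul, norm_mul, Complex.norm_real, Complex.norm_real, Real.norm_eq_abs, Real.norm_eq_abs]
    by_cases h1 : G p.1 = 0
    · simp [h1]
    by_cases h2 : G' p.2 = 0
    · simp [h2]
    refine mul_le_mul_of_nonneg_left ((hW _).trans ?_) (by positivity)
    gcongr
    refine peetre hB hBh hAB ?_
    have a1 := hs _ h1
    have a2 := hs' _ h2
    rw [abs_le] at a1 a2 ⊢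
    constructor <;> linarith [a1.1, a1.2, a2.1, a2.2]
  have hGGa : Integrable (fun p : ℝ × ℝ => |G p.1| * |G' p.2|) (volume.prod volume) :=
    hG.abs.mul_prod hG'.abs
  refine (norm_integral_le_of_norm_le (hGGa.mul_const _) (Filter.Eventually.of_forall e2)).trans
    (le_of_eq ?_)
  rw [integral_mul_const, integral_prod_mul (fun s => |G s|) (fun s => |G' s|)]
  ring

/-- Mean square bound for a finite sum of oscillatory integrals whose frequencies are localized to
within `A` of `ρ k`. -/
lemma l2_bound (N : ℕ) : ∃ C : ℝ, 0 < C ∧ ∀ (K : Finset (Fin 2 → ℤ)) (c : (Fin 2 → ℤ) → ℂ)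
    (G : (Fin 2 → ℤ) → ℝ → ℝ) (κ ρ : (Fin 2 → ℤ) → ℝ) (R h A B T₀ T₁ : ℝ), 0 < h → 0 ≤ B → B ≤ h →
    A * B ≤ 2 → (∀ k, Integrable (G k)) → (∀ k, ∀ s, G k s ≠ 0 → |κ k * s - ρ k| ≤ A) →
    R - h / 2 ≤ T₀ → T₁ ≤ R + 3 * h / 2 → T₀ ≤ T₁ →
    (1 / h) * ∫ t in T₀..T₁, ‖∑ k ∈ K, c k * osc (G k) (κ k) t‖ ^ 2 ≤
      C * ∑ k ∈ K, ∑ l ∈ K, ‖c k‖ * ‖c l‖ * ((∫ s, |G k s|) * (∫ s, |G l s|) *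
        (1 + B * |ρ k - ρ l|) ^ (-(N : ℝ))) := by
  let b : ContDiffBump (1 / 2 : ℝ) := ⟨1, 2, by norm_num, by norm_num⟩
  obtain ⟨C, hC, hb⟩ := bump_decay b N
  refine ⟨C * 5 ^ N, by positivity, ?_⟩
  intro K c G κ ρ R h A B T₀ T₁ hh hB hBh hAB hG hs hT₀ hT₁ hT
  set F : ℝ → ℂ := fun t => ∑ k ∈ K, c k * osc (G k) (κ k) t with hF
  have hFc : Continuous F := continuous_finsetSum _ fun k _ =>
    continuous_const.mul (osc_continuous (hG k) _)
  have hbc : Continuous (fun t : ℝ => b ((t - R) / h)) := b.continuous.comp (by fun_prop)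
  have hbs : HasCompactSupport (fun t : ℝ => b ((t - R) / h)) := by
    refine HasCompactSupport.of_support_subset_isCompact (K := Icc (R - 2 * h) (R + 3 * h))
      isCompact_Icc fun t ht => ?_
    rw [Function.mem_support] at ht
    by_contra hcon
    refine ht (b.zero_of_le_dist ?_)
    change 2 ≤ dist ((t - R) / h) (1 / 2)
    rw [Real.dist_eq]
    by_contra hlt
    push Not at hlt
    rw [abs_lt] at hlt
    obtain ⟨l1, l2⟩ := hlt
    have l1' : -2 + 1 / 2 < (t - R) / h := by linarith
    have l2' : (t - R) / h < 2 + 1 / 2 := by linarith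
    rw [lt_div_iff₀ hh] at l1'
    rw [div_lt_iff₀ hh] at l2'
    exact hcon ⟨by linarith, by linarith⟩
  have hInt : Integrable (fun t : ℝ => b ((t - R) / h) * ‖F t‖ ^ 2) :=
    (hbc.mul (hFc.norm.pow 2)).integrable_of_hasCompactSupport hbs.mul_right
  have step1 : ∫ t in T₀..T₁, ‖F t‖ ^ 2 ≤ ∫ t, b ((t - R) / h) * ‖F t‖ ^ 2 := by
    rw [intervalIntegral.integral_of_le hT, ← integral_indicator measurableSet_Ioc]
    refine integral_mono_of_nonneg (Filter.Eventually.of_forall fun t =>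
      indicator_nonneg (fun _ _ => by positivity) _) hInt (Filter.Eventually.of_forall fun t => ?_)
    simp only
    by_cases ht : t ∈ Ioc T₀ T₁
    · rw [indicator_of_mem ht, b.one_of_mem_closedBall, one_mul]
      rw [Metric.mem_closedBall, Real.dist_eq]
      change _ ≤ (1:ℝ)
      rw [abs_le, show (t - R) / h - 1 / 2 = (t - R - h / 2) / h by field_simp]
      rw [le_div_iff₀ hh, div_le_iff₀ hh]
      constructor <;> linarith [ht.1, ht.2]
    · rw [indicator_of_notMem ht]
      exact mul_nonneg b.nonneg (by positivity)
  have step2 : ((∫ t, b ((t - R) / h) * ‖F t‖ ^ 2 : ℝ) : ℂ) = ∑ k ∈ K, ∑ l ∈ K,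
      (c k * (starRingEnd ℂ) (c l)) * ∫ t, (b ((t - R) / h) : ℂ) *
        (osc (G k) (κ k) t * (starRingEnd ℂ) (osc (G l) (κ l) t)) := by
    rw [← integral_complex_ofReal]
    have hi : ∀ k l, Integrable (fun t => (c k * (starRingEnd ℂ) (c l)) * ((b ((t - R) / h) : ℂ) *
        (osc (G k) (κ k) t * (starRingEnd ℂ) (osc (G l) (κ l) t)))) := by
      intro k l
      refine Integrable.const_mul ?_ _
      refine Continuous.integrable_of_hasCompactSupport ?_ ?_
      · exact (Complex.continuous_ofReal.comp hbc).mul ((osc_continuous (hG k) _).mul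
          (Complex.continuous_conj.comp (osc_continuous (hG l) _)))
      · exact (hbs.comp_left (g := fun y : ℝ => (y : ℂ)) (by simp)).mul_right
    have hp : ∀ t, ((b ((t - R) / h) * ‖F t‖ ^ 2 : ℝ) : ℂ) = ∑ k ∈ K, ∑ l ∈ K,
        (c k * (starRingEnd ℂ) (c l)) * ((b ((t - R) / h) : ℂ) *
          (osc (G k) (κ k) t * (starRingEnd ℂ) (osc (G l) (κ l) t))) := by
      intro t
      rw [Complex.ofReal_mul, Complex.ofReal_pow, ← Complex.mul_conj', hF]
      simp only [map_sum, map_mul]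
      rw [Finset.sum_mul_sum, Finset.mul_sum]
      refine Finset.sum_congr rfl fun k _ => ?_
      rw [Finset.mul_sum]
      refine Finset.sum_congr rfl fun l _ => ?_
      ring
    simp_rw [hp]
    rw [integral_finsetSum _ (fun k _ => integrable_finsetSum _ fun l _ => hi k l)]
    refine Finset.sum_congr rfl fun k _ => ?_
    rw [integral_finsetSum _ (fun l _ => hi k l)]
    refine Finset.sum_congr rfl fun l _ => ?_
    rw [integral_const_mul]
  have step3 : ∫ t, b ((t - R) / h) * ‖F t‖ ^ 2 ≤ ∑ k ∈ K, ∑ l ∈ K, ‖c k‖ * ‖c l‖ *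
      (h * (C * 5 ^ N) * ((∫ s, |G k s|) * (∫ s, |G l s|) *
        (1 + B * |ρ k - ρ l|) ^ (-(N : ℝ)))) := by
    refine (Real.le_norm_self _).trans ?_
    rw [← Complex.norm_real, step2]
    refine (norm_sum_le _ _).trans (Finset.sum_le_sum fun k _ => ?_)
    refine (norm_sum_le _ _).trans (Finset.sum_le_sum fun l _ => ?_)
    rw [norm_mul, norm_mul, RCLike.norm_conj]
    refine mul_le_mul_of_nonneg_left ?_ (by positivity)
    exact osc_pair hC hb (hG k) (hG l) hh hB hBh hAB (hs k) (hs l)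
  have step4 := mul_le_mul_of_nonneg_left (step1.trans step3) (by positivity : 0 ≤ 1 / h)
  refine step4.trans (le_of_eq ?_)
  simp only [Finset.mul_sum]
  refine Finset.sum_congr rfl fun k _ => Finset.sum_congr rfl fun l _ => ?_
  field_simp

end

/-! ### A periodized mollifier with rapidly decaying coefficients -/

section

/-- A mollifier `f` at scale `1/R` on the line, its periodization `p`, and the Fourier coefficients
`c` of `p`; the Fourier expansion is Poisson summation for the rescaled bump. -/
lemma moll_one {ε : ℝ} (hε : 0 < ε) (M : ℕ) (hM : 2 ≤ M) : ∃ C : ℝ, 0 < C ∧ ∀ R : ℝ, 1 ≤ R →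
    ∃ (f p : ℝ → ℝ) (c : ℤ → ℂ), Continuous f ∧ (∀ x, 0 ≤ f x) ∧ (∀ x, f x ≠ 0 → |x| < ε / R) ∧
      Integrable f ∧ (∫ x, f x = 1) ∧ (∀ j, ‖c j‖ ≤ C * ((1 + |(j : ℝ)| / R) ^ M)⁻¹) ∧
      (∀ j, c (-j) = (starRingEnd ℂ) (c j)) ∧ c 0 = 1 ∧ (Summable fun j => ‖c j‖) ∧
      (∀ x, HasSum (fun j : ℤ => f (x - j)) (p x)) ∧
      (∀ x, HasSum (fun j : ℤ => c j * ee (j * x)) (p x : ℂ)) := by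
  let b : ContDiffBump (0 : ℝ) := ⟨ε / 2, ε, by linarith, by linarith⟩
  obtain ⟨C, hC, hb⟩ := bump_decay b M
  have hI : 0 < ∫ x, b x := b.integral_pos
  set I := ∫ x, b x with hIdef
  refine ⟨C / I, by positivity, fun R hR => ?_⟩
  have hR0 : 0 < R := by linarith
  let f : ℝ → ℝ := fun x => R / I * b (R * x)
  have hfsupp : ∀ x, f x ≠ 0 → |x| < ε / R := by
    intro x hx
    by_contra hcon
    push Not at hcon
    refine hx ?_
    have : b (R * x) = 0 := b.zero_of_le_dist (by
      change ε ≤ dist (R * x) 0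
      rw [Real.dist_eq, sub_zero, abs_mul, abs_of_pos hR0]
      rw [div_le_iff₀ hR0] at hcon; linarith)
    simp [f, this]
  have hfc : ContDiff ℝ (⊤ : ℕ∞) f := contDiff_const.mul (b.contDiff.comp (contDiff_const.mul contDiff_id))
  have hfcs : HasCompactSupport f :=
    HasCompactSupport.of_support_subset_isCompact (K := Icc (-(ε / R)) (ε / R)) isCompact_Icc
      fun x hx => abs_le.1 (hfsupp x hx).le
  have h1 : HasCompactSupport (fun x : ℝ => (f x : ℂ)) := hfcs.comp_left (g := fun y : ℝ => (y : ℂ)) (by simp)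
  have h2 : ContDiff ℝ (⊤ : ℕ∞) (fun x : ℝ => (f x : ℂ)) := Complex.ofRealCLM.contDiff.comp hfc
  let F : SchwartzMap ℝ ℂ := h1.toSchwartzMap h2
  let c : ℤ → ℂ := fun j => ∫ x, (f x : ℂ) * ee (x * (-j))
  have hcF : ∀ j : ℤ, FourierTransform.fourier F (j : ℝ) = c j := by
    intro j
    rw [SchwartzMap.fourier_coe, Real.fourier_real_eq_integral_exp_smul]
    simp only [c]
    congr 1; ext x
    rw [smul_eq_mul, mul_comm]
    congr 1
    unfold ee; congr 2; push_cast; ring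
  have hc_eq : ∀ j : ℤ, c j = (1 / I : ℝ) * ∫ x, (b x : ℂ) * ee (x * (-j / R)) := by
    intro j
    have e := Measure.integral_comp_mul_left (fun x : ℝ => (b x : ℂ) * ee (x * (-j / R))) R
    have : c j = ∫ x, ((R / I : ℝ) : ℂ) * ((b (R * x) : ℂ) * ee (R * x * (-j / R))) := by
      simp only [c, f]
      congr 1; ext x
      rw [show R * x * (-j / R) = x * (-(j : ℝ)) by field_simp]
      push_cast; ring
    rw [this, integral_const_mul, e, abs_of_pos (by positivity), Complex.real_smul, ← mul_assoc,
      ← Complex.ofReal_mul]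
    congr 2; field_simp
  have hcb : ∀ j, ‖c j‖ ≤ C / I * ((1 + |(j : ℝ)| / R) ^ M)⁻¹ := by
    intro j
    rw [hc_eq, norm_mul, Complex.norm_real, Real.norm_eq_abs, abs_of_pos (by positivity)]
    have := hb (-j / R)
    rw [abs_div, abs_neg, abs_of_pos hR0] at this
    calc _ ≤ 1 / I * (C * ((1 + |(j : ℝ)| / R) ^ M)⁻¹) := by gcongr
      _ = _ := by ring
  have hcs : Summable fun j => ‖c j‖ := by
    have hs := ((Real.summable_one_div_int_add_rpow (1 / 2) 2).2 (by norm_num)).mul_left (C / I * R ^ 2)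
    refine Summable.of_nonneg_of_le (fun j => norm_nonneg _) (fun j => ?_) hs
    refine (hcb j).trans ?_
    rw [mul_assoc]
    refine mul_le_mul_of_nonneg_left ?_ (by positivity)
    have hj : (0 : ℝ) < |(j : ℝ) + 1 / 2| := by
      rw [abs_pos]
      intro h
      have h3 : ((2 * j + 1 : ℤ) : ℝ) = 0 := by push_cast; linarith
      have : (2 * j + 1 : ℤ) = 0 := by exact_mod_cast h3
      omega
    have h3 : |(j : ℝ) + 1 / 2| / R ≤ 1 + |(j : ℝ)| / R := by
      rw [div_le_iff₀ hR0, add_mul, div_mul_cancel₀ _ hR0.ne']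
      have := abs_add_le (j : ℝ) (1 / 2)
      rw [abs_of_pos (by norm_num : (0 : ℝ) < 1 / 2)] at this
      linarith
    have h4 : (1 + |(j : ℝ)| / R) ^ 2 ≤ (1 + |(j : ℝ)| / R) ^ M :=
      pow_le_pow_right₀ (by linarith [div_nonneg (abs_nonneg (j : ℝ)) hR0.le]) hM
    have h5 : (|(j : ℝ) + 1 / 2| / R) ^ 2 ≤ (1 + |(j : ℝ)| / R) ^ 2 := by gcongr
    have h6 : R ^ 2 * (1 / |(j : ℝ) + 1 / 2| ^ (2 : ℝ)) = ((|(j : ℝ) + 1 / 2| / R) ^ 2)⁻¹ := by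
      rw [show (2 : ℝ) = ((2 : ℕ) : ℝ) by norm_num, Real.rpow_natCast]
      push_cast
      rw [div_pow, inv_div]; ring
    rw [h6]
    exact inv_anti₀ (by positivity) (h5.trans h4)
  have hfsum : ∀ x, Summable fun j : ℤ => f (x - j) := by
    intro x
    refine summable_of_hasFiniteSupport ?_
    refine (Set.finite_Icc (⌊x - ε / R⌋) (⌈x + ε / R⌉)).subset fun j hj => ?_
    have := abs_lt.1 (hfsupp _ hj)
    constructor
    · exact Int.floor_le_iff.2 (by linarith)
    · exact Int.le_ceil_iff.2 (by linarith)
  refine ⟨f, fun x => ∑' j : ℤ, f (x - j), c, hfc.continuous, fun x => mul_nonneg (by positivity) b.nonneg,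
    hfsupp, hfc.continuous.integrable_of_hasCompactSupport hfcs, ?_, hcb, ?_, ?_, hcs,
    fun x => (hfsum x).hasSum, ?_⟩
  · have e := Measure.integral_comp_mul_left (fun x : ℝ => b x) R
    simp only [f]
    rw [integral_const_mul, e, abs_of_pos (by positivity), smul_eq_mul, ← hIdef]
    field_simp
  · intro j
    simp only [c]
    rw [← integral_conj]
    congr 1; ext x
    rw [map_mul, Complex.conj_ofReal, ee_conj]
    congr 2; push_cast; ring
  · rw [hc_eq]
    simp only [Int.cast_zero, neg_zero, zero_div, mul_zero, ee_zero, mul_one]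
    rw [integral_complex_ofReal, ← hIdef, ← Complex.ofReal_mul, one_div, inv_mul_cancel₀ hI.ne']
    simp
  · intro x
    have hs : Summable fun j : ℤ => c j * ee (j * x) :=
      Summable.of_norm (by simpa [ee_norm] using hcs)
    have hP := F.tsum_eq_tsum_fourier x
    have e1 : ∑' n : ℤ, F (x + n) = ((∑' j : ℤ, f (x - j) : ℝ) : ℂ) := by
      rw [← (Equiv.neg ℤ).tsum_eq, Complex.ofReal_tsum]
      congr 1; ext j
      change (f _ : ℂ) = _
      simp [sub_eq_add_neg]
    have e2 : ∑' n : ℤ, FourierTransform.fourier F (n : ℝ) * fourier n (x : UnitAddCircle)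
        = ∑' j : ℤ, c j * ee (j * x) := by
      congr 1; ext j
      rw [hcF, fourier_coe_apply]
      congr 1
      unfold ee; congr 1; push_cast; ring
    rw [← e1, hP, e2]
    exact hs.hasSum

lemma norm_ek_sq (m : Fin 2 → ℤ) : ‖ek m‖ ^ 2 = (m 0 : ℝ) ^ 2 + (m 1 : ℝ) ^ 2 := by
  rw [EuclideanSpace.norm_sq_eq]; simp [ek, Fin.sum_univ_two]

lemma inner_ek (y : E2) (m : Fin 2 → ℤ) : ⟪y, ek m⟫ = y 0 * m 0 + y 1 * m 1 := by
  simp [ek, PiLp.inner_apply, Fin.sum_univ_two, mul_comm]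

/-- A mollifier at scale `1/R` in the plane with its periodization `P` and the Fourier coefficients
`c` of `P`. -/
lemma moll_two {ε : ℝ} (hε : 0 < ε) (M : ℕ) (hM : 2 ≤ M) : ∃ C : ℝ, 0 < C ∧ ∀ R : ℝ, 1 ≤ R →
    ∃ (f P : E2 → ℝ) (c : (Fin 2 → ℤ) → ℂ), Continuous f ∧ (∀ x, 0 ≤ f x) ∧
      (∀ x, f x ≠ 0 → ‖x‖ < ε / R) ∧
      Integrable f ∧ (∫ x, f x = 1) ∧ (∀ m, ‖c m‖ ≤ C * ((1 + ‖ek m‖ / R) ^ M)⁻¹) ∧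
      (∀ m, c (-m) = (starRingEnd ℂ) (c m)) ∧ c 0 = 1 ∧ (Summable fun m => ‖c m‖) ∧
      (∀ x, HasSum (fun m => f (x - ek m)) (P x)) ∧
      (∀ x, HasSum (fun m => c m * ee ⟪x, ek m⟫) (P x : ℂ)) := by
  obtain ⟨C, hC, H⟩ := moll_one (half_pos hε) M hM
  refine ⟨C * C, by positivity, fun R hR => ?_⟩
  have hR0 : 0 < R := by linarith
  obtain ⟨f, p, c, hfc, hf0, hfs, hfi, hf1, hcb, hcc, hc0, hcs, hp, hpc⟩ := H R hR
  have mp : MeasurePreserving (fun x : E2 => (x 0, x 1)) volume (volume.prod volume) := by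
    have h1 := (volume_preserving_finTwoArrow ℝ)
    have h2 := EuclideanSpace.volume_preserving_symm_measurableEquiv_toLp (Fin 2)
    exact h1.comp h2
  have me : MeasurableEmbedding (fun x : E2 => (x 0, x 1)) :=
    MeasurableEmbedding.comp (MeasurableEquiv.finTwoArrow (α := ℝ)).measurableEmbedding
      (MeasurableEquiv.toLp 2 (Fin 2 → ℝ)).symm.measurableEmbedding
  refine ⟨fun x => f (x 0) * f (x 1), fun x => p (x 0) * p (x 1), fun m => c (m 0) * c (m 1),
    by fun_prop, fun x => mul_nonneg (hf0 _) (hf0 _), ?_, ?_, ?_, ?_, ?_, by simp [hc0], ?_, ?_, ?_⟩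
  · intro x hx
    have h0 := hfs _ (left_ne_zero_of_mul hx)
    have h1 := hfs _ (right_ne_zero_of_mul hx)
    have h2 : ‖x‖ ^ 2 = (x 0) ^ 2 + (x 1) ^ 2 := by
      rw [EuclideanSpace.norm_sq_eq]; simp [Fin.sum_univ_two]
    rw [← sq_abs (x 0), ← sq_abs (x 1)] at h2
    have h3 : ε / R = 2 * (ε / 2 / R) := by ring
    refine lt_of_pow_lt_pow_left₀ 2 (by positivity) ?_
    rw [h2, h3]
    nlinarith [abs_nonneg (x 0), abs_nonneg (x 1)]
  · exact mp.integrable_comp_of_integrable (g := fun z : ℝ × ℝ => f z.1 * f z.2) (hfi.mul_prod hfi)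
  · have := mp.integral_comp me (fun z : ℝ × ℝ => f z.1 * f z.2)
    rw [this, integral_prod_mul, hf1, one_mul]
  · intro m
    rw [norm_mul]
    calc ‖c (m 0)‖ * ‖c (m 1)‖ ≤ (C * ((1 + |(m 0 : ℝ)| / R) ^ M)⁻¹) * (C * ((1 + |(m 1 : ℝ)| / R) ^ M)⁻¹) := by
          gcongr
          · exact hcb _
          · exact hcb _
      _ = C * C * (((1 + |(m 0 : ℝ)| / R) * (1 + |(m 1 : ℝ)| / R)) ^ M)⁻¹ := by
          rw [mul_pow, mul_inv]; ring
      _ ≤ _ := by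
          gcongr
          have h1 : ‖ek m‖ ≤ |(m 0 : ℝ)| + |(m 1 : ℝ)| := by
            refine le_of_sq_le_sq ?_ (by positivity)
            rw [norm_ek_sq, ← sq_abs (m 0 : ℝ), ← sq_abs (m 1 : ℝ)]
            nlinarith [abs_nonneg (m 0 : ℝ), abs_nonneg (m 1 : ℝ)]
          have h2 : ‖ek m‖ / R ≤ |(m 0 : ℝ)| / R + |(m 1 : ℝ)| / R := by
            rw [← add_div]; gcongr
          have h3 : 0 ≤ |(m 0 : ℝ)| / R * (|(m 1 : ℝ)| / R) := by positivity
          nlinarith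
  · intro m; simp [hcc]
  · have h1 := hcs.mul_of_nonneg hcs (fun _ => norm_nonneg _) (fun _ => norm_nonneg _)
    refine ((finTwoArrowEquiv ℤ).summable_iff.2 h1).congr fun m => ?_
    simp
  · intro x
    have hn : ∀ y, Summable fun j : ℤ => ‖f (y - j)‖ := fun y =>
      (hp y).summable.congr fun j => by rw [Real.norm_eq_abs, abs_of_nonneg (hf0 _)]
    have h1 := (hp (x 0)).mul (hp (x 1)) (summable_mul_of_summable_norm (hn _) (hn _))
    have h2 := (finTwoArrowEquiv ℤ).hasSum_iff.2 h1
    exact h2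
  · intro x
    have hn : ∀ y : ℝ, Summable fun j : ℤ => ‖c j * ee (j * y)‖ := fun y => by
      simpa [ee_norm] using hcs
    have h0 : Summable fun z : ℤ × ℤ => (c z.1 * ee (z.1 * x 0)) * (c z.2 * ee (z.2 * x 1)) :=
      summable_mul_of_summable_norm (f := fun j : ℤ => c j * ee (j * x 0))
        (g := fun j : ℤ => c j * ee (j * x 1)) (hn (x 0)) (hn (x 1))
    have h1 := (hpc (x 0)).mul (hpc (x 1)) h0
    have h2 := (finTwoArrowEquiv ℤ).hasSum_iff.2 h1
    rw [Complex.ofReal_mul]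
    refine HasSum.congr_fun h2 ?_
    intro m
    change _ = (c (m 0) * ee (m 0 * x 0)) * (c (m 1) * ee (m 1 * x 1))
    rw [inner_ek, ee_add, mul_comm (x 0), mul_comm (x 1)]
    ring

end

/-! ### Smoothed lattice point counts -/

section

/-- The Fourier integral of the indicator of `Ω` at `t m`. -/
def Xf (Ω : Set E2) (m : Fin 2 → ℤ) (t : ℝ) : ℂ := ∫ y in Ω, ee (t * ⟪y, ek m⟫)

lemma abs_coord_le_ek (m : Fin 2 → ℤ) (i : Fin 2) : |(m i : ℝ)| ≤ ‖ek m‖ := by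
  refine abs_le_of_sq_le_sq ?_ (norm_nonneg _)
  rw [norm_ek_sq]
  fin_cases i
  · simp only [Fin.zero_eta]; nlinarith [sq_nonneg (m 1 : ℝ)]
  · simp only [Fin.mk_one]; nlinarith [sq_nonneg (m 0 : ℝ)]

lemma finite_ek (B : ℝ) : {k : Fin 2 → ℤ | ‖ek k‖ ≤ B}.Finite := by
  refine (Set.Finite.pi (fun _ : Fin 2 => Set.finite_Icc (-⌈B⌉) ⌈B⌉)).subset fun k hk => ?_
  intro i _
  have h1 := (abs_coord_le_ek k i).trans hk
  have h2 := abs_le.1 (h1.trans (Int.le_ceil B))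
  constructor
  · exact_mod_cast h2.1
  · exact_mod_cast h2.2

/-- Since `Ω` contains the ball of radius `r₁`, convexity gives `sΩ + B(0, r₁δ) ⊆ (s + δ)Ω`. -/
lemma smul_add_mem {r₁ r₂ : ℝ} {Ω : Set E2} (hD : Dom r₁ r₂ Ω) {s δ : ℝ} (hs : 0 ≤ s) (hδ : 0 < δ)
    {y z : E2} (hy : y ∈ s • Ω) (hz : ‖z‖ < r₁ * δ) : y + z ∈ (s + δ) • Ω := by
  rw [hD.conv.add_smul hs hδ.le]
  refine add_mem_add hy ⟨δ⁻¹ • z, hD.inner ?_, by simp [smul_smul, hδ.ne']⟩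
  rw [mem_ball_zero_iff, norm_smul, norm_inv, Real.norm_eq_abs, abs_of_pos hδ,
    inv_mul_lt_iff₀ hδ, mul_comm]
  exact hz

section
variable {r₁ r₂ : ℝ} {Ω : Set E2} {f P : E2 → ℝ} {c : (Fin 2 → ℤ) → ℂ}

lemma P_continuous (hcs : Summable fun m => ‖c m‖)
    (hPc : ∀ x, HasSum (fun m => c m * ee ⟪x, ek m⟫) (P x : ℂ)) : Continuous P := by
  have h1 : Continuous fun x : E2 => ∑' m, c m * ee ⟪x, ek m⟫ :=
    continuous_tsum (fun m => continuous_const.mul (ee_continuous.comp (by fun_prop))) hcs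
      (fun m x => by simp [ee_norm])
  have h2 : P = fun x => (∑' m, c m * ee ⟪x, ek m⟫).re := by
    ext x; rw [(hPc x).tsum_eq, Complex.ofReal_re]
  rw [h2]
  exact Complex.continuous_re.comp h1

lemma vol_lt (hD : Dom r₁ r₂ Ω) : volume Ω < ⊤ :=
  (measure_mono hD.outer).trans_lt (measure_closedBall_lt_top)

lemma bdd_smul (hD : Dom r₁ r₂ Ω) (s : ℝ) : s • Ω ⊆ Metric.closedBall 0 (|s| * r₂) := by
  rintro _ ⟨y, hy, rfl⟩
  have := mem_closedBall_zero_iff.1 (hD.outer hy)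
  rw [mem_closedBall_zero_iff]
  simp only [norm_smul, Real.norm_eq_abs]
  gcongr

/-- Termwise integration of the Fourier series of the periodized mollifier over `sΩ`. -/
lemma smooth_count_hasSum (hD : Dom r₁ r₂ Ω) (hcs : Summable fun m => ‖c m‖) (hc0 : c 0 = 1)
    (hPc : ∀ x, HasSum (fun m => c m * ee ⟪x, ek m⟫) (P x : ℂ)) {s : ℝ} (hs : 0 < s) :
    HasSum (fun m => if m = 0 then 0 else c m * ((s : ℂ) ^ 2 * Xf Ω m s))
      (((∫ y in s • Ω, P y) - s ^ 2 * (volume Ω).toReal : ℝ) : ℂ) := by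
  have hfin : volume (s • Ω) < ⊤ := (measure_mono (bdd_smul hD s)).trans_lt measure_closedBall_lt_top
  have hμ : IsFiniteMeasure (volume.restrict (s • Ω)) := ⟨by simpa using hfin⟩
  have key := hasSum_integral_of_summable_integral_norm (μ := volume.restrict (s • Ω))
    (F := fun m (y : E2) => c m * ee ⟪y, ek m⟫) ?_ ?_
  · have e1 : ∫ y in s • Ω, (∑' m, c m * ee ⟪y, ek m⟫) = ((∫ y in s • Ω, P y : ℝ) : ℂ) := by
      rw [← integral_complex_ofReal]
      congr 1; ext y; exact (hPc y).tsum_eq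
    have e2 : ∀ m, ∫ y in s • Ω, c m * ee ⟪y, ek m⟫ = c m * ((s : ℂ) ^ 2 * Xf Ω m s) := by
      intro m
      rw [integral_const_mul]
      congr 1
      have := Measure.setIntegral_comp_smul_of_pos volume (fun y : E2 => ee ⟪y, ek m⟫) Ω hs
      simp only [inner_smul_left, finrank_euclideanSpace, Fintype.card_fin] at this
      rw [Xf]
      simp only [conj_trivial] at this
      rw [this, Complex.real_smul, ← mul_assoc]
      push_cast
      rw [mul_inv_cancel₀ (by exact_mod_cast (pow_pos hs 2).ne'), one_mul]
    rw [e1] at key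
    simp_rw [e2] at key
    have h0 : c 0 * ((s : ℂ) ^ 2 * Xf Ω 0 s) = ((s ^ 2 * (volume Ω).toReal : ℝ) : ℂ) := by
      have : ek 0 = 0 := by ext i; simp [ek]
      simp [hc0, Xf, this, ee_zero, Measure.real]
    have h3 := (hasSum_ite_eq (0 : Fin 2 → ℤ) (((s ^ 2 * (volume Ω).toReal : ℝ) : ℂ)))
    have h4 := key.sub h3
    rw [Complex.ofReal_sub]
    refine h4.congr_fun fun m => ?_
    by_cases hm : m = 0
    · subst hm; simp [h0]
    · simp [hm]
  · intro m
    refine Integrable.const_mul ?_ _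
    refine Integrable.of_bound (C := 1) (ee_continuous.comp (by fun_prop)).aestronglyMeasurable
      (Filter.Eventually.of_forall fun y => (ee_norm _).le)
  · simp only [norm_mul, ee_norm, mul_one, integral_const, smul_eq_mul]
    exact hcs.mul_left _

/-- Smoothing at scale `r₁/(4R)` moves points of `sΩ` at most into `(s + 1/(4R))Ω`, so the number of
lattice points in `tΩ` lies between the smoothed counts of `(t ± 1/(4R))Ω`. -/
lemma count_sandwich (hD : Dom r₁ r₂ Ω) {R : ℝ} (hR : 0 < R)
    (hf0 : ∀ x, 0 ≤ f x) (hfs : ∀ x, f x ≠ 0 → ‖x‖ < r₁ / 4 / R) (hfi : Integrable f)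
    (hf1 : ∫ x, f x = 1) (hcs : Summable fun m => ‖c m‖)
    (hP : ∀ x, HasSum (fun m => f (x - ek m)) (P x))
    (hPc : ∀ x, HasSum (fun m => c m * ee ⟪x, ek m⟫) (P x : ℂ)) {t : ℝ} (ht : 1 / (4 * R) ≤ t) :
    (∫ y in (t - 1 / (4 * R)) • Ω, P y) ≤ latticeCount (t • Ω) ∧
      (latticeCount (t • Ω) : ℝ) ≤ ∫ y in (t + 1 / (4 * R)) • Ω, P y := by
  have hδ : 0 < 1 / (4 * R) := by positivity
  have hδ' : r₁ / 4 / R = r₁ * (1 / (4 * R)) := by field_simp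
  have hPcont := P_continuous hcs hPc
  have hms : ∀ s : ℝ, MeasurableSet (s • Ω) := fun s => hD.opn.measurableSet.const_smul₀ s
  have hPi : ∀ s : ℝ, IntegrableOn P (s • Ω) := fun s =>
    (hPcont.continuousOn.integrableOn_compact (isCompact_closedBall (0 : E2) _)).mono_set (bdd_smul hD s)
  have hKf : {k : Fin 2 → ℤ | ek k ∈ t • Ω}.Finite :=
    (finite_ek (|t| * r₂)).subset fun k hk => mem_closedBall_zero_iff.1 (bdd_smul hD t hk)
  let K := hKf.toFinset
  have hN : (latticeCount (t • Ω) : ℝ) = ∑ k ∈ K, (1 : ℝ) := by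
    rw [latticeCount, Nat.card_coe_set_eq, Set.ncard_eq_toFinset_card _ hKf]; simp [K]
  have hInt : ∀ k, ∫ y, f (y - ek k) = 1 := fun k => by
    rw [integral_sub_right_eq_self, hf1]
  have hfk : ∀ k, Integrable fun y => f (y - ek k) := fun k => hfi.comp_sub_right _
  constructor
  · have h1 : ∀ y ∈ (t - 1 / (4 * R)) • Ω, P y = ∑ k ∈ K, f (y - ek k) := by
      intro y hy
      refine (hP y).unique (hasSum_sum_of_ne_finset_zero fun k hk => ?_)
      by_contra hne
      refine hk ?_
      simp only [K, Set.Finite.mem_toFinset, mem_ofPred_eq]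
      have h2 := smul_add_mem hD (by linarith) hδ hy (z := ek k - y)
        (by rw [norm_sub_rev, ← hδ']; exact hfs _ hne)
      simpa using h2
    rw [setIntegral_congr_fun (hms _) h1, hN, integral_finsetSum _ fun k _ => (hfk k).integrableOn]
    refine Finset.sum_le_sum fun k _ => ?_
    refine le_of_le_of_eq ?_ (hInt k)
    exact setIntegral_le_integral (hfk k) (Filter.Eventually.of_forall fun y => hf0 _)
  · have h1 : (latticeCount (t • Ω) : ℝ) = ∫ y in (t + 1 / (4 * R)) • Ω, ∑ k ∈ K, f (y - ek k) := by
      rw [hN, integral_finsetSum _ fun k _ => (hfk k).integrableOn]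
      refine Finset.sum_congr rfl fun k hk => ?_
      refine (hInt k).symm.trans ?_
      refine (setIntegral_eq_integral_of_forall_compl_eq_zero fun y hy => ?_).symm
      by_contra hne
      refine hy ?_
      simp only [K, Set.Finite.mem_toFinset, mem_ofPred_eq] at hk
      have h2 := smul_add_mem hD (by linarith) hδ hk (z := y - ek k)
        (by rw [← hδ']; exact hfs _ hne)
      simpa using h2
    rw [h1]
    refine setIntegral_mono_on (integrable_finsetSum _ fun k _ => (hfk k).integrableOn) (hPi _) (hms _)
      fun y _ => ?_
    exact sum_le_hasSum _ (fun k _ => hf0 _) (hP y)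

end

end

/-! ### Zones of the slice length function -/

section

/-- The direction `m/|m|`. -/
def dir (m : Fin 2 → ℤ) : E2 := (‖ek m‖)⁻¹ • ek m

lemma ek_neg (m : Fin 2 → ℤ) : ek (-m) = -ek m := by ext i; simp [ek]

lemma norm_ek_neg (m : Fin 2 → ℤ) : ‖ek (-m)‖ = ‖ek m‖ := by rw [ek_neg, norm_neg]

lemma dir_neg (m : Fin 2 → ℤ) : dir (-m) = -dir m := by rw [dir, norm_ek_neg, ek_neg, smul_neg, dir]

lemma one_le_norm_ek {m : Fin 2 → ℤ} (hm : m ≠ 0) : 1 ≤ ‖ek m‖ := by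
  obtain ⟨i, hi⟩ := Function.ne_iff.1 hm
  refine le_trans ?_ (abs_coord_le_ek m i)
  have : (1 : ℤ) ≤ |m i| := Int.one_le_abs hi
  exact_mod_cast this

lemma norm_dir {m : Fin 2 → ℤ} (hm : m ≠ 0) : ‖dir m‖ = 1 := by
  have := one_le_norm_ek hm
  rw [dir, norm_smul, norm_inv, norm_norm, inv_mul_cancel₀ (by linarith)]

lemma smul_dir {m : Fin 2 → ℤ} (hm : m ≠ 0) : ‖ek m‖ • dir m = ek m := by
  have := one_le_norm_ek hm
  rw [dir, smul_smul, mul_inv_cancel₀ (by linarith), one_smul]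

/-- The second difference, at a step proportional to `1/(|m|R)`, of the slice lengths of `Ω`
orthogonal to `m`. -/
def gfun (r₁ R : ℝ) (Ω : Set E2) (m : Fin 2 → ℤ) : ℝ → ℝ :=
  d2 (sliceLen Ω (dir m)) (r₁ / 8 * (1 / (‖ek m‖ * R)))

/-- The part of `gfun` in the `n`-th dyadic zone below the support line in direction `m`. -/
def gz (r₁ R : ℝ) (Ω : Set E2) (m : Fin 2 → ℤ) (n : ℕ) : ℝ → ℝ :=
  {s | suppFn Ω (dir m) - s ∈ zone (r₁ / 2) (1 / (‖ek m‖ * R)) n}.indicator (gfun r₁ R Ω m)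

/-- The part of `gfun` at depth at least `r₁/2` from both support lines. -/
def gmid (r₁ R : ℝ) (Ω : Set E2) (m : Fin 2 → ℤ) : ℝ → ℝ :=
  {s | suppFn Ω (dir m) - s ∈
    Icc (r₁ / 2) (suppFn Ω (dir m) + suppFn Ω (-dir m) - r₁ / 2)}.indicator (gfun r₁ R Ω m)

section
variable {r₁ r₂ R : ℝ} {Ω : Set E2} {m : Fin 2 → ℤ}

/-- The Fourier transform of `Ω` at `tm` is a one-dimensional oscillatory integral of the slice
lengths orthogonal to `m`. -/
lemma Xf_eq (hD : Dom r₁ r₂ Ω) (hm : m ≠ 0) (t : ℝ) :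
    Xf Ω m t = osc (sliceLen Ω (dir m)) ‖ek m‖ t := by
  have h := integral_slice hD (norm_dir hm) (fun s => ee (t * (‖ek m‖ * s)))
    (ee_continuous.comp (by fun_prop)) (fun s => (ee_norm _).le)
  rw [osc, ← h, Xf]
  congr 1; ext y
  congr 2
  rw [← inner_smul_right, smul_dir hm]

lemma osc_add {G G' : ℝ → ℝ} (hG : Integrable G) (hG' : Integrable G') (κ t : ℝ) :
    osc (G + G') κ t = osc G κ t + osc G' κ t := by
  simp only [osc]
  rw [← integral_add (osc_integrable hG κ t) (osc_integrable hG' κ t)]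
  congr 1; ext s
  simp only [Pi.add_apply]; push_cast; ring

/-- Taking second differences of the amplitude multiplies an oscillatory integral by
`2 cos - 2`. -/
lemma osc_d2 {A : ℝ → ℝ} (hA : Integrable A) (τ κ t : ℝ) :
    osc (d2 A τ) κ t = ((2 * Real.cos (2 * Real.pi * (t * (κ * τ))) - 2 : ℝ) : ℂ) * osc A κ t := by
  have sh : ∀ y : ℝ, ∫ s, (A (s + y) : ℂ) * ee (t * (κ * s)) = ee (-(t * (κ * y))) * osc A κ t := by
    intro y
    have h1 := integral_add_right_eq_self (μ := volume) (fun s : ℝ => (A s : ℂ) * ee (t * (κ * (s - y)))) y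
    simp only [add_sub_cancel_right] at h1
    rw [h1, osc, ← integral_const_mul]
    congr 1; ext s
    rw [show t * (κ * (s - y)) = -(t * (κ * y)) + t * (κ * s) by ring, ee_add]; ring
  have hi : ∀ y : ℝ, Integrable fun s => (A (s + y) : ℂ) * ee (t * (κ * s)) := fun y =>
    osc_integrable (hA.comp_add_right y) κ t
  have e0 : osc (d2 A τ) κ t = ∫ s, ((A (s + τ) : ℂ) * ee (t * (κ * s))
      - 2 * ((A (s + 0) : ℂ) * ee (t * (κ * s))) + (A (s + (-τ)) : ℂ) * ee (t * (κ * s))) := by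
    rw [osc]; congr 1; ext s
    simp only [d2, add_zero, ← sub_eq_add_neg]; push_cast; ring
  have hi2 : Integrable fun s => (A (s + τ) : ℂ) * ee (t * (κ * s))
      - 2 * ((A (s + 0) : ℂ) * ee (t * (κ * s))) := (hi τ).sub ((hi 0).const_mul 2)
  rw [e0, integral_add hi2 (hi (-τ)),
    integral_sub (hi τ) ((hi 0).const_mul 2), integral_const_mul, sh, sh, sh]
  simp only [mul_zero, neg_zero, ee_zero, one_mul]
  have hcos : ee (-(t * (κ * τ))) + ee (-(t * (κ * -τ)))
      = ((2 * Real.cos (2 * Real.pi * (t * (κ * τ))) : ℝ) : ℂ) := by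
    push_cast
    rw [Complex.two_cos, ee, ee, add_comm]
    congr 2 <;> push_cast <;> ring
  rw [Complex.ofReal_sub, ← hcos]
  push_cast; ring

/-- The slice lengths, as a function of the depth below the support line, form a concave profile
dominated by the cap diameters. -/
lemma profile (hD : Dom r₁ r₂ Ω) {θ : E2} (hθ : ‖θ‖ = 1) :
    Profile (fun u => sliceLen Ω θ (suppFn Ω θ - u)) (capDiam Ω θ) (suppFn Ω θ + suppFn Ω (-θ)) where
  nonneg u := sliceLen_nonneg _
  conc := by
    have h := sliceLen_concave hD hθ
    refine ⟨convex_Ioo _ _, fun x hx y hy p q hp hq hpq => ?_⟩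
    have h2 := h.2 (x := suppFn Ω θ - x) (y := suppFn Ω θ - y)
      ((slice_nonempty_iff hD hθ).2 ⟨by linarith [hx.2], by linarith [hx.1]⟩)
      ((slice_nonempty_iff hD hθ).2 ⟨by linarith [hy.2], by linarith [hy.1]⟩) hp hq hpq
    simp only [smul_eq_mul] at h2 ⊢
    have e : p * (suppFn Ω θ - x) + q * (suppFn Ω θ - y) = suppFn Ω θ - (p * x + q * y) := by
      linear_combination suppFn Ω θ * hpq
    rw [e] at h2
    exact h2
  zero u hu := sliceLen_eq_zero fun hne => hu (by
    have := (slice_nonempty_iff hD hθ).1 hne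
    exact ⟨by linarith [this.2], by linarith [this.1]⟩)
  integrable := (sliceLen_integrable hD hθ).comp_sub_left _
  mono := capDiam_mono hD
  le u := sliceLen_le_capDiam hD hθ u

lemma gfun_eq (u : ℝ) : gfun r₁ R Ω m (suppFn Ω (dir m) - u)
    = d2 (fun u => sliceLen Ω (dir m) (suppFn Ω (dir m) - u)) (r₁ / 8 * (1 / (‖ek m‖ * R))) u := by
  simp only [gfun, d2]
  rw [show suppFn Ω (dir m) - u + r₁ / 8 * (1 / (‖ek m‖ * R))
      = suppFn Ω (dir m) - (u - r₁ / 8 * (1 / (‖ek m‖ * R))) by ring,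
    show suppFn Ω (dir m) - u - r₁ / 8 * (1 / (‖ek m‖ * R))
      = suppFn Ω (dir m) - (u + r₁ / 8 * (1 / (‖ek m‖ * R))) by ring]
  ring

lemma gfun_integrable (hD : Dom r₁ r₂ Ω) (hm : m ≠ 0) : Integrable (gfun r₁ R Ω m) :=
  d2_integrable (sliceLen_integrable hD (norm_dir hm)) _

/-- The `L¹` norm of a part of `gfun`, in terms of the depth `u = ρ*(m/|m|) - s`. -/
lemma gpart_integral {Z : Set ℝ} (hZ : MeasurableSet Z) :
    ∫ s, |{s | suppFn Ω (dir m) - s ∈ Z}.indicator (gfun r₁ R Ω m) s|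
      = ∫ u in Z, |d2 (fun u => sliceLen Ω (dir m) (suppFn Ω (dir m) - u))
          (r₁ / 8 * (1 / (‖ek m‖ * R))) u| := by
  rw [← integral_indicator hZ, ← integral_sub_left_eq_self _ volume (suppFn Ω (dir m))]
  congr 1; ext u
  by_cases hu : u ∈ Z
  · rw [indicator_of_mem (by simpa using hu), indicator_of_mem hu, gfun_eq]
  · rw [indicator_of_notMem (by simpa using hu), indicator_of_notMem hu, abs_zero]

lemma gpart_integrable (hD : Dom r₁ r₂ Ω) (hm : m ≠ 0) {Z : Set ℝ} (hZ : MeasurableSet Z) :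
    Integrable ({s | suppFn Ω (dir m) - s ∈ Z}.indicator (gfun r₁ R Ω m)) :=
  (gfun_integrable hD hm).indicator ((measurable_const.sub measurable_id) hZ)

lemma gz_integrable (hD : Dom r₁ r₂ Ω) (hm : m ≠ 0) (n : ℕ) : Integrable (gz r₁ R Ω m n) :=
  gpart_integrable hD hm (zone_measurable _ _ _)

/-- The inequalities between the depth unit `1/(|m|R)`, the step of the second difference, `r₁/2` and
the width of `Ω` which the profile estimates require. -/
lemma delta_facts (hD : Dom r₁ r₂ Ω) (hm : m ≠ 0) (hR : 2 ≤ R) :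
    0 < 1 / (‖ek m‖ * R) ∧ 1 / (‖ek m‖ * R) ≤ 1 / 2 ∧ 0 < r₁ / 8 * (1 / (‖ek m‖ * R)) ∧
    r₁ / 8 * (1 / (‖ek m‖ * R)) ≤ 1 / (‖ek m‖ * R) / 4 ∧
    r₁ / 8 * (1 / (‖ek m‖ * R)) ≤ r₁ / 2 / 2 ∧
    4 * (r₁ / 2) ≤ suppFn Ω (dir m) + suppFn Ω (-dir m) := by
  have h1 := one_le_norm_ek hm
  have h0 : 0 < 1 / (‖ek m‖ * R) := by positivity
  have h2 : 1 / (‖ek m‖ * R) ≤ 1 / 2 := by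
    apply one_div_le_one_div_of_le (by norm_num); nlinarith
  have hp := hD.pos
  have hl := hD.lt
  have b1 := r₁_le_suppFn hD (norm_dir hm)
  have b2 := r₁_le_suppFn (θ := -dir m) hD (by rw [norm_neg]; exact norm_dir hm)
  refine ⟨h0, h2, by positivity, by nlinarith, by nlinarith, by linarith⟩

lemma gz_bound (hD : Dom r₁ r₂ Ω) (hm : m ≠ 0) (hR : 2 ≤ R) (n : ℕ) :
    ∫ s, |gz r₁ R Ω m n s| ≤ 36 * (1 / (‖ek m‖ * R) / 2 ^ n) *
      capDiam Ω (dir m) (2 ^ n / (‖ek m‖ * R)) := by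
  obtain ⟨d0, d1, d2, d3, d4, d5⟩ := delta_facts hD hm hR
  rw [gz, gpart_integral (zone_measurable _ _ _)]
  have := (profile hD (norm_dir hm)).zone_bound d0 d2 d3 d4 d5 n
  rwa [mul_one_div ((2 : ℝ) ^ n)] at this

/-- Zones of depth at least `1` are empty. -/
lemma gz_zero (hD : Dom r₁ r₂ Ω) (hm : m ≠ 0) (hR : 2 ≤ R) {n : ℕ} (hn : ¬ (2 : ℝ) ^ n / R < ‖ek m‖) :
    gz r₁ R Ω m n = 0 := by
  have h1 := one_le_norm_ek hm
  ext s
  refine indicator_of_notMem ?_ _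
  rintro ⟨u1, u2, u3⟩
  push Not at hn
  rw [le_div_iff₀ (by linarith)] at hn
  rcases u3 with rfl | u3
  · rw [pow_zero] at hn; nlinarith
  · have : 1 ≤ 2 ^ n * (1 / (‖ek m‖ * R)) := by
      rw [mul_one_div, le_div_iff₀ (by positivity)]; linarith
    linarith [hD.lt]

/-- On the `n`-th zone the phase `|m|s` is within `2ⁿ⁺¹/R` of `ρ*(m)`. Above the support line the zone
reaches only as far as one step of the second difference. -/
lemma gz_supp (hD : Dom r₁ r₂ Ω) (hm : m ≠ 0) (hR : 2 ≤ R) {n : ℕ} {s : ℝ}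
    (hs : gz r₁ R Ω m n s ≠ 0) : |‖ek m‖ * s - suppFn Ω (ek m)| ≤ 2 * 2 ^ n / R := by
  obtain ⟨d0, d1, d2, d3, d4, d5⟩ := delta_facts hD hm hR
  have h1 := one_le_norm_ek hm
  have hmem : suppFn Ω (dir m) - s ∈ zone (r₁ / 2) (1 / (‖ek m‖ * R)) n := by
    by_contra hc
    exact hs (by rw [gz, indicator_of_notMem (by exact hc)])
  have hne : gfun r₁ R Ω m s ≠ 0 := by
    intro h0
    exact hs (by rw [gz, indicator_of_mem (by exact hmem), h0])
  obtain ⟨u1, u2, u3⟩ := hmem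
  have e : suppFn Ω (ek m) = ‖ek m‖ * suppFn Ω (dir m) := by
    rw [← suppFn_smul (norm_nonneg _), smul_dir hm]
  have hlow : -(r₁ / 8 * (1 / (‖ek m‖ * R))) ≤ suppFn Ω (dir m) - s := by
    by_contra hc
    push Not at hc
    refine hne ?_
    have := gfun_eq (r₁ := r₁) (R := R) (Ω := Ω) (m := m) (suppFn Ω (dir m) - s)
    rw [sub_sub_cancel] at this
    rw [this]
    exact (profile hD (norm_dir hm)).d2_zero d2 hc.le
  have h2n : (1 : ℝ) ≤ 2 ^ n := one_le_pow₀ (by norm_num)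
  have hX : |s - suppFn Ω (dir m)| ≤ 2 ^ (n + 1) * (1 / (‖ek m‖ * R)) := by
    rw [abs_le]
    rw [pow_succ] at *
    constructor <;> nlinarith
  rw [e, ← mul_sub, abs_mul, abs_of_nonneg (norm_nonneg _)]
  calc ‖ek m‖ * |s - suppFn Ω (dir m)| ≤ ‖ek m‖ * (2 ^ (n + 1) * (1 / (‖ek m‖ * R))) := by gcongr
    _ = 2 * 2 ^ n / R := by field_simp; ring

lemma gmid_bound (hD : Dom r₁ r₂ Ω) (hm : m ≠ 0) (hR : 2 ≤ R) :
    ∫ s, |gmid r₁ R Ω m s| ≤ r₂ * (1 / (‖ek m‖ * R)) ^ 2 := by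
  obtain ⟨d0, d1, d2, d3, d4, d5⟩ := delta_facts hD hm hR
  rw [gmid, gpart_integral measurableSet_Icc]
  refine ((profile hD (norm_dir hm)).mid_bound d2 d4 d5 (V := 2 * r₂)
    (fun u => sliceLen_le hD (norm_dir hm) _)).trans ?_
  have hp := hD.pos
  have hl := hD.lt
  have h2 := hD.one_lt
  have : 4 * (r₁ / 8 * (1 / (‖ek m‖ * R))) ^ 2 * (2 * r₂) / (r₁ / 2)
      = r₁ / 4 * (r₂ * (1 / (‖ek m‖ * R)) ^ 2) := by field_simp; ring
  rw [this]
  have h3 : 0 ≤ r₂ * (1 / (‖ek m‖ * R)) ^ 2 := by positivity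
  nlinarith

/-- The full oscillatory integral splits into the zones near the two support lines and the middle
part; the zones near the lower support line are the zones of `-m`. -/
lemma osc_split (hD : Dom r₁ r₂ Ω) (hm : m ≠ 0) (hR : 2 ≤ R) (hmR : ‖ek m‖ ≤ R ^ 2) {K : ℕ}
    (hK : R ^ 3 ≤ 2 ^ (K + 1)) (t : ℝ) :
    osc (gfun r₁ R Ω m) ‖ek m‖ t = (∑ n ∈ Finset.range (K + 1), osc (gz r₁ R Ω m n) ‖ek m‖ t)
      + osc (gmid r₁ R Ω m) ‖ek m‖ t
      + (starRingEnd ℂ) (∑ n ∈ Finset.range (K + 1), osc (gz r₁ R Ω (-m) n) ‖ek m‖ t) := by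
  -- the sum of the zones is the region of depth `< r₁/2`
  have top : ∀ m' : Fin 2 → ℤ, m' ≠ 0 → ‖ek m'‖ = ‖ek m‖ →
      ∑ n ∈ Finset.range (K + 1), osc (gz r₁ R Ω m' n) ‖ek m‖ t
      = osc ({s | suppFn Ω (dir m') - s ∈ Iio (r₁ / 2)}.indicator (gfun r₁ R Ω m')) ‖ek m‖ t := by
    intro m' hm' hmm
    obtain ⟨d0, -, -, -, -, -⟩ := delta_facts hD hm' hR
    simp only [osc]
    rw [← integral_finsetSum _ fun n _ => osc_integrable (gz_integrable hD hm' n) _ _]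
    congr 1; ext s
    rw [← Finset.sum_mul, ← Complex.ofReal_sum]
    congr 2
    have e1 : ∀ n, gz r₁ R Ω m' n s = (zone (r₁ / 2) (1 / (‖ek m'‖ * R)) n).indicator (fun _ => (1 : ℝ))
        (suppFn Ω (dir m') - s) * gfun r₁ R Ω m' s := by
      intro n
      rw [gz]
      by_cases hs : suppFn Ω (dir m') - s ∈ zone (r₁ / 2) (1 / (‖ek m'‖ * R)) n
      · simp only [indicator, mem_ofPred_eq, if_pos hs, one_mul]
      · simp only [indicator, mem_ofPred_eq, if_neg hs, zero_mul]
    rw [Finset.sum_congr rfl fun n _ => e1 n, ← Finset.sum_mul, zone_sum _ _ d0]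
    have hbig : r₁ / 2 ≤ 2 ^ (K + 1) * (1 / (‖ek m'‖ * R)) := by
      have h1 := one_le_norm_ek hm'
      rw [mul_one_div, le_div_iff₀ (by positivity), hmm]
      have hp := hD.pos
      have hl := hD.lt
      have : ‖ek m‖ * R ≤ R ^ 2 * R := by gcongr
      have h3 : 0 ≤ ‖ek m‖ * R := by positivity
      nlinarith
    by_cases hs : suppFn Ω (dir m') - s < r₁ / 2
    · simp only [indicator, mem_ofPred_eq, mem_Iio, if_pos hs, if_pos (And.intro hs (hs.trans_le hbig)), one_mul]
    · simp only [indicator, mem_ofPred_eq, mem_Iio, if_neg hs, if_neg (fun h : _ ∧ _ => hs h.1), zero_mul]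
  have hm' : -m ≠ 0 := neg_ne_zero.2 hm
  rw [top m hm rfl, top (-m) hm' (norm_ek_neg m)]
  -- the lower part, written as a conjugate
  have bot : (starRingEnd ℂ) (osc ({s | suppFn Ω (dir (-m)) - s ∈ Iio (r₁ / 2)}.indicator
      (gfun r₁ R Ω (-m))) ‖ek m‖ t) = osc ({s | suppFn Ω (dir m) - s ∈
        Ioi (suppFn Ω (dir m) + suppFn Ω (-dir m) - r₁ / 2)}.indicator (gfun r₁ R Ω m)) ‖ek m‖ t := by
    simp only [osc]
    rw [← integral_conj, ← integral_neg_eq_self]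
    congr 1; ext s
    rw [map_mul, Complex.conj_ofReal, ee_conj, show -(t * (‖ek m‖ * -s)) = t * (‖ek m‖ * s) by ring]
    congr 2
    have eg : gfun r₁ R Ω (-m) (-s) = gfun r₁ R Ω m s := by
      simp only [gfun, d2, dir_neg, norm_ek_neg, sliceLen_neg]
      rw [neg_neg, neg_add, neg_sub, neg_neg, sub_neg_eq_add, ← sub_eq_add_neg, add_comm _ s]
      ring
    by_cases hs : suppFn Ω (-dir m) + s < r₁ / 2
    · rw [indicator_of_mem (by
        simp only [mem_ofPred_eq, mem_Iio, dir_neg, sub_neg_eq_add]; exact hs), indicator_of_mem (by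
        simp only [mem_ofPred_eq, mem_Ioi]; linarith), eg]
    · rw [indicator_of_notMem (by
        simp only [mem_ofPred_eq, mem_Iio, dir_neg, sub_neg_eq_add]; exact hs), indicator_of_notMem (by
        simp only [mem_ofPred_eq, mem_Ioi]; linarith)]
  rw [bot, gmid]
  obtain ⟨d0, d1, d2, d3, d4, d5⟩ := delta_facts hD hm hR
  have hp := hD.pos
  rw [← osc_add (gpart_integrable hD hm measurableSet_Iio) (gpart_integrable hD hm measurableSet_Icc),
    ← osc_add ((gpart_integrable hD hm measurableSet_Iio).add
      (gpart_integrable hD hm measurableSet_Icc)) (gpart_integrable hD hm measurableSet_Ioi)]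
  congr 1; ext s
  simp only [Pi.add_apply, indicator, mem_ofPred_eq, mem_Iio, mem_Icc, mem_Ioi]
  split_ifs <;> first | (exfalso; grind) | simp
end

end

/-! ### Lattice sums and convergence of Γ -/

section

lemma ek_zero : ek 0 = 0 := by ext i; simp [ek]

lemma summable_ek {s : ℝ} (hs : 2 < s) : Summable fun m : Fin 2 → ℤ => ‖ek m‖ ^ (-s) := by
  have h := EisensteinSeries.summable_one_div_norm_rpow hs
  refine Summable.of_nonneg_of_le (fun m => by positivity) (fun m => ?_) h
  by_cases hm : m = 0
  · subst hm
    rw [ek_zero, norm_zero, Real.zero_rpow (by linarith)]; positivity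
  have h0 : 0 < ‖m‖ := norm_pos_iff.2 hm
  refine Real.rpow_le_rpow_of_nonpos h0 ?_ (by linarith)
  refine (pi_norm_le_iff_of_nonneg (norm_nonneg _)).2 fun i => ?_
  rw [Int.norm_eq_abs]
  exact abs_coord_le_ek m i

/-- At most `O(j)` integer points have maximum norm `j`, so `∑ |m|⁻²` over `0 < |m| ≤ R²` is
bounded by a harmonic sum up to `R²`. -/
lemma log_sum : ∃ C : ℝ, 0 < C ∧ ∀ R : ℝ, 2 ≤ R → ∀ K : Finset (Fin 2 → ℤ),
    (∀ m ∈ K, m ≠ 0 ∧ ‖ek m‖ ≤ R ^ 2) → ∑ m ∈ K, (‖ek m‖ ^ 2)⁻¹ ≤ C * Real.log R := by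
  refine ⟨32, by norm_num, fun R hR K hK => ?_⟩
  classical
  let g : (Fin 2 → ℤ) → ℕ := fun m => max (m 0).natAbs (m 1).natAbs
  have hg : ∀ m, (g m : ℝ) ≤ ‖ek m‖ := by
    intro m
    simp only [g, Nat.cast_max]
    refine max_le ?_ ?_
    · rw [Nat.cast_natAbs, Int.cast_abs]; exact abs_coord_le_ek m 0
    · rw [Nat.cast_natAbs, Int.cast_abs]; exact abs_coord_le_ek m 1
  have hg0 : ∀ m, m ≠ 0 → 1 ≤ g m := by
    intro m hm
    by_contra hc
    refine hm ?_
    have : g m = 0 := by omega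
    simp only [g] at this
    have h0 : (m 0).natAbs = 0 := by omega
    have h1 : (m 1).natAbs = 0 := by omega
    ext i; fin_cases i
    · simpa using h0
    · simpa using h1
  have hmap : ∀ m ∈ K, g m ∈ Finset.Icc 1 ⌊R ^ 2⌋₊ := fun m hm =>
    Finset.mem_Icc.2 ⟨hg0 m (hK m hm).1, Nat.le_floor ((hg m).trans (hK m hm).2)⟩
  rw [← Finset.sum_fiberwise_of_maps_to hmap]
  have hfib : ∀ n ∈ Finset.Icc 1 ⌊R ^ 2⌋₊, ∑ m ∈ K with g m = n, (‖ek m‖ ^ 2)⁻¹ ≤ 8 * (n : ℝ)⁻¹ := by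
    intro n hn
    have hn1 : 1 ≤ n := (Finset.mem_Icc.1 hn).1
    have hn1' : (1 : ℝ) ≤ n := by exact_mod_cast hn1
    have hcard : (K.filter fun m => g m = n).card ≤ 8 * n := by
      rw [← Int.card_box (by omega : n ≠ 0)]
      refine Finset.card_le_card_of_injOn (finTwoArrowEquiv ℤ) (fun m hm => ?_)
        (finTwoArrowEquiv ℤ).injective.injOn
      rw [Finset.mem_coe, Int.mem_box]
      exact (Finset.mem_filter.1 hm).2
    calc ∑ m ∈ K with g m = n, (‖ek m‖ ^ 2)⁻¹ ≤ ∑ m ∈ K with g m = n, ((n : ℝ) ^ 2)⁻¹ := by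
          refine Finset.sum_le_sum fun m hm => ?_
          have h1 := (Finset.mem_filter.1 hm).2
          have h2 := hg m
          rw [h1] at h2
          gcongr
      _ = (K.filter fun m => g m = n).card * ((n : ℝ) ^ 2)⁻¹ := by rw [Finset.sum_const, nsmul_eq_mul]
      _ ≤ (8 * n : ℕ) * ((n : ℝ) ^ 2)⁻¹ := by gcongr
      _ = 8 * (n : ℝ)⁻¹ := by push_cast; field_simp
  refine (Finset.sum_le_sum hfib).trans ?_
  rw [← Finset.mul_sum]
  have hh := harmonic_floor_le_one_add_log (R ^ 2) (by nlinarith)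
  rw [harmonic_eq_sum_Icc] at hh
  push_cast at hh
  rw [Real.log_pow] at hh
  have h2 : (1 : ℝ) / 2 ≤ Real.log R := by
    have := Real.log_two_gt_d9
    have h3 := Real.log_le_log (by norm_num) hR
    linarith
  push_cast at hh
  linarith

lemma omegaR_le {N : ℕ} (hN : 2 ≤ N) {R : ℝ} (hR : 0 < R) (m : Fin 2 → ℤ) :
    omegaR N R (ek m) ≤ R ^ 2 * ‖ek m‖ ^ (-2 : ℝ) ∨ m = 0 := by
  by_cases hm : m = 0
  · exact Or.inr hm
  left
  have h1 := one_le_norm_ek hm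
  have e : R ^ 2 * ‖ek m‖ ^ (-2 : ℝ) = ((‖ek m‖ / R) ^ 2)⁻¹ := by
    rw [Real.rpow_neg (norm_nonneg _), Real.rpow_ofNat, div_pow, inv_div, div_eq_mul_inv]
  rw [e, omegaR, Real.rpow_neg (by positivity), Real.rpow_natCast]
  refine inv_anti₀ (pow_pos (div_pos (by linarith) hR) 2) ?_
  have hx : (0:ℝ) ≤ ‖ek m‖ / R := by positivity
  calc (‖ek m‖ / R) ^ 2 ≤ (1 + ‖ek m‖ / R) ^ 2 := by gcongr; linarith
    _ ≤ _ := pow_le_pow_right₀ (by linarith) hN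

lemma omegaR_nonneg {N : ℕ} {R : ℝ} (hR : 0 < R) (ξ : E2) : 0 ≤ omegaR N R ξ := by
  unfold omegaR; positivity

/-- The summand of `Gam`. -/
def gamT (Ω : Set E2) (N : ℕ) (R : ℝ) (n : ℕ) (k : Fin 2 → ℤ) : ℝ :=
  if (2 : ℝ) ^ n / R < ‖ek k‖ then
    omegaR N R (ek k) * ‖ek k‖⁻¹ * capDiam Ω ((‖ek k‖)⁻¹ • ek k) ((2 : ℝ) ^ n / (‖ek k‖ * R))
    else 0

lemma gamT_nonneg {Ω : Set E2} {N : ℕ} {R : ℝ} (hR : 0 < R) (n : ℕ) (k : Fin 2 → ℤ) :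
    0 ≤ gamT Ω N R n k := by
  unfold gamT
  split_ifs
  · exact mul_nonneg (mul_nonneg (omegaR_nonneg hR _) (by positivity)) (capDiam_nonneg _)
  · exact le_rfl

/-- As `2ⁿ < |k|R` on the range of summation, half a power of `|k|` can be traded for the
factor `2^(-n/2)`, which makes both the sum over `k` and the sum over `n` converge. -/
lemma gamT_le {r₁ r₂ : ℝ} {Ω : Set E2} (hD : Dom r₁ r₂ Ω) {N : ℕ} (hN : 2 ≤ N) {R : ℝ} (hR : 0 < R)
    (n : ℕ) (k : Fin 2 → ℤ) :
    gamT Ω N R n k ≤ 2 * r₂ * R ^ 2 * (R ^ (1 / 2 : ℝ) * (2 ^ (-(1 / 2) : ℝ)) ^ n) * ‖ek k‖ ^ (-(5 / 2) : ℝ) := by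
  have hr2 := hD.one_lt
  unfold gamT
  split_ifs with h
  swap
  · positivity
  have hpos : 0 < (2 : ℝ) ^ n / R := by positivity
  have hk0 : 0 < ‖ek k‖ := hpos.trans h
  have hk : k ≠ 0 := by
    rintro rfl; simp [ek_zero] at hk0
  have h1 := (omegaR_le hN hR k).resolve_right hk
  have h2 : ‖ek k‖ ^ (-(1 / 2) : ℝ) ≤ R ^ (1 / 2 : ℝ) * (2 ^ (-(1 / 2) : ℝ)) ^ n := by
    refine (Real.rpow_le_rpow_of_nonpos hpos h.le (by norm_num)).trans (le_of_eq ?_)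
    rw [Real.div_rpow (by positivity) hR.le, Real.rpow_neg hR.le, div_inv_eq_mul, mul_comm]
    congr 1
    rw [← Real.rpow_natCast, ← Real.rpow_natCast, ← Real.rpow_mul (by norm_num),
      ← Real.rpow_mul (by norm_num), mul_comm]
  have h3 : ‖ek k‖ ^ (-2 : ℝ) * ‖ek k‖⁻¹ = ‖ek k‖ ^ (-(1 / 2) : ℝ) * ‖ek k‖ ^ (-(5 / 2) : ℝ) := by
    rw [← Real.rpow_neg_one, ← Real.rpow_add hk0, ← Real.rpow_add hk0]; norm_num
  calc omegaR N R (ek k) * ‖ek k‖⁻¹ * capDiam Ω ((‖ek k‖)⁻¹ • ek k) ((2 : ℝ) ^ n / (‖ek k‖ * R))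
      ≤ (R ^ 2 * ‖ek k‖ ^ (-2 : ℝ)) * ‖ek k‖⁻¹ * (2 * r₂) := by
        gcongr
        · exact capDiam_nonneg _
        · exact capDiam_le hD _
    _ = 2 * r₂ * R ^ 2 * (‖ek k‖ ^ (-2 : ℝ) * ‖ek k‖⁻¹) := by ring
    _ = 2 * r₂ * R ^ 2 * ‖ek k‖ ^ (-(1 / 2) : ℝ) * ‖ek k‖ ^ (-(5 / 2) : ℝ) := by rw [h3]; ring
    _ ≤ _ := by gcongr

lemma gamT_summable {r₁ r₂ : ℝ} {Ω : Set E2} (hD : Dom r₁ r₂ Ω) {N : ℕ} (hN : 2 ≤ N) {R : ℝ}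
    (hR : 0 < R) (n : ℕ) : Summable (gamT Ω N R n) :=
  Summable.of_nonneg_of_le (gamT_nonneg hR n) (gamT_le hD hN hR n)
    ((summable_ek (by norm_num)).mul_left _)

lemma Gam_eq {Ω : Set E2} {N : ℕ} {R : ℝ} (n : ℕ) : Gam Ω N R n = R * ∑' k, gamT Ω N R n k := rfl

lemma Gam_nonneg {Ω : Set E2} {N : ℕ} {R : ℝ} (hR : 0 < R) (n : ℕ) : 0 ≤ Gam Ω N R n := by
  rw [Gam_eq]; exact mul_nonneg hR.le (tsum_nonneg (gamT_nonneg hR n))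

lemma Gam_summable {r₁ r₂ : ℝ} {Ω : Set E2} (hD : Dom r₁ r₂ Ω) {N : ℕ} (hN : 2 ≤ N) {R : ℝ}
    (hR : 0 < R) : Summable (Gam Ω N R) := by
  have hs := summable_ek (s := 5 / 2) (by norm_num)
  have hgeo : Summable fun n : ℕ => ((2 : ℝ) ^ (-(1 / 2) : ℝ)) ^ n :=
    summable_geometric_of_lt_one (by positivity)
      (Real.rpow_lt_one_of_one_lt_of_neg (by norm_num) (by norm_num))
  refine Summable.of_nonneg_of_le (Gam_nonneg hR) (fun n => ?_)
    (hgeo.mul_left (R * (2 * r₂ * R ^ 2 * R ^ (1 / 2 : ℝ) * ∑' k, ‖ek k‖ ^ (-(5 / 2) : ℝ))))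
  have h := (gamT_summable hD hN hR n).tsum_le_tsum (gamT_le hD hN hR n) (hs.mul_left _)
  rw [tsum_mul_left] at h
  rw [Gam_eq]
  calc R * ∑' k, gamT Ω N R n k ≤ R * _ := mul_le_mul_of_nonneg_left h hR.le
    _ = _ := by ring

end

/-! ### Pointwise bounds for the smoothed rest -/

section

section Pointwise

/-- The nonzero frequencies `m` with `|m| ≤ R²`. -/
def KR (R : ℝ) : Finset (Fin 2 → ℤ) := (finite_ek (R ^ 2)).toFinset.erase 0

lemma mem_KR {R : ℝ} {m : Fin 2 → ℤ} : m ∈ KR R ↔ m ≠ 0 ∧ ‖ek m‖ ≤ R ^ 2 := by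
  simp [KR]

/-- The part of the Fourier series of the smoothed rest which comes from the zones at depth
about `2ⁿ/(|m|R)` below the support lines in the directions `m`. -/
def Tn (r₁ R : ℝ) (Ω : Set E2) (c : (Fin 2 → ℤ) → ℂ) (n : ℕ) (t : ℝ) : ℂ :=
  ∑ m ∈ KR R, c m * osc (gz r₁ R Ω m n) ‖ek m‖ t

variable {r₁ r₂ R C₀ : ℝ} {Ω : Set E2} {c : (Fin 2 → ℤ) → ℂ} {M N : ℕ}

lemma Tn_continuous (hD : Dom r₁ r₂ Ω) (n : ℕ) : Continuous (Tn r₁ R Ω c n) := by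
  unfold Tn
  refine continuous_finsetSum _ fun m hm => continuous_const.mul (osc_continuous ?_ _)
  exact gz_integrable hD (mem_KR.1 hm).1 n

lemma coef_le_omega (hC₀ : 0 < C₀) (hR : 0 < R) (hNM : N ≤ M)
    (hcb : ∀ m, ‖c m‖ ≤ C₀ * ((1 + ‖ek m‖ / R) ^ M)⁻¹) (m : Fin 2 → ℤ) :
    ‖c m‖ ≤ C₀ * omegaR N R (ek m) := by
  refine (hcb m).trans ?_
  have hx : (0 : ℝ) ≤ ‖ek m‖ / R := by positivity
  rw [omegaR, Real.rpow_neg (by positivity), Real.rpow_natCast]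
  gcongr
  linarith

lemma coef_le (hC₀ : 0 < C₀) (hR : 0 < R)
    (hcb : ∀ m, ‖c m‖ ≤ C₀ * ((1 + ‖ek m‖ / R) ^ M)⁻¹) (m : Fin 2 → ℤ) : ‖c m‖ ≤ C₀ := by
  refine (hcb m).trans ?_
  have hx : (0 : ℝ) ≤ ‖ek m‖ / R := by positivity
  have : ((1 + ‖ek m‖ / R) ^ M)⁻¹ ≤ 1 := inv_le_one_of_one_le₀ (one_le_pow₀ (by linarith))
  nlinarith

lemma vol_le (hD : Dom r₁ r₂ Ω) :
    (volume Ω).toReal ≤ (volume (Metric.closedBall (0 : E2) r₂)).toReal :=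
  ENNReal.toReal_mono measure_closedBall_lt_top.ne (measure_mono hD.outer)

lemma Xf_norm_le (hD : Dom r₁ r₂ Ω) (m : Fin 2 → ℤ) (t : ℝ) :
    ‖Xf Ω m t‖ ≤ (volume (Metric.closedBall (0 : E2) r₂)).toReal := by
  refine le_trans ?_ (vol_le hD)
  have := norm_setIntegral_le_of_norm_le_const (μ := volume) (vol_lt hD) (C := 1)
    (f := fun y => ee (t * ⟪y, ek m⟫)) (fun y _ => (ee_norm _).le)
  rw [one_mul] at this
  exact this

/-- The frequencies `|m| > R²` contribute a bounded amount to the smoothed rest. -/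
lemma tail_bound (hD : Dom r₁ r₂ Ω) (hR : 2 ≤ R) (hC₀ : 0 < C₀) (hM : 8 ≤ M)
    (hcb : ∀ m, ‖c m‖ ≤ C₀ * ((1 + ‖ek m‖ / R) ^ M)⁻¹) {s : ℝ} (hs0 : 0 < s) (hs : s ≤ 3 * R)
    {D : ℂ} (hD' : HasSum (fun m => if m = 0 then 0 else c m * ((s : ℂ) ^ 2 * Xf Ω m s)) D) :
    ‖D - (s : ℂ) ^ 2 * ∑ m ∈ KR R, c m * Xf Ω m s‖ ≤
      9 * C₀ * (volume (Metric.closedBall (0 : E2) r₂)).toReal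
        * ∑' m : Fin 2 → ℤ, ‖ek m‖ ^ (-(3 : ℝ)) := by
  classical
  set V := (volume (Metric.closedBall (0 : E2) r₂)).toReal with hV
  have hV0 : 0 ≤ V := ENNReal.toReal_nonneg
  have hfin : HasSum (fun m => if m ∈ KR R then c m * ((s : ℂ) ^ 2 * Xf Ω m s) else 0)
      ((s : ℂ) ^ 2 * ∑ m ∈ KR R, c m * Xf Ω m s) := by
    have h1 := hasSum_sum_of_ne_finset_zero (s := KR R)
      (L := SummationFilter.unconditional _) (f := fun m => if m ∈ KR R then c m * ((s : ℂ) ^ 2 * Xf Ω m s) else 0)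
      (fun b hb => if_neg hb)
    convert h1 using 1
    rw [Finset.mul_sum]
    refine Finset.sum_congr rfl fun m hm => ?_
    rw [if_pos hm]; ring
  have hsub := hD'.sub hfin
  rw [← hsub.tsum_eq]
  have hsum := (summable_ek (s := 3) (by norm_num)).hasSum.mul_left (9 * C₀ * V)
  refine tsum_of_norm_bounded hsum fun m => ?_
  have hnn : 0 ≤ 9 * C₀ * V * ‖ek m‖ ^ (-(3 : ℝ)) := by positivity
  by_cases hm0 : m = 0
  · have : m ∉ KR R := fun h => (mem_KR.1 h).1 hm0
    rw [if_pos hm0, if_neg this, sub_zero, norm_zero]; exact hnn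
  by_cases hmK : m ∈ KR R
  · rw [if_neg hm0, if_pos hmK, sub_self, norm_zero]; exact hnn
  rw [if_neg hm0, if_neg hmK, sub_zero]
  have hbig : R ^ 2 < ‖ek m‖ := by
    by_contra hc
    exact hmK (mem_KR.2 ⟨hm0, not_lt.1 hc⟩)
  have hx : 0 < ‖ek m‖ := lt_of_le_of_lt (by positivity) hbig
  have hc : ‖c m‖ ≤ C₀ * (R ^ 8 / ‖ek m‖ ^ 8) := by
    refine (hcb m).trans ?_
    have hxR : (0 : ℝ) < ‖ek m‖ / R := by positivity
    have h2 : (‖ek m‖ / R) ^ 8 ≤ (1 + ‖ek m‖ / R) ^ M :=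
      (pow_le_pow_left₀ hxR.le (by linarith) 8).trans (pow_le_pow_right₀ (by linarith) hM)
    have h3 : R ^ 8 / ‖ek m‖ ^ 8 = ((‖ek m‖ / R) ^ 8)⁻¹ := by rw [div_pow, inv_div]
    rw [h3]
    gcongr
  have hs2 : s ^ 2 ≤ 9 * R ^ 2 := by nlinarith
  rw [norm_mul, norm_mul, norm_pow, Complex.norm_real, Real.norm_of_nonneg hs0.le]
  have h10 : R ^ 10 ≤ ‖ek m‖ ^ 5 := by
    have := pow_le_pow_left₀ (by positivity) hbig.le 5
    calc R ^ 10 = (R ^ 2) ^ 5 := by ring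
      _ ≤ _ := this
  calc ‖c m‖ * (s ^ 2 * ‖Xf Ω m s‖) ≤ (C₀ * (R ^ 8 / ‖ek m‖ ^ 8)) * ((9 * R ^ 2) * V) := by
        have := Xf_norm_le hD m s
        gcongr
    _ = 9 * C₀ * V * (R ^ 10 / ‖ek m‖ ^ 8) := by ring
    _ ≤ 9 * C₀ * V * (‖ek m‖ ^ 5 / ‖ek m‖ ^ 8) := by gcongr
    _ = 9 * C₀ * V * ‖ek m‖ ^ (-(3 : ℝ)) := by
        rw [Real.rpow_neg hx.le, Real.rpow_ofNat]
        congr 1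
        field_simp

/-- The finite part of the Fourier series: each transform `Xf` is a second difference of itself
divided by a multiplier independent of the frequency, and the second difference splits into
zones at both ends of the projection of `Ω` plus a small middle part. -/
lemma main_part (hD : Dom r₁ r₂ Ω) (hR : 2 ≤ R) (hC₀ : 0 < C₀)
    (hcb : ∀ m, ‖c m‖ ≤ C₀ * ((1 + ‖ek m‖ / R) ^ M)⁻¹)
    (hcc : ∀ m, c (-m) = (starRingEnd ℂ) (c m)) {s : ℝ} (hs0 : 0 < s) (hs : s ≤ 3 * R)
    {K : ℕ} (hK : R ^ 3 ≤ 2 ^ (K + 1)) :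
    ‖(s : ℂ) ^ 2 * ∑ m ∈ KR R, c m * Xf Ω m s‖ ≤ R ^ 2 / (16 * (r₁ / 8) ^ 2) *
      (2 * ∑ n ∈ Finset.range (K + 1), ‖Tn r₁ R Ω c n s‖
        + C₀ * r₂ / R ^ 2 * ∑ m ∈ KR R, (‖ek m‖ ^ 2)⁻¹) := by
  have hR0 : 0 < R := by linarith
  have hr := hD.pos
  have hr1 := hD.lt
  have hr2 := hD.one_lt
  set σ := r₁ / 8 with hσ
  have hσ0 : 0 < σ := by positivity
  set x := 2 * Real.pi * (s * (σ / R)) with hx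
  have hpi := Real.pi_pos
  have hx0 : 0 < x := by positivity
  have hxpi : x ≤ Real.pi := by
    have h1 : s * (σ / R) ≤ 3 / 8 := by
      rw [← mul_div_assoc, div_le_iff₀ hR0]
      nlinarith
    nlinarith
  -- `2 - 2 cos x ≥ 4x²/π²` on `[0, π]`: the multiplier of the second difference absorbs `s²`
  have hcos := Real.cos_le_one_sub_mul_cos_sq (by rw [abs_of_pos hx0]; exact hxpi)
  set w : ℝ := 2 * Real.cos x - 2 with hw
  have hw2 : s ^ 2 ≤ R ^ 2 / (16 * σ ^ 2) * |w| := by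
    have h1 : 2 / Real.pi ^ 2 * x ^ 2 = 8 * σ ^ 2 / R ^ 2 * s ^ 2 := by
      rw [hx]; field_simp; ring
    rw [h1] at hcos
    have h2 : 16 * σ ^ 2 / R ^ 2 * s ^ 2 ≤ |w| := by
      refine le_trans ?_ (neg_le_abs w)
      have h3 : 16 * σ ^ 2 / R ^ 2 * s ^ 2 = 2 * (8 * σ ^ 2 / R ^ 2 * s ^ 2) := by ring
      rw [hw, h3]; linarith
    calc s ^ 2 = R ^ 2 / (16 * σ ^ 2) * (16 * σ ^ 2 / R ^ 2 * s ^ 2) := by field_simp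
      _ ≤ _ := by gcongr
  have hosc : ∀ m ∈ KR R, osc (gfun r₁ R Ω m) ‖ek m‖ s = (w : ℂ) * Xf Ω m s := by
    intro m hm
    have hm0 := (mem_KR.1 hm).1
    have h1 := one_le_norm_ek hm0
    rw [gfun, osc_d2 (sliceLen_integrable hD (norm_dir hm0)), ← Xf_eq hD hm0 s]
    congr 4
    rw [hx]
    congr 2
    field_simp
    rw [hσ]; ring
  have hsum : (w : ℂ) * ∑ m ∈ KR R, c m * Xf Ω m s =
      (∑ n ∈ Finset.range (K + 1), Tn r₁ R Ω c n s)
      + (∑ m ∈ KR R, c m * osc (gmid r₁ R Ω m) ‖ek m‖ s)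
      + (starRingEnd ℂ) (∑ n ∈ Finset.range (K + 1), Tn r₁ R Ω c n s) := by
    have e1 : (∑ n ∈ Finset.range (K + 1), Tn r₁ R Ω c n s)
        = ∑ m ∈ KR R, c m * ∑ n ∈ Finset.range (K + 1), osc (gz r₁ R Ω m n) ‖ek m‖ s := by
      simp only [Tn, Finset.mul_sum]
      exact Finset.sum_comm
    have e2 : (starRingEnd ℂ) (∑ n ∈ Finset.range (K + 1), Tn r₁ R Ω c n s)
        = ∑ m ∈ KR R, c m *
          (starRingEnd ℂ) (∑ n ∈ Finset.range (K + 1), osc (gz r₁ R Ω (-m) n) ‖ek m‖ s) := by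
      rw [e1, map_sum]
      refine Finset.sum_nbij' (fun m => -m) (fun m => -m) ?_ ?_ (by simp) (by simp) ?_
      · intro m hm
        rw [mem_KR] at hm ⊢
        rw [norm_ek_neg]; exact ⟨neg_ne_zero.2 hm.1, hm.2⟩
      · intro m hm
        rw [mem_KR] at hm ⊢
        rw [norm_ek_neg]; exact ⟨neg_ne_zero.2 hm.1, hm.2⟩
      · intro m _
        rw [map_mul, hcc, neg_neg, norm_ek_neg]
    rw [e2, e1, ← Finset.sum_add_distrib, ← Finset.sum_add_distrib, Finset.mul_sum]
    refine Finset.sum_congr rfl fun m hm => ?_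
    have hm' := mem_KR.1 hm
    rw [← mul_add, ← mul_add, ← osc_split hD hm'.1 hR hm'.2 hK s, hosc m hm]
    ring
  have hmid : ‖∑ m ∈ KR R, c m * osc (gmid r₁ R Ω m) ‖ek m‖ s‖
      ≤ C₀ * r₂ / R ^ 2 * ∑ m ∈ KR R, (‖ek m‖ ^ 2)⁻¹ := by
    rw [Finset.mul_sum]
    refine (norm_sum_le _ _).trans (Finset.sum_le_sum fun m hm => ?_)
    have hm0 := (mem_KR.1 hm).1
    have h1 := coef_le hC₀ hR0 hcb m
    have h2 := (osc_norm_le (G := gmid r₁ R Ω m) ‖ek m‖ s).trans (gmid_bound hD hm0 hR)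
    have h3 := one_le_norm_ek hm0
    rw [norm_mul]
    calc ‖c m‖ * ‖osc (gmid r₁ R Ω m) ‖ek m‖ s‖ ≤ C₀ * (r₂ * (1 / (‖ek m‖ * R)) ^ 2) := by gcongr
      _ = _ := by field_simp
  have hT : ‖∑ n ∈ Finset.range (K + 1), Tn r₁ R Ω c n s‖
      ≤ ∑ n ∈ Finset.range (K + 1), ‖Tn r₁ R Ω c n s‖ := norm_sum_le _ _
  have hfinal : ‖(w : ℂ) * ∑ m ∈ KR R, c m * Xf Ω m s‖ ≤
      2 * ∑ n ∈ Finset.range (K + 1), ‖Tn r₁ R Ω c n s‖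
        + C₀ * r₂ / R ^ 2 * ∑ m ∈ KR R, (‖ek m‖ ^ 2)⁻¹ := by
    rw [hsum]
    refine (norm_add₃_le).trans ?_
    rw [Complex.norm_conj]
    linarith
  rw [norm_mul, Complex.norm_real, Real.norm_eq_abs] at hfinal
  rw [norm_mul, norm_pow, Complex.norm_real, Real.norm_of_nonneg hs0.le]
  calc s ^ 2 * ‖∑ m ∈ KR R, c m * Xf Ω m s‖
      ≤ (R ^ 2 / (16 * σ ^ 2) * |w|) * ‖∑ m ∈ KR R, c m * Xf Ω m s‖ := by gcongr
    _ = R ^ 2 / (16 * σ ^ 2) * (|w| * ‖∑ m ∈ KR R, c m * Xf Ω m s‖) := by ring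
    _ ≤ _ := by gcongr

end Pointwise

end

/-! ### Quadratic means and the individual zones -/

section

section MeanSquare

/-- The quadratic polynomial `x ↦ ∫ (f + x g)²` is nonnegative, so its discriminant is not positive. -/
lemma cauchy_schwarz {a b : ℝ} (hab : a ≤ b) {f g : ℝ → ℝ} (hf : Continuous f) (hg : Continuous g) :
    (∫ t in a..b, f t * g t) ^ 2 ≤ (∫ t in a..b, f t ^ 2) * ∫ t in a..b, g t ^ 2 := by
  have h := discrim_le_zero (a := ∫ t in a..b, g t ^ 2) (b := 2 * ∫ t in a..b, f t * g t)
    (c := ∫ t in a..b, f t ^ 2) fun x => by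
      have h0 : 0 ≤ ∫ t in a..b, (g t * x + f t) ^ 2 :=
        intervalIntegral.integral_nonneg hab fun t _ => sq_nonneg _
      have e : ∫ t in a..b, (g t * x + f t) ^ 2 = (∫ t in a..b, g t ^ 2) * (x * x)
          + 2 * (∫ t in a..b, f t * g t) * x + ∫ t in a..b, f t ^ 2 := by
        have i1 : IntervalIntegrable (fun t => g t ^ 2 * (x * x)) volume a b :=
          Continuous.intervalIntegrable (by fun_prop) _ _
        have i2 : IntervalIntegrable (fun t => f t * g t * (2 * x)) volume a b :=
          Continuous.intervalIntegrable (by fun_prop) _ _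
        have i3 : IntervalIntegrable (fun t => f t ^ 2) volume a b :=
          Continuous.intervalIntegrable (by fun_prop) _ _
        have : ∀ t, (g t * x + f t) ^ 2 = g t ^ 2 * (x * x) + f t * g t * (2 * x) + f t ^ 2 :=
          fun t => by ring
        simp only [this]
        rw [intervalIntegral.integral_add (i1.add i2) i3, intervalIntegral.integral_add i1 i2,
          intervalIntegral.integral_mul_const, intervalIntegral.integral_mul_const]
        ring
      rw [← e]; exact h0
  rw [discrim] at h
  nlinarith

/-- Minkowski's inequality for the quadratic mean of two continuous functions. -/
lemma minkowski_two {a b h : ℝ} (hab : a ≤ b) (hh : 0 < h) {f g : ℝ → ℝ} (hf : Continuous f)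
    (hg : Continuous g) {x y : ℝ} (hx : 0 ≤ x) (hy : 0 ≤ y)
    (hfx : (1 / h) * ∫ t in a..b, f t ^ 2 ≤ x ^ 2) (hgy : (1 / h) * ∫ t in a..b, g t ^ 2 ≤ y ^ 2) :
    (1 / h) * ∫ t in a..b, (f t + g t) ^ 2 ≤ (x + y) ^ 2 := by
  have hcs := cauchy_schwarz hab hf hg
  have hg0 : 0 ≤ ∫ t in a..b, g t ^ 2 :=
    intervalIntegral.integral_nonneg hab fun t _ => sq_nonneg _
  have e : ∫ t in a..b, (f t + g t) ^ 2 = (∫ t in a..b, f t ^ 2)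
      + (∫ t in a..b, f t * g t) * 2 + ∫ t in a..b, g t ^ 2 := by
    have i1 : IntervalIntegrable (fun t => f t ^ 2) volume a b :=
      Continuous.intervalIntegrable (by fun_prop) _ _
    have i2 : IntervalIntegrable (fun t => f t * g t * 2) volume a b :=
      Continuous.intervalIntegrable (by fun_prop) _ _
    have i3 : IntervalIntegrable (fun t => g t ^ 2) volume a b :=
      Continuous.intervalIntegrable (by fun_prop) _ _
    have : ∀ t, (f t + g t) ^ 2 = f t ^ 2 + f t * g t * 2 + g t ^ 2 := fun t => by ring
    simp only [this]
    rw [intervalIntegral.integral_add (i1.add i2) i3, intervalIntegral.integral_add i1 i2,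
      intervalIntegral.integral_mul_const]
  have hi : 0 < 1 / h := by positivity
  have hcross : (1 / h) * ∫ t in a..b, f t * g t ≤ x * y := by
    refine le_of_sq_le_sq ?_ (by positivity)
    calc ((1 / h) * ∫ t in a..b, f t * g t) ^ 2
        = (1 / h) ^ 2 * (∫ t in a..b, f t * g t) ^ 2 := by ring
      _ ≤ (1 / h) ^ 2 * ((∫ t in a..b, f t ^ 2) * ∫ t in a..b, g t ^ 2) := by gcongr
      _ = ((1 / h) * ∫ t in a..b, f t ^ 2) * ((1 / h) * ∫ t in a..b, g t ^ 2) := by ring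
      _ ≤ x ^ 2 * y ^ 2 := by gcongr
      _ = (x * y) ^ 2 := by ring
  rw [e]
  nlinarith

lemma minkowski_sum {ι : Type*} {a b h : ℝ} (hab : a ≤ b) (hh : 0 < h) (F : Finset ι)
    {f : ι → ℝ → ℝ} (hf : ∀ n, Continuous (f n)) {β : ι → ℝ} (hβ : ∀ n, 0 ≤ β n)
    (hfβ : ∀ n ∈ F, (1 / h) * ∫ t in a..b, f n t ^ 2 ≤ β n ^ 2) :
    (1 / h) * ∫ t in a..b, (∑ n ∈ F, f n t) ^ 2 ≤ (∑ n ∈ F, β n) ^ 2 := by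
  classical
  induction F using Finset.induction_on with
  | empty => simp
  | insert n F hn ih =>
    simp only [Finset.sum_insert hn]
    refine minkowski_two hab hh (hf n) (continuous_finsetSum _ fun n _ => hf n) (hβ n)
      (Finset.sum_nonneg fun n _ => hβ n) (hfβ n (Finset.mem_insert_self _ _))
      (ih fun m hm => hfβ m (Finset.mem_insert_of_mem hm))

/-- A quadratic mean of `E` bounded through a pointwise majorant by finitely many continuous
functions plus a constant; `E` need not be measurable. -/
lemma mean_le {R h : ℝ} (hh : 0 < h) {E : ℝ → ℝ} (F : Finset ℕ)
    {f : ℕ → ℝ → ℝ} (hf : ∀ n, Continuous (f n)) {β : ℕ → ℝ} (hβ : ∀ n, 0 ≤ β n)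
    (hfβ : ∀ n ∈ F, (1 / h) * ∫ t in R..(R + h), f n t ^ 2 ≤ β n ^ 2) {c : ℝ} (hc : 0 ≤ c)
    (hE : ∀ t, R ≤ t → t ≤ R + h → |E t| ≤ ∑ n ∈ F, f n t + c) :
    Real.sqrt ((1 / h) * ∫ t in R..(R + h), E t ^ 2) ≤ ∑ n ∈ F, β n + c := by
  have hab : R ≤ R + h := by linarith
  have hS : Continuous fun t => ∑ n ∈ F, f n t := continuous_finsetSum _ fun n _ => hf n
  have hconst : (1 / h) * ∫ _ in R..(R + h), c ^ 2 ≤ c ^ 2 := by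
    rw [intervalIntegral.integral_const, smul_eq_mul]
    refine le_of_eq ?_
    field_simp; ring
  have h1 := minkowski_two hab hh hS continuous_const (Finset.sum_nonneg fun n _ => hβ n) hc
    (minkowski_sum hab hh F hf hβ hfβ) hconst
  refine Real.sqrt_le_iff.2 ⟨add_nonneg (Finset.sum_nonneg fun n _ => hβ n) hc, le_trans ?_ h1⟩
  refine mul_le_mul_of_nonneg_left ?_ (by positivity)
  rw [intervalIntegral.integral_of_le hab, intervalIntegral.integral_of_le hab]
  refine integral_mono_of_nonneg (Filter.Eventually.of_forall fun t => sq_nonneg _) ?_ ?_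
  · exact ((hS.add continuous_const).pow 2).integrableOn_Ioc
  · refine (ae_restrict_iff' measurableSet_Ioc).2 (Filter.Eventually.of_forall fun t ht => ?_)
    have := hE t ht.1.le ht.2
    change E t ^ 2 ≤ _
    rw [← sq_abs]
    exact pow_le_pow_left₀ (abs_nonneg _) this 2

end MeanSquare

section Zones

/-- Common form of `Bn` and `Bnt`, with the decay parameter `B` in the last factor. -/
def bbT (Ω : Set E2) (N : ℕ) (s R B : ℝ) (n : ℕ) (p : (Fin 2 → ℤ) × (Fin 2 → ℤ)) : ℝ :=
  if (2 : ℝ) ^ n / R < ‖ek p.1‖ ∧ ‖ek p.1‖ ≤ R ^ 2 ∧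
      (2 : ℝ) ^ n / R < ‖ek p.2‖ ∧ ‖ek p.2‖ ≤ R ^ 2 then
    omegaR N R (ek p.1) * omegaR N R (ek p.2) / (‖ek p.1‖ * ‖ek p.2‖) *
      capDiam Ω ((‖ek p.1‖)⁻¹ • ek p.1) ((2 : ℝ) ^ n / (‖ek p.1‖ * R)) *
      capDiam Ω ((‖ek p.2‖)⁻¹ • ek p.2) ((2 : ℝ) ^ n / (‖ek p.2‖ * R)) *
      (1 + B * |suppFn Ω (s • ek p.1) - suppFn Ω (s • ek p.2)|) ^ (-(N : ℝ))
  else 0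

lemma Bn_eq (Ω : Set E2) (N : ℕ) (s R h : ℝ) (n : ℕ) :
    Bn Ω N s R h n = 2 ^ (-(n : ℝ)) * R * Real.sqrt (∑' p, bbT Ω N s R h n p) := rfl

lemma Bnt_eq (Ω : Set E2) (N : ℕ) (s R h : ℝ) (n : ℕ) : Bnt Ω N s R h n =
    2 ^ (-(n : ℝ)) * R * Real.sqrt (∑' p, bbT Ω N s R (R * 2 ^ (-(n : ℝ))) n p) := rfl

lemma Bn_nonneg (Ω : Set E2) (N : ℕ) (s : ℝ) {R : ℝ} (hR : 0 < R) (h : ℝ) (n : ℕ) :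
    0 ≤ Bn Ω N s R h n := by rw [Bn_eq]; positivity

lemma Bnt_nonneg (Ω : Set E2) (N : ℕ) (s : ℝ) {R : ℝ} (hR : 0 < R) (h : ℝ) (n : ℕ) :
    0 ≤ Bnt Ω N s R h n := by rw [Bnt_eq]; positivity

variable {r₁ r₂ R B : ℝ} {Ω : Set E2} {N M : ℕ}

lemma bbT_nonneg {s : ℝ} (hR : 0 < R) (hB : 0 ≤ B) (n : ℕ) (p : (Fin 2 → ℤ) × (Fin 2 → ℤ)) :
    0 ≤ bbT Ω N s R B n p := by
  unfold bbT
  split_ifs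
  · have h1 := omegaR_nonneg (N := N) hR (ek p.1)
    have h2 := omegaR_nonneg (N := N) hR (ek p.2)
    have h3 := capDiam_nonneg (Ω := Ω) (θ := (‖ek p.1‖)⁻¹ • ek p.1) ((2 : ℝ) ^ n / (‖ek p.1‖ * R))
    have h4 := capDiam_nonneg (Ω := Ω) (θ := (‖ek p.2‖)⁻¹ • ek p.2) ((2 : ℝ) ^ n / (‖ek p.2‖ * R))
    positivity
  · exact le_rfl

lemma bbT_summable {s : ℝ} (n : ℕ) : Summable (bbT Ω N s R B n) := by
  have hf := (finite_ek (R ^ 2)).prod (finite_ek (R ^ 2))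
  refine summable_of_ne_finset_zero (s := hf.toFinset) fun p hp => ?_
  unfold bbT
  refine if_neg fun h => hp ?_
  rw [Set.Finite.mem_toFinset]
  exact ⟨h.2.1, h.2.2.2⟩

/-- The mean square bound of one zone. The phases of the zone are spread over a length `O(2ⁿ/R)`
around `ρ*(k)`, so `2ⁿB ≤ R` permits decay in `B|ρ*(k) - ρ*(l)|`. -/
lemma zone_mean (N : ℕ) : ∃ C : ℝ, 0 < C ∧ ∀ (r₁ r₂ R h C₀ B : ℝ) (Ω : Set E2)
    (c : (Fin 2 → ℤ) → ℂ) (n M : ℕ) (T₀ T₁ : ℝ), Dom r₁ r₂ Ω → 2 ≤ R → 0 < C₀ → N ≤ M →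
    (∀ m, ‖c m‖ ≤ C₀ * ((1 + ‖ek m‖ / R) ^ M)⁻¹) → 0 < h → 0 ≤ B → B ≤ h → 2 ^ n * B ≤ R →
    R - h / 2 ≤ T₀ → T₁ ≤ R + 3 * h / 2 → T₀ ≤ T₁ →
    (1 / h) * ∫ t in T₀..T₁, ‖Tn r₁ R Ω c n t‖ ^ 2 ≤
      (C * C₀ * (2 ^ (-(n : ℝ)) / R) * Real.sqrt (∑' p, bbT Ω N 1 R B n p)) ^ 2 := by
  obtain ⟨C, hC, H⟩ := l2_bound N
  refine ⟨36 * Real.sqrt C, by positivity, ?_⟩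
  intro r₁ r₂ R h C₀ B Ω c n M T₀ T₁ hD hR hC₀ hNM hcb hh hB0 hBh hBn hT₀ hT₁ hT
  classical
  have hR0 : 0 < R := by linarith
  -- `l2_bound` asks for its hypotheses at every `k`, the facts on `gz` are for `k ≠ 0`
  let G : (Fin 2 → ℤ) → ℝ → ℝ := fun k => if k = 0 then 0 else gz r₁ R Ω k n
  have hGi : ∀ k, Integrable (G k) := by
    intro k
    by_cases hk : k = 0
    · simp only [G, if_pos hk]; exact integrable_zero _ _ _
    · simp only [G, if_neg hk]; exact gz_integrable hD hk n
  have hGs : ∀ k s, G k s ≠ 0 → |‖ek k‖ * s - suppFn Ω ((1 : ℝ) • ek k)| ≤ 2 * 2 ^ n / R := by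
    intro k s hs
    by_cases hk : k = 0
    · simp [G, if_pos hk] at hs
    · simp only [G, if_neg hk] at hs
      rw [one_smul]
      exact gz_supp hD hk hR hs
  have hAB : 2 * 2 ^ n / R * B ≤ 2 := by
    rw [div_mul_eq_mul_div, div_le_iff₀ hR0]; linarith
  have h1 := H (KR R) c G (fun k => ‖ek k‖) (fun k => suppFn Ω ((1 : ℝ) • ek k)) R h
    (2 * 2 ^ n / R) B T₀ T₁ hh hB0 hBh hAB hGi hGs hT₀ hT₁ hT
  have hTG : ∀ t, ∑ k ∈ KR R, c k * osc (G k) ‖ek k‖ t = Tn r₁ R Ω c n t := by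
    intro t
    refine Finset.sum_congr rfl fun k hk => ?_
    simp only [G, if_neg (mem_KR.1 hk).1]
  simp only [hTG] at h1
  refine h1.trans ?_
  set q : ℝ := 36 * C₀ * (2 ^ (-(n : ℝ)) / R) with hq
  have hq0 : 0 ≤ q := by positivity
  have hterm : ∀ k ∈ KR R, ‖c k‖ * ∫ s, |G k s| ≤
      if (2 : ℝ) ^ n / R < ‖ek k‖ then q * (omegaR N R (ek k) * ‖ek k‖⁻¹ *
        capDiam Ω ((‖ek k‖)⁻¹ • ek k) ((2 : ℝ) ^ n / (‖ek k‖ * R))) else 0 := by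
    intro k hk
    have hk0 := (mem_KR.1 hk).1
    have hk1 := one_le_norm_ek hk0
    simp only [G, if_neg hk0]
    split_ifs with hn
    · have h2 := gz_bound hD hk0 hR n
      have h3 := coef_le_omega hC₀ hR0 hNM hcb k
      have h4 := omegaR_nonneg (N := N) hR0 (ek k)
      have h5 : 0 ≤ ∫ s, |gz r₁ R Ω k n s| := integral_nonneg fun s => abs_nonneg _
      calc ‖c k‖ * ∫ s, |gz r₁ R Ω k n s| ≤ (C₀ * omegaR N R (ek k)) *
            (36 * (1 / (‖ek k‖ * R) / 2 ^ n) * capDiam Ω (dir k) (2 ^ n / (‖ek k‖ * R))) := by gcongr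
        _ = _ := by
          rw [hq, dir, Real.rpow_neg (by norm_num), Real.rpow_natCast]
          field_simp
    · rw [gz_zero hD hk0 hR hn]; simp
  have hpair : ∀ k ∈ KR R, ∀ l ∈ KR R, ‖c k‖ * ‖c l‖ * ((∫ s, |G k s|) * (∫ s, |G l s|) *
      (1 + B * |suppFn Ω ((1 : ℝ) • ek k) - suppFn Ω ((1 : ℝ) • ek l)|) ^ (-(N : ℝ))) ≤
      q ^ 2 * bbT Ω N 1 R B n (k, l) := by
    intro k hk l hl
    have hkt := hterm k hk
    have hlt := hterm l hl
    have hk0 : 0 ≤ ‖c k‖ * ∫ s, |G k s| := mul_nonneg (norm_nonneg _) (integral_nonneg fun s => abs_nonneg _)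
    have hl0 : 0 ≤ ‖c l‖ * ∫ s, |G l s| := mul_nonneg (norm_nonneg _) (integral_nonneg fun s => abs_nonneg _)
    set W : ℝ := (1 + B * |suppFn Ω ((1 : ℝ) • ek k) - suppFn Ω ((1 : ℝ) • ek l)|) ^ (-(N : ℝ)) with hW
    have hW0 : 0 ≤ W := by positivity
    have e : ‖c k‖ * ‖c l‖ * ((∫ s, |G k s|) * (∫ s, |G l s|) * W) =
        (‖c k‖ * ∫ s, |G k s|) * (‖c l‖ * ∫ s, |G l s|) * W := by ring
    rw [e]
    have hnn := bbT_nonneg (Ω := Ω) (N := N) (s := 1) hR0 hB0 n (k, l)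
    by_cases hk2 : (2 : ℝ) ^ n / R < ‖ek k‖
    · by_cases hl2 : (2 : ℝ) ^ n / R < ‖ek l‖
      · rw [if_pos hk2] at hkt
        rw [if_pos hl2] at hlt
        rw [bbT, if_pos ⟨hk2, (mem_KR.1 hk).2, hl2, (mem_KR.1 hl).2⟩]
        refine (mul_le_mul_of_nonneg_right (mul_le_mul hkt hlt hl0 (hk0.trans hkt)) hW0).trans
          (le_of_eq ?_)
        rw [hW]
        simp only [div_eq_mul_inv, mul_inv]
        ring
      · rw [if_neg hl2] at hlt
        have : ‖c l‖ * ∫ s, |G l s| = 0 := le_antisymm hlt hl0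
        rw [this, mul_zero, zero_mul]; positivity
    · rw [if_neg hk2] at hkt
      have : ‖c k‖ * ∫ s, |G k s| = 0 := le_antisymm hkt hk0
      rw [this, zero_mul, zero_mul]; positivity
  have hsum : ∑ k ∈ KR R, ∑ l ∈ KR R, ‖c k‖ * ‖c l‖ * ((∫ s, |G k s|) * (∫ s, |G l s|) *
      (1 + B * |suppFn Ω ((1 : ℝ) • ek k) - suppFn Ω ((1 : ℝ) • ek l)|) ^ (-(N : ℝ))) ≤
      q ^ 2 * ∑' p, bbT Ω N 1 R B n p := by
    calc _ ≤ ∑ k ∈ KR R, ∑ l ∈ KR R, q ^ 2 * bbT Ω N 1 R B n (k, l) :=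
          Finset.sum_le_sum fun k hk => Finset.sum_le_sum fun l hl => hpair k hk l hl
      _ = q ^ 2 * ∑ p ∈ KR R ×ˢ KR R, bbT Ω N 1 R B n p := by
          rw [Finset.sum_product, Finset.mul_sum]; simp only [Finset.mul_sum]
      _ ≤ _ := by
          gcongr
          exact (bbT_summable n).sum_le_tsum _ fun p _ => bbT_nonneg hR0 hB0 n p
  refine (mul_le_mul_of_nonneg_left hsum hC.le).trans (le_of_eq ?_)
  have ht0 : 0 ≤ ∑' p, bbT Ω N 1 R B n p := tsum_nonneg fun p => bbT_nonneg hR0 hB0 n p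
  have e : (36 * Real.sqrt C * C₀ * (2 ^ (-(n : ℝ)) / R) * Real.sqrt (∑' p, bbT Ω N 1 R B n p)) ^ 2
      = Real.sqrt C ^ 2 * q ^ 2 * Real.sqrt (∑' p, bbT Ω N 1 R B n p) ^ 2 := by rw [hq]; ring
  rw [e, Real.sq_sqrt hC.le, Real.sq_sqrt ht0]; ring

/-- The pointwise bound of one zone, by the triangle inequality. -/
lemma zone_pointwise {C₀ : ℝ} {c : (Fin 2 → ℤ) → ℂ} (hD : Dom r₁ r₂ Ω) (hN : 2 ≤ N) (hR : 2 ≤ R)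
    (hC₀ : 0 < C₀) (hNM : N ≤ M) (hcb : ∀ m, ‖c m‖ ≤ C₀ * ((1 + ‖ek m‖ / R) ^ M)⁻¹) (n : ℕ)
    (t : ℝ) : R ^ 2 * ‖Tn r₁ R Ω c n t‖ ≤ 36 * C₀ * Gam Ω N R n := by
  have hR0 : 0 < R := by linarith
  have hterm : ∀ k ∈ KR R, ‖c k * osc (gz r₁ R Ω k n) ‖ek k‖ t‖ ≤ 36 * C₀ / R * gamT Ω N R n k := by
    intro k hk
    have hk0 := (mem_KR.1 hk).1
    have hk1 := one_le_norm_ek hk0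
    have hnn : 0 ≤ gamT Ω N R n k := gamT_nonneg hR0 n k
    by_cases hn2 : (2 : ℝ) ^ n / R < ‖ek k‖
    · rw [gamT, if_pos hn2, norm_mul]
      have h2 := (osc_norm_le (G := gz r₁ R Ω k n) ‖ek k‖ t).trans (gz_bound hD hk0 hR n)
      have h3 := coef_le_omega hC₀ hR0 hNM hcb k
      have h4 := omegaR_nonneg (N := N) hR0 (ek k)
      have h5 := capDiam_nonneg (Ω := Ω) (θ := dir k) ((2 : ℝ) ^ n / (‖ek k‖ * R))
      have h6 : (1 : ℝ) ≤ 2 ^ n := one_le_pow₀ (by norm_num)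
      calc ‖c k‖ * ‖osc (gz r₁ R Ω k n) ‖ek k‖ t‖ ≤ (C₀ * omegaR N R (ek k)) *
            (36 * (1 / (‖ek k‖ * R) / 2 ^ n) * capDiam Ω (dir k) (2 ^ n / (‖ek k‖ * R))) := by gcongr
        _ ≤ (C₀ * omegaR N R (ek k)) *
            (36 * (1 / (‖ek k‖ * R)) * capDiam Ω (dir k) (2 ^ n / (‖ek k‖ * R))) := by
          have h7 : 1 / (‖ek k‖ * R) / 2 ^ n ≤ 1 / (‖ek k‖ * R) := div_le_self (by positivity) h6
          gcongr ?_ * (36 * ?_ * ?_)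
        _ = _ := by rw [dir]; field_simp
    · rw [gz_zero hD hk0 hR hn2]
      have : osc 0 ‖ek k‖ t = 0 := by simp [osc]
      rw [this, mul_zero, norm_zero]; positivity
  have hsum : ‖Tn r₁ R Ω c n t‖ ≤ 36 * C₀ / R * ∑' k, gamT Ω N R n k := by
    refine (norm_sum_le _ _).trans ((Finset.sum_le_sum hterm).trans ?_)
    rw [← Finset.mul_sum]
    gcongr
    exact (gamT_summable hD hN hR0 n).sum_le_tsum _ fun k _ => gamT_nonneg hR0 n k
  rw [Gam_eq]
  calc R ^ 2 * ‖Tn r₁ R Ω c n t‖ ≤ R ^ 2 * (36 * C₀ / R * ∑' k, gamT Ω N R n k) := by gcongr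
    _ = _ := by field_simp

end Zones

end

/-! ### Collecting the zones -/

section

section Assembly

lemma finite_two_pow (R : ℝ) : {n : ℕ | (2 : ℝ) ^ n ≤ R}.Finite := by
  obtain ⟨K, hK⟩ := pow_unbounded_of_one_lt R (one_lt_two (α := ℝ))
  refine (Set.finite_Iio K).subset fun n hn => ?_
  by_contra hc
  have h1 : (2 : ℝ) ^ K ≤ 2 ^ n := pow_le_pow_right₀ (by norm_num) (not_lt.1 hc)
  have h2 : (2 : ℝ) ^ n ≤ R := hn
  linarith

lemma summable_ite_two_pow {R : ℝ} {p : ℕ → Prop} [DecidablePred p]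
    (hp : ∀ n, p n → (2 : ℝ) ^ n ≤ R) (u : ℕ → ℝ) : Summable fun n => if p n then u n else 0 := by
  refine summable_of_ne_finset_zero (s := (finite_two_pow R).toFinset) fun n hn => if_neg fun h => hn ?_
  rw [Set.Finite.mem_toFinset]
  exact hp n h

/-- The right-hand side bracket of the theorem for one choice of the sign. -/
def brk (Ω : Set E2) (N : ℕ) (R h s : ℝ) : ℝ :=
  (∑' n : ℕ, if (2 : ℝ) ^ n ≤ R / h then Bn Ω N s R h n else 0) +
    (∑' n : ℕ, if R / h < (2 : ℝ) ^ n ∧ (2 : ℝ) ^ n ≤ R then Bnt Ω N s R h n else 0) +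
    (∑' n : ℕ, if R < (2 : ℝ) ^ n then Gam Ω N R n else 0)

lemma ite_nonneg' {p : Prop} [Decidable p] {x : ℝ} (hx : 0 ≤ x) : 0 ≤ if p then x else 0 := by
  split_ifs
  · exact hx
  · exact le_rfl

lemma brk_nonneg (Ω : Set E2) (N : ℕ) {R : ℝ} (hR : 0 < R) (h s : ℝ) : 0 ≤ brk Ω N R h s :=
  add_nonneg (add_nonneg (tsum_nonneg fun n => ite_nonneg' (Bn_nonneg Ω N s hR h n))
    (tsum_nonneg fun n => ite_nonneg' (Bnt_nonneg Ω N s hR h n)))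
    (tsum_nonneg fun n => ite_nonneg' (Gam_nonneg hR n))

variable {r₁ r₂ R C₀ : ℝ} {Ω : Set E2} {c : (Fin 2 → ℤ) → ℂ} {f P : E2 → ℝ} {M N : ℕ}

/-- Pointwise bound of the rest by the zone sums at the two times `t ± 1/(4R)` at which the
smoothed counting functions enclose the number of lattice points in `tΩ`. -/
lemma rest_bound (hD : Dom r₁ r₂ Ω) (hR : 2 ≤ R) (hC₀ : 0 < C₀) (hM : 8 ≤ M)
    (hf0 : ∀ x, 0 ≤ f x) (hfs : ∀ x, f x ≠ 0 → ‖x‖ < r₁ / 4 / R) (hfi : Integrable f)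
    (hf1 : ∫ x, f x = 1) (hcb : ∀ m, ‖c m‖ ≤ C₀ * ((1 + ‖ek m‖ / R) ^ M)⁻¹)
    (hcc : ∀ m, c (-m) = (starRingEnd ℂ) (c m)) (hc0 : c 0 = 1) (hcs : Summable fun m => ‖c m‖)
    (hP : ∀ x, HasSum (fun m => f (x - ek m)) (P x))
    (hPc : ∀ x, HasSum (fun m => c m * ee ⟪x, ek m⟫) (P x : ℂ))
    {K : ℕ} (hK : R ^ 3 ≤ 2 ^ (K + 1)) {L V τ a : ℝ}
    (hL : ∑ m ∈ KR R, (‖ek m‖ ^ 2)⁻¹ ≤ L)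
    (hV : V = (volume (Metric.closedBall (0 : E2) r₂)).toReal)
    (hτ : τ = 9 * C₀ * V * ∑' m : Fin 2 → ℤ, ‖ek m‖ ^ (-(3 : ℝ)))
    (ha : a = 1 / (16 * (r₁ / 8) ^ 2)) {t : ℝ} (ht : R ≤ t) (ht2 : t ≤ 2 * R) :
    |latticeRest Ω t| ≤ (∑ n ∈ Finset.range (K + 1), 2 * a * R ^ 2 *
        (‖Tn r₁ R Ω c n (t + 1 / (4 * R))‖ + ‖Tn r₁ R Ω c n (t - 1 / (4 * R))‖))
      + (2 * (a * C₀ * r₂ * L) + 2 * τ + 2 * V) := by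
  have hR0 : 0 < R := by linarith
  have hr := hD.pos
  have hr2 := hD.one_lt
  have hδ0 : 0 < 1 / (4 * R) := by positivity
  have hδ1 : 1 / (4 * R) ≤ 1 / 8 := one_div_le_one_div_of_le (by norm_num) (by linarith)
  have ha0 : 0 < a := by rw [ha]; positivity
  set δ := 1 / (4 * R) with hδ
  have hDb : ∀ s, 0 < s → s ≤ 3 * R → |(∫ y in s • Ω, P y) - s ^ 2 * (volume Ω).toReal| ≤
      (∑ n ∈ Finset.range (K + 1), 2 * a * R ^ 2 * ‖Tn r₁ R Ω c n s‖) + a * C₀ * r₂ * L + τ := by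
    intro s hs0 hs
    have h1 := smooth_count_hasSum hD hcs hc0 hPc hs0
    have h2 := tail_bound hD hR hC₀ hM hcb hs0 hs h1
    have h3 := main_part hD hR hC₀ hcb hcc hs0 hs hK
    rw [← hV, ← hτ] at h2
    set D : ℝ := (∫ y in s • Ω, P y) - s ^ 2 * (volume Ω).toReal with hDdef
    set A : ℂ := (s : ℂ) ^ 2 * ∑ m ∈ KR R, c m * Xf Ω m s with hA
    have h4 : |D| ≤ ‖(D : ℂ) - A‖ + ‖A‖ := by
      have := norm_add_le ((D : ℂ) - A) A
      rwa [sub_add_cancel, Complex.norm_real, Real.norm_eq_abs] at this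
    have h5 : R ^ 2 / (16 * (r₁ / 8) ^ 2) *
      (2 * ∑ n ∈ Finset.range (K + 1), ‖Tn r₁ R Ω c n s‖
        + C₀ * r₂ / R ^ 2 * ∑ m ∈ KR R, (‖ek m‖ ^ 2)⁻¹) ≤
        (∑ n ∈ Finset.range (K + 1), 2 * a * R ^ 2 * ‖Tn r₁ R Ω c n s‖) + a * C₀ * r₂ * L := by
      rw [← Finset.mul_sum]
      calc _ = a * R ^ 2 * (2 * ∑ n ∈ Finset.range (K + 1), ‖Tn r₁ R Ω c n s‖
            + C₀ * r₂ / R ^ 2 * ∑ m ∈ KR R, (‖ek m‖ ^ 2)⁻¹) := by rw [ha]; ring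
        _ ≤ a * R ^ 2 * (2 * ∑ n ∈ Finset.range (K + 1), ‖Tn r₁ R Ω c n s‖
            + C₀ * r₂ / R ^ 2 * L) := by gcongr
        _ = _ := by field_simp
    linarith
  have hsand := count_sandwich hD hR0 hf0 hfs hfi hf1 hcs hP hPc (t := t) (by rw [← hδ]; linarith)
  rw [← hδ] at hsand
  have hp := abs_le.1 (hDb (t + δ) (by linarith) (by linarith))
  have hm := abs_le.1 (hDb (t - δ) (by linarith) (by linarith))
  have hvol := vol_le hD
  rw [← hV] at hvol
  have hvol0 : 0 ≤ (volume Ω).toReal := ENNReal.toReal_nonneg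
  have htδ : t * δ ≤ 1 / 2 := by
    rw [hδ, mul_one_div, div_le_iff₀ (by positivity)]; linarith
  have hδδ : δ * δ ≤ 1 := by nlinarith
  have hplus : (t + δ) ^ 2 * (volume Ω).toReal - t ^ 2 * (volume Ω).toReal ≤ 2 * V := by
    calc _ = (2 * (t * δ) + δ * δ) * (volume Ω).toReal := by ring
      _ ≤ 2 * (volume Ω).toReal := by gcongr; linarith
      _ ≤ _ := by gcongr
  have hminus : t ^ 2 * (volume Ω).toReal - (t - δ) ^ 2 * (volume Ω).toReal ≤ 2 * V := by
    calc _ = (2 * (t * δ) - δ * δ) * (volume Ω).toReal := by ring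
      _ ≤ 2 * (volume Ω).toReal := by gcongr; nlinarith
      _ ≤ _ := by gcongr
  have hsplit : (∑ n ∈ Finset.range (K + 1), 2 * a * R ^ 2 *
        (‖Tn r₁ R Ω c n (t + δ)‖ + ‖Tn r₁ R Ω c n (t - δ)‖)) =
      (∑ n ∈ Finset.range (K + 1), 2 * a * R ^ 2 * ‖Tn r₁ R Ω c n (t + δ)‖) +
      ∑ n ∈ Finset.range (K + 1), 2 * a * R ^ 2 * ‖Tn r₁ R Ω c n (t - δ)‖ := by
    rw [← Finset.sum_add_distrib]
    exact Finset.sum_congr rfl fun n _ => by ring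
  have hn1 : 0 ≤ ∑ n ∈ Finset.range (K + 1), 2 * a * R ^ 2 * ‖Tn r₁ R Ω c n (t + δ)‖ :=
    Finset.sum_nonneg fun n _ => by positivity
  have hn2 : 0 ≤ ∑ n ∈ Finset.range (K + 1), 2 * a * R ^ 2 * ‖Tn r₁ R Ω c n (t - δ)‖ :=
    Finset.sum_nonneg fun n _ => by positivity
  have hL0 : 0 ≤ L := (Finset.sum_nonneg fun m _ => by positivity).trans hL
  have hV0 : 0 ≤ V := hvol0.trans hvol
  have hτ0 : 0 ≤ τ := by
    rw [hτ]
    exact mul_nonneg (by positivity) (tsum_nonneg fun m => by positivity)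
  have hq : 0 ≤ a * C₀ * r₂ * L := by positivity
  rw [hsplit, latticeRest, abs_le]
  constructor
  · linarith [hsand.1, hm.1]
  · linarith [hsand.2, hp.2]

/-- The mean square over `[R, R + h]` of the contribution of the zone `n`,
taken at the two shifted times `t ± 1/(4R)`, which stay in `[R - h/2, R + 3h/2]`. -/
lemma zone_pair_mean {h a X : ℝ} {n : ℕ} (hD : Dom r₁ r₂ Ω) (hR : 2 ≤ R) (hh : 1 ≤ h)
    (H : ∀ T₀ T₁, R - h / 2 ≤ T₀ → T₁ ≤ R + 3 * h / 2 → T₀ ≤ T₁ →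
      (1 / h) * ∫ t in T₀..T₁, ‖Tn r₁ R Ω c n t‖ ^ 2 ≤ X ^ 2) :
    (1 / h) * ∫ t in R..(R + h), (2 * a * R ^ 2 *
        (‖Tn r₁ R Ω c n (t + 1 / (4 * R))‖ + ‖Tn r₁ R Ω c n (t - 1 / (4 * R))‖)) ^ 2 ≤
      (4 * a * (R ^ 2 * X)) ^ 2 := by
  have hR0 : 0 < R := by linarith
  have hδ0 : 0 < 1 / (4 * R) := by positivity
  have hδ1 : 1 / (4 * R) ≤ 1 / 8 := one_div_le_one_div_of_le (by norm_num) (by linarith)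
  set δ := 1 / (4 * R) with hδ
  have hc := Tn_continuous (c := c) (R := R) hD n
  have h1 := H (R + δ) (R + h + δ) (by linarith) (by linarith) (by linarith)
  have h2 := H (R - δ) (R + h - δ) (by linarith) (by linarith) (by linarith)
  rw [← intervalIntegral.integral_comp_add_right (fun t => ‖Tn r₁ R Ω c n t‖ ^ 2)] at h1
  rw [← intervalIntegral.integral_comp_sub_right (fun t => ‖Tn r₁ R Ω c n t‖ ^ 2)] at h2
  have i1 : IntervalIntegrable (fun t => ‖Tn r₁ R Ω c n (t + δ)‖ ^ 2) volume R (R + h) :=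
    Continuous.intervalIntegrable (by fun_prop) _ _
  have i2 : IntervalIntegrable (fun t => ‖Tn r₁ R Ω c n (t - δ)‖ ^ 2) volume R (R + h) :=
    Continuous.intervalIntegrable (by fun_prop) _ _
  have h3 : ∫ t in R..(R + h), (2 * a * R ^ 2 *
        (‖Tn r₁ R Ω c n (t + δ)‖ + ‖Tn r₁ R Ω c n (t - δ)‖)) ^ 2 ≤
      ∫ t in R..(R + h), (8 * a ^ 2 * R ^ 4) *
        (‖Tn r₁ R Ω c n (t + δ)‖ ^ 2 + ‖Tn r₁ R Ω c n (t - δ)‖ ^ 2) := by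
    refine intervalIntegral.integral_mono_on (by linarith)
      (Continuous.intervalIntegrable (by fun_prop) _ _)
      (Continuous.intervalIntegrable (by fun_prop) _ _) fun t _ => ?_
    have h5 := add_sq_le (a := ‖Tn r₁ R Ω c n (t + δ)‖) (b := ‖Tn r₁ R Ω c n (t - δ)‖)
    calc _ = 4 * a ^ 2 * R ^ 4 * (‖Tn r₁ R Ω c n (t + δ)‖ + ‖Tn r₁ R Ω c n (t - δ)‖) ^ 2 := by ring
      _ ≤ 4 * a ^ 2 * R ^ 4 * (2 * (‖Tn r₁ R Ω c n (t + δ)‖ ^ 2 + ‖Tn r₁ R Ω c n (t - δ)‖ ^ 2)) := by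
          gcongr
      _ = _ := by ring
  rw [intervalIntegral.integral_const_mul, intervalIntegral.integral_add i1 i2] at h3
  have hi : 0 ≤ 1 / h := by positivity
  calc _ ≤ 1 / h * (8 * a ^ 2 * R ^ 4 * ((∫ t in R..(R + h), ‖Tn r₁ R Ω c n (t + δ)‖ ^ 2) +
        ∫ t in R..(R + h), ‖Tn r₁ R Ω c n (t - δ)‖ ^ 2)) := mul_le_mul_of_nonneg_left h3 hi
    _ = 8 * a ^ 2 * R ^ 4 * ((1 / h * ∫ t in R..(R + h), ‖Tn r₁ R Ω c n (t + δ)‖ ^ 2) +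
        1 / h * ∫ t in R..(R + h), ‖Tn r₁ R Ω c n (t - δ)‖ ^ 2) := by ring
    _ ≤ 8 * a ^ 2 * R ^ 4 * (X ^ 2 + X ^ 2) := by gcongr
    _ = _ := by ring

/-- The bound of the theorem with the single sign `+` and without the term `√(R/h)`: the zones at
the opposite end of the projection of `Ω` are complex conjugates of those for `-m`, and the
summation set is symmetric. -/
lemma main_bound (r₁ r₂ : ℝ) (hr₁ : 0 < r₁) (h1 : r₁ < 1) (h2 : 1 < r₂) (N : ℕ) (hN : 2 ≤ N) :
    ∃ C : ℝ, 0 < C ∧ ∀ Ω : Set E2, Dom r₁ r₂ Ω → ∀ R h : ℝ, 2 ≤ R → 1 ≤ h → h ≤ R →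
      meanSquare Ω R h ≤ C * brk Ω N R h 1 + C * Real.log R := by
  obtain ⟨C₀, hC₀, Hmoll⟩ := moll_two (ε := r₁ / 4) (by positivity) (N + 8) (by omega)
  obtain ⟨C₁, hC₁, Hzone⟩ := zone_mean N
  obtain ⟨CL, hCL, Hlog⟩ := log_sum
  obtain ⟨V, hV⟩ : ∃ V, V = (volume (Metric.closedBall (0 : E2) r₂)).toReal := ⟨_, rfl⟩
  obtain ⟨τ, hτ⟩ : ∃ τ, τ = 9 * C₀ * V * ∑' m : Fin 2 → ℤ, ‖ek m‖ ^ (-(3 : ℝ)) := ⟨_, rfl⟩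
  obtain ⟨a, ha⟩ : ∃ a, a = 1 / (16 * (r₁ / 8) ^ 2) := ⟨_, rfl⟩
  have ha0 : 0 < a := by rw [ha]; positivity
  have hV0 : 0 ≤ V := by rw [hV]; exact ENNReal.toReal_nonneg
  have hτ0 : 0 ≤ τ := by
    rw [hτ]; exact mul_nonneg (by positivity) (tsum_nonneg fun m => by positivity)
  have hr2 : 0 < r₂ := by linarith
  obtain ⟨C, hC⟩ : ∃ C, C = 4 * a * (C₁ * C₀) + 144 * a * C₀ +
      (2 * (a * C₀ * r₂ * CL) + 4 * τ + 4 * V) := ⟨_, rfl⟩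
  have hp1 : 0 < 4 * a * (C₁ * C₀) := by positivity
  have hp2 : 0 < 144 * a * C₀ := by positivity
  have hp3 : 0 ≤ 2 * (a * C₀ * r₂ * CL) + 4 * τ + 4 * V := by positivity
  refine ⟨C, by rw [hC]; linarith, fun Ω hD R h hR hh hhR => ?_⟩
  have hR0 : 0 < R := by linarith
  have hh0 : 0 < h := by linarith
  obtain ⟨f, P, c, -, hf0, hfs, hfi, hf1, hcb, hcc, hc0, hcs, hP, hPc⟩ := Hmoll R (by linarith)
  obtain ⟨K, hK'⟩ := pow_unbounded_of_one_lt (R ^ 3) (one_lt_two (α := ℝ))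
  have hK : R ^ 3 ≤ 2 ^ (K + 1) := hK'.le.trans (pow_le_pow_right₀ (by norm_num) (by omega))
  have hlog : (1 : ℝ) / 2 ≤ Real.log R := by
    have := Real.log_two_gt_d9
    have h3 := Real.log_le_log (by norm_num) hR
    linarith
  have hL := Hlog R hR (KR R) fun m hm => mem_KR.1 hm
  obtain ⟨sB, hsB⟩ : ∃ x, x = ∑' n : ℕ, if (2 : ℝ) ^ n ≤ R / h then Bn Ω N 1 R h n else 0 := ⟨_, rfl⟩
  obtain ⟨sT, hsT⟩ : ∃ x, x = ∑' n : ℕ, if R / h < (2 : ℝ) ^ n ∧ (2 : ℝ) ^ n ≤ R then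
    Bnt Ω N 1 R h n else 0 := ⟨_, rfl⟩
  obtain ⟨sG, hsG⟩ : ∃ x, x = ∑' n : ℕ, if R < (2 : ℝ) ^ n then Gam Ω N R n else 0 := ⟨_, rfl⟩
  have hbrk : brk Ω N R h 1 = sB + sT + sG := by rw [hsB, hsT, hsG, brk]
  have hsG0 : 0 ≤ sG := by rw [hsG]; exact tsum_nonneg fun n => ite_nonneg' (Gam_nonneg hR0 n)
  have hsB0 : 0 ≤ sB := by
    rw [hsB]; exact tsum_nonneg fun n => ite_nonneg' (Bn_nonneg Ω N 1 hR0 h n)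
  have hsT0 : 0 ≤ sT := by
    rw [hsT]; exact tsum_nonneg fun n => ite_nonneg' (Bnt_nonneg Ω N 1 hR0 h n)
  have hRh : R / h ≤ R := div_le_self hR0.le hh
  let fn : ℕ → ℝ → ℝ := fun n t => 2 * a * R ^ 2 *
        (‖Tn r₁ R Ω c n (t + 1 / (4 * R))‖ + ‖Tn r₁ R Ω c n (t - 1 / (4 * R))‖)
  have hfnc : ∀ n, Continuous (fn n) := by
    intro n
    have := Tn_continuous (c := c) (R := R) hD n
    simp only [fn]
    fun_prop
  let β : ℕ → ℝ := fun n => 4 * a * (C₁ * C₀) *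
    (if (2 : ℝ) ^ n ≤ R / h then Bn Ω N 1 R h n else Bnt Ω N 1 R h n)
  have hβ : ∀ n, 0 ≤ β n := by
    intro n
    refine mul_nonneg hp1.le ?_
    split_ifs
    · exact Bn_nonneg Ω N 1 hR0 h n
    · exact Bnt_nonneg Ω N 1 hR0 h n
  let F := (Finset.range (K + 1)).filter fun n => (2 : ℝ) ^ n ≤ R
  have hfβ : ∀ n ∈ F, (1 / h) * ∫ t in R..(R + h), fn n t ^ 2 ≤ β n ^ 2 := by
    intro n hn
    have hnR : (2 : ℝ) ^ n ≤ R := (Finset.mem_filter.1 hn).2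
    have h2n : (0 : ℝ) < 2 ^ n := by positivity
    by_cases hnh : (2 : ℝ) ^ n ≤ R / h
    · refine (zone_pair_mean (a := a) hD hR hh fun T₀ T₁ hT₀ hT₁ hT => Hzone r₁ r₂ R h C₀ h Ω c n (N + 8)
        T₀ T₁ hD hR hC₀ (by omega) hcb hh0 hh0.le le_rfl ((le_div_iff₀ hh0).1 hnh) hT₀ hT₁ hT).trans
        (le_of_eq ?_)
      simp only [β, if_pos hnh, Bn_eq]
      congr 1
      field_simp
    · have hB : R * 2 ^ (-(n : ℝ)) = R / 2 ^ n := by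
        rw [Real.rpow_neg (by norm_num), Real.rpow_natCast, div_eq_mul_inv]
      refine (zone_pair_mean (a := a) hD hR hh fun T₀ T₁ hT₀ hT₁ hT => Hzone r₁ r₂ R h C₀
        (R * 2 ^ (-(n : ℝ))) Ω c n (N + 8)
        T₀ T₁ hD hR hC₀ (by omega) hcb hh0 (by positivity) ?_ ?_ hT₀ hT₁ hT).trans
        (le_of_eq ?_)
      · rw [hB, div_le_iff₀ h2n]
        have := (div_lt_iff₀ hh0).1 (not_le.1 hnh)
        linarith
      · rw [hB]; refine le_of_eq ?_; field_simp
      · simp only [β, if_neg hnh, Bnt_eq]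
        congr 1
        field_simp
  have hEb : ∀ t, R ≤ t → t ≤ R + h → |latticeRest Ω t| ≤ ∑ n ∈ F, fn n t +
      (144 * a * C₀ * sG + (2 * (a * C₀ * r₂ * (CL * Real.log R)) + 2 * τ + 2 * V)) := by
    intro t ht ht'
    refine (rest_bound hD hR hC₀ (by omega) hf0 hfs hfi hf1 hcb hcc hc0 hcs hP hPc hK hL hV hτ ha
      ht (by linarith)).trans ?_
    rw [← Finset.sum_filter_add_sum_filter_not (Finset.range (K + 1)) fun n => (2 : ℝ) ^ n ≤ R]
    have hbig : ∑ n ∈ Finset.range (K + 1) with ¬ (2 : ℝ) ^ n ≤ R, fn n t ≤ 144 * a * C₀ * sG := by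
      have hs : Summable fun n : ℕ => if R < (2 : ℝ) ^ n then Gam Ω N R n else 0 := by
        refine Summable.of_nonneg_of_le (fun n => ite_nonneg' (Gam_nonneg hR0 n)) (fun n => ?_)
          (Gam_summable hD hN hR0)
        split_ifs
        · exact le_rfl
        · exact Gam_nonneg hR0 n
      calc _ ≤ ∑ n ∈ Finset.range (K + 1) with ¬ (2 : ℝ) ^ n ≤ R,
            144 * a * C₀ * (if R < (2 : ℝ) ^ n then Gam Ω N R n else 0) := by
            refine Finset.sum_le_sum fun n hn => ?_
            have hn' := not_le.1 (Finset.mem_filter.1 hn).2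
            rw [if_pos hn']
            have z1 := zone_pointwise hD hN hR hC₀ (by omega : N ≤ N + 8) hcb n (t + 1 / (4 * R))
            have z2 := zone_pointwise hD hN hR hC₀ (by omega : N ≤ N + 8) hcb n (t - 1 / (4 * R))
            calc fn n t = 2 * a * (R ^ 2 * ‖Tn r₁ R Ω c n (t + 1 / (4 * R))‖
                  + R ^ 2 * ‖Tn r₁ R Ω c n (t - 1 / (4 * R))‖) := by simp only [fn]; ring
              _ ≤ 2 * a * (36 * C₀ * Gam Ω N R n + 36 * C₀ * Gam Ω N R n) := by gcongr
              _ = _ := by ring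
        _ = 144 * a * C₀ * ∑ n ∈ Finset.range (K + 1) with ¬ (2 : ℝ) ^ n ≤ R,
            (if R < (2 : ℝ) ^ n then Gam Ω N R n else 0) := by rw [Finset.mul_sum]
        _ ≤ _ := by
            rw [hsG]
            gcongr
            exact hs.sum_le_tsum _ fun n _ => ite_nonneg' (Gam_nonneg hR0 n)
    linarith
  have hc : 0 ≤ 144 * a * C₀ * sG + (2 * (a * C₀ * r₂ * (CL * Real.log R)) + 2 * τ + 2 * V) := by
    have : 0 ≤ Real.log R := by linarith
    positivity
  have hmain := mean_le hh0 F hfnc hβ hfβ hc hEb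
  have hβsum : ∑ n ∈ F, β n ≤ 4 * a * (C₁ * C₀) * (sB + sT) := by
    have s1 := summable_ite_two_pow (R := R) (p := fun n => (2 : ℝ) ^ n ≤ R / h)
      (fun n hn => hn.trans hRh) (Bn Ω N 1 R h)
    have s2 := summable_ite_two_pow (R := R) (p := fun n => R / h < (2 : ℝ) ^ n ∧ (2 : ℝ) ^ n ≤ R)
      (fun n hn => hn.2) (Bnt Ω N 1 R h)
    have t1 := s1.sum_le_tsum F fun n _ => ite_nonneg' (Bn_nonneg Ω N 1 hR0 h n)
    have t2 := s2.sum_le_tsum F fun n _ => ite_nonneg' (Bnt_nonneg Ω N 1 hR0 h n)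
    rw [← hsB] at t1
    rw [← hsT] at t2
    rw [← Finset.mul_sum]
    refine mul_le_mul_of_nonneg_left (le_trans (le_of_eq ?_) (add_le_add t1 t2)) hp1.le
    rw [← Finset.sum_add_distrib]
    refine Finset.sum_congr rfl fun n hn => ?_
    have hnR : (2 : ℝ) ^ n ≤ R := (Finset.mem_filter.1 hn).2
    by_cases hnh : (2 : ℝ) ^ n ≤ R / h
    · rw [if_pos hnh, if_pos hnh, if_neg (fun h => absurd hnh (not_le.2 h.1)), add_zero]
    · rw [if_neg hnh, if_neg hnh, if_pos ⟨not_le.1 hnh, hnR⟩, zero_add]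
  refine hmain.trans ?_
  rw [hbrk]
  have e1 : 4 * a * (C₁ * C₀) * (sB + sT) + 144 * a * C₀ * sG ≤ C * (sB + sT + sG) := by
    have u1 : 4 * a * (C₁ * C₀) * (sB + sT) ≤ C * (sB + sT) := by gcongr; linarith
    have u2 : 144 * a * C₀ * sG ≤ C * sG := by gcongr; linarith
    linarith
  have e2 : 2 * (a * C₀ * r₂ * (CL * Real.log R)) + 2 * τ + 2 * V ≤ C * Real.log R := by
    calc _ ≤ 2 * (a * C₀ * r₂ * (CL * Real.log R)) + 4 * τ * Real.log R + 4 * V * Real.log R := by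
          have v1 : 4 * τ * (1 / 2) ≤ 4 * τ * Real.log R := by gcongr
          have v2 : 4 * V * (1 / 2) ≤ 4 * V * Real.log R := by gcongr
          linarith
      _ = (2 * (a * C₀ * r₂ * CL) + 4 * τ + 4 * V) * Real.log R := by ring
      _ ≤ _ := by
          gcongr
          linarith
  linarith

end Assembly

end

/-- Proposition 2.4: for any bounded open convex planar domain `Ω` with
inscribed and circumscribed radii `r₁ < 1 < r₂` about the origin, and any `N ≥ 2`,
`𝒢_Ω(R,h) ≤ C Σ_± [Σ_{2ⁿ≤R/h} 𝔅_n^± + Σ_{R/h<2ⁿ≤R} 𝔅̃_n^± + Σ_{2ⁿ>R} Γ_n^±]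
+ C[log R + (R/h)^{1/2}]` for `R ≥ 2`, `1 ≤ h ≤ R`, where `C = C(r₁,r₂,N)`. -/
theorem statement4 (r₁ r₂ : ℝ) (hr₁ : 0 < r₁) (h1 : r₁ < 1) (h2 : 1 < r₂)
    (N : ℕ) (hN : 2 ≤ N) :
    ∃ C : ℝ, ∀ Ω : Set E2, Convex ℝ Ω → IsOpen Ω → Bornology.IsBounded Ω →
      Metric.ball 0 r₁ ⊆ Ω → Ω ⊆ Metric.closedBall 0 r₂ →
      ∀ R h : ℝ, 2 ≤ R → 1 ≤ h → h ≤ R →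
        meanSquare Ω R h ≤
          C * (∑ s ∈ ({1, -1} : Finset ℝ),
              ((∑' n : ℕ, if (2 : ℝ) ^ n ≤ R / h then Bn Ω N s R h n else 0) +
               (∑' n : ℕ, if R / h < (2 : ℝ) ^ n ∧ (2 : ℝ) ^ n ≤ R then Bnt Ω N s R h n else 0) +
               (∑' n : ℕ, if R < (2 : ℝ) ^ n then Gam Ω N R n else 0))) +
            C * (Real.log R + Real.sqrt (R / h)) := by
  obtain ⟨C, hC, H⟩ := main_bound r₁ r₂ hr₁ h1 h2 N hN
  refine ⟨C, fun Ω hconv hopn _ hin hout R h hR hh hhR => ?_⟩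
  have hD : Dom r₁ r₂ Ω := ⟨hr₁, h1, h2, hconv, hopn, hin, hout⟩
  have hm := H Ω hD R h hR hh hhR
  have hneg := brk_nonneg Ω N (by linarith : 0 < R) h (-1)
  have hsum : ∑ s ∈ ({1, -1} : Finset ℝ), brk Ω N R h s = brk Ω N R h 1 + brk Ω N R h (-1) :=
    Finset.sum_pair (by norm_num)
  change _ ≤ C * (∑ s ∈ ({1, -1} : Finset ℝ), brk Ω N R h s) + C * (Real.log R + Real.sqrt (R / h))
  rw [hsum, mul_add, mul_add]
  have h3 : 0 ≤ C * brk Ω N R h (-1) := by positivity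
  have h4 : 0 ≤ C * Real.sqrt (R / h) := by positivity
  linarith

end
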